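/- arXiv:2604.25729 — 3 statements merged into one kernel-verified Lean document; each statement's English description precedes it below -/
import Mathlib

section
/- For every integer n ≥ 1 and all complex numbers α, β, γ with Re α > −1, Re β > −1 and Re γ > 0, the integral S_n(α,β,γ) over the ordered simplex Δ_n converges absolutely, and S_n(α,β,γ) = (1/n!) · ∏_{i=1}^{n} [Γ(1+iγ) · Γ(1+α+(i−1)γ) · Γ(1+β+(i−1)γ)] / [Γ(1+γ) · Γ(2+α+β+(n+i−2)γ)]. -/
open MeasureTheory Complex

noncomputable section

/-- The open ordered simplex `Δ_n = {y : 1 > y_1 > ⋯ > y_n > 0}`. -/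
def orderedSimplex (n : ℕ) : Set (Fin n → ℝ) :=
  {y | (∀ i, 0 < y i ∧ y i < 1) ∧ ∀ i j : Fin n, i < j → y j < y i}

/-- The Selberg integrand `∏ y_i^α (1-y_i)^β ∏_{i<j} (y_i-y_j)^{2γ} · f(y)`,
where complex powers of the (positive) real bases are principal powers. -/
def selbergIntegrand (n : ℕ) (f : (Fin n → ℝ) → ℂ) (α β γ : ℂ) (y : Fin n → ℝ) : ℂ :=
  (∏ i, ((y i : ℂ) ^ α * (((1 - y i : ℝ)) : ℂ) ^ β)) *
    (∏ i : Fin n, ∏ j : Fin n,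
      if i < j then (((y i - y j : ℝ)) : ℂ) ^ (2 * γ) else 1) * f y

/-- The Selberg integral `S_n[f](α,β,γ)`. -/
def selbergS (n : ℕ) (f : (Fin n → ℝ) → ℂ) (α β γ : ℂ) : ℂ :=
  ∫ y in orderedSimplex n, selbergIntegrand n f α β γ y

def selbV {n : ℕ} (a : Fin n → ℝ) : ℝ := ∏ i, ∏ j, if i < j then |a i - a j| else 1

def selbC {n : ℕ} (a : Fin n → ℝ) (j : Fin n) : ℝ := ∏ k ∈ Finset.univ.erase j, (a j - a k)

lemma selbV_pos {n : ℕ} {a : Fin n → ℝ} (ha : Function.Injective a) : 0 < selbV a := by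
  unfold selbV
  refine Finset.prod_pos fun i _ => Finset.prod_pos fun j _ => ?_
  split_ifs with h
  · exact abs_pos.2 (sub_ne_zero.2 fun h' => h.ne (ha h'))
  · norm_num

lemma selbC_ne {n : ℕ} {a : Fin n → ℝ} (ha : Function.Injective a) (j : Fin n) : selbC a j ≠ 0 := by
  unfold selbC
  refine Finset.prod_ne_zero_iff.2 fun k hk => sub_ne_zero.2 fun h => ?_
  exact (Finset.mem_erase.1 hk).1 (ha h).symm

lemma selbC_abs {n : ℕ} (a : Fin n → ℝ) (j : Fin n) :
    |selbC a j| = ∏ k, if j = k then 1 else |a j - a k| := by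
  unfold selbC
  rw [Finset.abs_prod, ← Finset.prod_erase (s := Finset.univ) (a := j)
    (f := fun k => if j = k then 1 else |a j - a k|) (by simp)]
  refine Finset.prod_congr rfl fun k hk => ?_
  rw [if_neg (Finset.mem_erase.1 hk).1.symm]

lemma selbC_prod {n : ℕ} (a : Fin n → ℝ) : ∏ j, |selbC a j| = selbV a ^ 2 := by
  simp_rw [selbC_abs]
  have : ∀ j k : Fin n, (if j = k then 1 else |a j - a k|) =
      (if j < k then |a j - a k| else 1) * (if k < j then |a k - a j| else 1) := by
    intro j k
    rcases lt_trichotomy j k with h | h | h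
    · simp [h, h.ne, h.not_gt]
    · simp [h]
    · simp [h, h.ne', h.not_gt, abs_sub_comm]
  simp_rw [this, Finset.prod_mul_distrib]
  rw [pow_two]
  congr 1
  rw [Finset.prod_comm]
  rfl

lemma selb_vander {n : ℕ} (a : Fin n → ℝ) : |(Matrix.vandermonde a).det| = selbV a := by
  rw [Matrix.det_vandermonde, Finset.abs_prod]
  unfold selbV
  refine Finset.prod_congr rfl fun i _ => ?_
  rw [Finset.abs_prod, ← Finset.prod_filter]
  refine Finset.prod_congr ?_ fun j _ => abs_sub_comm _ _
  ext; simp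

lemma selb_det_eval {n : ℕ} (v : Fin n → ℝ) (p : Fin n → Polynomial ℝ)
    (hp : ∀ j, (p j).natDegree < n) :
    (Matrix.of fun i j => (p j).eval (v i)).det =
      (Matrix.vandermonde v).det * (Matrix.of fun k j => (p j).coeff (k : Fin n)).det := by
  rw [← Matrix.det_mul]
  congr 1
  ext i j
  simp only [Matrix.of_apply, Matrix.mul_apply, Matrix.vandermonde_apply]
  rw [Polynomial.eval_eq_sum_range' (hp j), ← Fin.sum_univ_eq_sum_range
    (fun k => (p j).coeff k * v i ^ k)]
  exact Finset.sum_congr rfl fun _ _ => mul_comm _ _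

open Polynomial in
def selbQ {m : ℕ} (t : Fin m → ℝ) : Polynomial ℝ := ∏ i, (X - C (t i))

open Polynomial in
def selbq {m : ℕ} (t : Fin m → ℝ) (i : Fin m) : Polynomial ℝ := ∏ k ∈ Finset.univ.erase i, (X - C (t k))

lemma selbQ_eval {m : ℕ} (t : Fin m → ℝ) (z : ℝ) : (selbQ t).eval z = ∏ i, (z - t i) := by
  simp [selbQ, Polynomial.eval_prod]

lemma selbq_eval {m : ℕ} (t : Fin m → ℝ) (i : Fin m) (z : ℝ) :
    (selbq t i).eval z = ∏ k ∈ Finset.univ.erase i, (z - t k) := by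
  simp [selbq, Polynomial.eval_prod]

lemma selbQ_monic {m : ℕ} (t : Fin m → ℝ) : (selbQ t).Monic := by
  exact Polynomial.monic_prod_of_monic _ _ fun i _ => Polynomial.monic_X_sub_C _

lemma selbQ_deg {m : ℕ} (t : Fin m → ℝ) : (selbQ t).natDegree = m := by
  simp [selbQ]

lemma selbq_deg {m : ℕ} (t : Fin m → ℝ) (i : Fin m) : (selbq t i).natDegree = m - 1 := by
  simp [selbq]

lemma selbV_cons {m : ℕ} (z : ℝ) (t : Fin m → ℝ) :
    selbV (Fin.cons z t : Fin (m+1) → ℝ) = (∏ i, |z - t i|) * selbV t := by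
  unfold selbV
  simp [Fin.prod_univ_succ]

lemma selb_det {m : ℕ} (a : Fin (m+1) → ℝ) (t : Fin m → ℝ) (ht : Function.Injective t) :
    |(Matrix.of fun i j => ((Fin.cons (selbQ t) (selbq t) : Fin (m+1) → Polynomial ℝ) j).eval (a i)).det| =
      selbV a * selbV t := by
  have hp : ∀ j, ((Fin.cons (selbQ t) (selbq t) : Fin (m+1) → Polynomial ℝ) j).natDegree < m + 1 := by
    intro j
    refine Fin.cases ?_ (fun i => ?_) j
    · simp [selbQ_deg]
    · simp only [Fin.cons_succ, selbq_deg]; omega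
  obtain ⟨z, hz⟩ : ∃ z : ℝ, z ∉ Set.range t := (Set.finite_range t).exists_notMem
  have hz' : (selbQ t).eval z ≠ 0 := by
    rw [selbQ_eval]
    exact Finset.prod_ne_zero_iff.2 fun i _ => sub_ne_zero.2 fun h => hz ⟨i, h.symm⟩
  have h1 := selb_det_eval a _ hp
  have h2 := selb_det_eval (Fin.cons z t) _ hp
  have h3 : (Matrix.of fun i j => ((Fin.cons (selbQ t) (selbq t) : Fin (m+1) → Polynomial ℝ) j).eval
      ((Fin.cons z t : Fin (m+1) → ℝ) i)).det = (selbQ t).eval z * ∏ i, selbC t i := by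
    rw [Matrix.det_of_isUpperTriangular]
    · rw [Fin.prod_univ_succ]
      simp [selbq_eval, selbC]
    · intro i j hij
      refine Fin.cases (fun h => absurd h (by simp)) (fun i => ?_) i hij
      intro hij
      refine Fin.cases ?_ (fun j => ?_) j hij
      · intro _
        simp only [Matrix.of_apply, Fin.cons_zero, Fin.cons_succ, selbQ_eval]
        exact Finset.prod_eq_zero (Finset.mem_univ i) (sub_self _)
      · intro h
        have h : j < i := by simpa using h
        simp only [Matrix.of_apply, Fin.cons_succ, selbq_eval]
        exact Finset.prod_eq_zero (Finset.mem_erase.2 ⟨h.ne', Finset.mem_univ i⟩) (sub_self _)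
  rw [h3] at h2
  have h4 := congrArg abs h2
  rw [abs_mul, abs_mul, selb_vander, Finset.abs_prod, selbC_prod, selbV_cons, selbQ_eval,
    Finset.abs_prod] at h4
  have hV := (selbV_pos ht).ne'
  have hz2 : (∏ i, |z - t i|) ≠ 0 := by
    rw [selbQ_eval] at hz'
    rw [← Finset.abs_prod]; exact abs_ne_zero.2 hz'
  rw [h1, abs_mul, selb_vander]
  congr 1
  have : (∏ i, |z - t i|) * selbV t ≠ 0 := mul_ne_zero hz2 hV
  apply mul_left_cancel₀ this
  rw [← h4]; ring

def selbPhi {m : ℕ} (a : Fin (m+1) → ℝ) (u : Fin (m+1) → ℝ) (j : Fin (m+1)) : ℝ :=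
  u 0 * (∏ i : Fin m, (a j - u i.succ)) / selbC a j

def selbI {m : ℕ} (a : Fin (m+1) → ℝ) : Set (Fin m → ℝ) :=
  {t | ∀ i : Fin m, a i.succ < t i ∧ t i < a i.castSucc}

def selbD {m : ℕ} (a : Fin (m+1) → ℝ) : Set (Fin (m+1) → ℝ) :=
  {u | 0 < u 0 ∧ Fin.tail u ∈ selbI a}

lemma selbC_succAbove {m : ℕ} (a : Fin (m+1) → ℝ) (j : Fin (m+1)) :
    selbC a j = ∏ i : Fin m, (a j - a (j.succAbove i)) := by
  unfold selbC
  rw [Fin.univ_succAbove m j, Finset.erase_cons, Finset.prod_map]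
  rfl

lemma selbI_strictAnti {m : ℕ} {a : Fin (m+1) → ℝ} (ha : StrictAnti a) {t : Fin m → ℝ}
    (ht : t ∈ selbI a) : StrictAnti t := by
  intro i j hij
  have h1 := (ht i).1
  have h2 := (ht j).2
  have h3 : a j.castSucc ≤ a i.succ := ha.antitone (by
    rw [Fin.le_def]; simpa using hij)
  linarith

lemma selbI_ratio {m : ℕ} {a : Fin (m+1) → ℝ} (ha : StrictAnti a) {t : Fin m → ℝ}
    (ht : t ∈ selbI a) (j : Fin (m+1)) : 0 < (∏ i : Fin m, (a j - t i)) / selbC a j := by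
  rw [selbC_succAbove, ← Finset.prod_div_distrib]
  refine Finset.prod_pos fun i _ => ?_
  rcases lt_or_ge i.castSucc j with h | h
  · rw [Fin.succAbove_of_castSucc_lt _ _ h]
    apply div_pos_of_neg_of_neg
    · have := ha.antitone (show i.succ ≤ j from Fin.castSucc_lt_iff_succ_le.1 h)
      linarith [(ht i).1]
    · linarith [ha h]
  · rw [Fin.succAbove_of_le_castSucc _ _ h]
    apply div_pos
    · have := ha.antitone h
      linarith [(ht i).2]
    · have : j < i.succ := lt_of_le_of_lt h Fin.castSucc_lt_succ
      linarith [ha this]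

lemma selbPhi_sum {m : ℕ} {a : Fin (m+1) → ℝ} (ha : StrictAnti a) (u : Fin (m+1) → ℝ) :
    ∑ j, selbPhi a u j = u 0 := by
  have h := Lagrange.leadingCoeff_eq_sum (s := Finset.univ) (v := a) ha.injective.injOn
    (P := selbQ (Fin.tail u)) (by
      rw [Polynomial.degree_eq_natDegree (selbQ_monic _).ne_zero, selbQ_deg]; simp)
  rw [(selbQ_monic _).leadingCoeff] at h
  calc ∑ j, selbPhi a u j = u 0 * ∑ j, (selbQ (Fin.tail u)).eval (a j) / ∏ k ∈ Finset.univ.erase j, (a j - a k) := by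
        rw [Finset.mul_sum]
        refine Finset.sum_congr rfl fun j _ => ?_
        rw [selbQ_eval, selbPhi, mul_div_assoc]
        rfl
    _ = u 0 := by rw [← h, mul_one]

lemma selbC_adj {m : ℕ} {a : Fin (m+1) → ℝ} (ha : StrictAnti a) (i : Fin m) :
    selbC a i.castSucc * selbC a i.succ < 0 := by
  have hlt : i.castSucc < i.succ := Fin.castSucc_lt_succ
  unfold selbC
  rw [← Finset.mul_prod_erase (Finset.univ.erase i.castSucc) _
    (Finset.mem_erase.2 ⟨hlt.ne', Finset.mem_univ i.succ⟩),
    ← Finset.mul_prod_erase (Finset.univ.erase i.succ) _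
    (Finset.mem_erase.2 ⟨hlt.ne, Finset.mem_univ i.castSucc⟩), Finset.erase_right_comm,
    mul_mul_mul_comm, ← Finset.prod_mul_distrib]
  apply mul_neg_of_neg_of_pos
  · have := ha hlt
    apply mul_neg_of_pos_of_neg <;> linarith
  · refine Finset.prod_pos fun k hk => ?_
    simp only [Finset.mem_erase, Finset.mem_univ, and_true] at hk
    rcases lt_or_gt_of_ne hk.1 with h | h
    · have h1 : k < i.succ := lt_trans h hlt
      have := ha h
      have := ha h1
      apply mul_pos_of_neg_of_neg <;> linarith
    · have h1 : i.succ < k := lt_of_le_of_ne (Fin.castSucc_lt_iff_succ_le.1 h) hk.2.symm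
      have := ha h
      have := ha h1
      apply mul_pos <;> linarith

lemma selbPhi_injOn {m : ℕ} {a : Fin (m+1) → ℝ} (ha : StrictAnti a) :
    Set.InjOn (selbPhi a) (selbD a) := by
  intro u hu u' hu' h
  have h0 : u 0 = u' 0 := by rw [← selbPhi_sum ha u, ← selbPhi_sum ha u', h]
  have hQ : selbQ (Fin.tail u) = selbQ (Fin.tail u') := by
    apply Polynomial.eq_of_degrees_lt_of_eval_index_eq (s := Finset.univ) (v := a) ha.injective.injOn
    · rw [Polynomial.degree_eq_natDegree (selbQ_monic _).ne_zero, selbQ_deg]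
      simp only [Finset.card_univ, Fintype.card_fin]; exact_mod_cast Nat.lt_succ_self m
    · rw [Polynomial.degree_eq_natDegree (selbQ_monic _).ne_zero, selbQ_deg]
      simp only [Finset.card_univ, Fintype.card_fin]; exact_mod_cast Nat.lt_succ_self m
    · intro j _
      have hj := congrFun h j
      simp only [selbPhi, h0] at hj
      rw [div_left_inj' (selbC_ne ha.injective j)] at hj
      rw [selbQ_eval, selbQ_eval]
      exact mul_left_cancel₀ hu'.1.ne' hj
  have ht : ∀ i, Fin.tail u i = Fin.tail u' i := by
    intro i
    have h1 : (selbQ (Fin.tail u')).eval (Fin.tail u i) = 0 := by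
      rw [← hQ, selbQ_eval]
      exact Finset.prod_eq_zero (Finset.mem_univ i) (sub_self _)
    rw [selbQ_eval, Finset.prod_eq_zero_iff] at h1
    obtain ⟨k, -, hk⟩ := h1
    have hk := sub_eq_zero.1 hk
    have e1 := hu.2 i
    have e2 := hu'.2 k
    rcases lt_trichotomy i k with hik | hik | hik
    · have : a k.castSucc ≤ a i.succ := ha.antitone (by rw [Fin.le_def]; simpa using hik)
      linarith
    · rw [hk, hik]
    · have : a i.castSucc ≤ a k.succ := ha.antitone (by rw [Fin.le_def]; simpa using hik)
      linarith
  ext j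
  refine Fin.cases h0 (fun i => ht i) j

lemma selbPhi_image {m : ℕ} {a : Fin (m+1) → ℝ} (ha : StrictAnti a) :
    selbPhi a '' selbD a = {w | ∀ j, 0 < w j} := by
  apply Set.Subset.antisymm
  · rintro _ ⟨u, hu, rfl⟩ j
    rw [selbPhi, mul_div_assoc]
    exact mul_pos hu.1 (selbI_ratio ha hu.2 j)
  · intro w hw
    let P : Polynomial ℝ := ∑ j, Polynomial.C (w j) * selbq a j
    have hPa : ∀ j, P.eval (a j) = w j * selbC a j := by
      intro j
      simp only [P, Polynomial.eval_finsetSum, Polynomial.eval_mul, Polynomial.eval_C, selbq_eval]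
      rw [Finset.sum_eq_single j]
      · rfl
      · intro k _ hk
        rw [Finset.prod_eq_zero (Finset.mem_erase.2 ⟨hk.symm, Finset.mem_univ j⟩) (sub_self _), mul_zero]
      · simp
    have hroot : ∀ i : Fin m, ∃ t, (a i.succ < t ∧ t < a i.castSucc) ∧ P.eval t = 0 := by
      intro i
      have hlt : a i.succ < a i.castSucc := ha Fin.castSucc_lt_succ
      have hadj := selbC_adj ha i
      have hc : ContinuousOn (fun t => P.eval t) (Set.Icc (a i.succ) (a i.castSucc)) :=
        P.continuous.continuousOn
      rcases lt_or_gt_of_ne (selbC_ne ha.injective i.castSucc) with h | h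
      · have h' : 0 < selbC a i.succ := pos_of_mul_neg_right hadj h.le
        obtain ⟨t, ht, ht'⟩ := intermediate_value_Ioo' hlt.le hc (show (0:ℝ) ∈ _ from ⟨by
          rw [hPa]; exact mul_neg_of_pos_of_neg (hw _) h, by rw [hPa]; exact mul_pos (hw _) h'⟩)
        exact ⟨t, ht, ht'⟩
      · have h' : selbC a i.succ < 0 := neg_of_mul_neg_right hadj h.le
        obtain ⟨t, ht, ht'⟩ := intermediate_value_Ioo hlt.le hc (show (0:ℝ) ∈ _ from ⟨by
          rw [hPa]; exact mul_neg_of_pos_of_neg (hw _) h', by rw [hPa]; exact mul_pos (hw _) h⟩)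
        exact ⟨t, ht, ht'⟩
    choose t ht htP using hroot
    have htI : t ∈ selbI a := ht
    have hr : 0 < ∑ j, w j := Finset.sum_pos (fun j _ => hw j) Finset.univ_nonempty
    have hPQ : P = Polynomial.C (∑ j, w j) * selbQ t := by
      apply Polynomial.eq_of_degree_sub_lt_of_eval_index_eq (s := Finset.univ) (v := t)
        (selbI_strictAnti ha htI).injective.injOn
      · simp only [Finset.card_univ, Fintype.card_fin]
        rw [Polynomial.degree_lt_iff_coeff_zero]
        intro k hk
        have hqm : ∀ j, (selbq a j).Monic := fun j =>
          Polynomial.monic_prod_of_monic _ _ fun i _ => Polynomial.monic_X_sub_C _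
        have hqd : ∀ j, (selbq a j).natDegree = m := fun j => by rw [selbq_deg]; rfl
        rcases hk.eq_or_lt with rfl | hk
        · have e1 : ∀ j, (selbq a j).coeff m = 1 := fun j => by
            have := (hqm j).coeff_natDegree; rwa [hqd] at this
          have e2 : (selbQ t).coeff m = 1 := by
            have := (selbQ_monic t).coeff_natDegree; rwa [selbQ_deg] at this
          simp [P, -map_sum, Polynomial.coeff_C_mul, e1, e2]
        · have e1 : ∀ j, (selbq a j).coeff k = 0 := fun j =>
            Polynomial.coeff_eq_zero_of_natDegree_lt (by rw [hqd]; exact hk)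
          have e2 : (selbQ t).coeff k = 0 :=
            Polynomial.coeff_eq_zero_of_natDegree_lt (by rw [selbQ_deg]; exact hk)
          simp [P, -map_sum, Polynomial.coeff_C_mul, e1, e2]
      · intro i _
        rw [htP, Polynomial.eval_mul, selbQ_eval, Finset.prod_eq_zero (Finset.mem_univ i) (sub_self _), mul_zero]
    refine ⟨Fin.cons (∑ j, w j) t, ⟨by simpa using hr, by simpa using htI⟩, ?_⟩
    ext j
    rw [selbPhi, div_eq_iff (selbC_ne ha.injective j), ← hPa, hPQ, Polynomial.eval_mul, selbQ_eval]
    simp [-map_sum]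

def selbJ {m : ℕ} (a u : Fin (m+1) → ℝ) : Matrix (Fin (m+1)) (Fin (m+1)) ℝ :=
  Matrix.of fun j k => (selbC a j)⁻¹ * ((Fin.cons 1 (fun _ => - u 0) : Fin (m+1) → ℝ) k *
    ((Fin.cons (selbQ (Fin.tail u)) (selbq (Fin.tail u)) : Fin (m+1) → Polynomial ℝ) k).eval (a j))

lemma selbJ_det {m : ℕ} {a u : Fin (m+1) → ℝ} (ha : StrictAnti a) (hu : u ∈ selbD a) :
    |(selbJ a u).det| = u 0 ^ m * selbV (Fin.tail u) / selbV a := by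
  have h := selb_det a (Fin.tail u) (selbI_strictAnti ha hu.2).injective
  have e : selbJ a u = Matrix.of fun j k => (selbC a j)⁻¹ * (Matrix.of fun j k => (Fin.cons 1 (fun _ => - u 0) : Fin (m+1) → ℝ) k * (Matrix.of fun j k => 
    ((Fin.cons (selbQ (Fin.tail u)) (selbq (Fin.tail u)) : Fin (m+1) → Polynomial ℝ) k).eval (a j)) j k) j k := rfl
  rw [e, Matrix.det_mul_column, Matrix.det_mul_row, abs_mul, abs_mul, h, Finset.abs_prod,
    Finset.abs_prod]
  simp_rw [abs_inv]
  rw [Finset.prod_inv_distrib, selbC_prod, Fin.prod_univ_succ]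
  have := (selbV_pos ha.injective).ne'
  simp only [Fin.cons_zero, Fin.cons_succ, abs_one, abs_neg, one_mul, Finset.prod_const, Finset.card_univ,
    Fintype.card_fin, abs_of_pos hu.1]
  field_simp

lemma selbPhi_deriv {m : ℕ} (a u : Fin (m+1) → ℝ) :
    HasFDerivAt (selbPhi a) (LinearMap.toContinuousLinearMap (Matrix.toLin' (selbJ a u))) u := by
  rw [hasFDerivAt_pi']
  intro j
  have h0 : HasFDerivAt (fun u : Fin (m+1) → ℝ => u 0) (ContinuousLinearMap.proj (R := ℝ) (φ := fun _ : Fin (m+1) => ℝ) 0) u :=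
    hasFDerivAt_apply 0 u
  have hi : ∀ i ∈ (Finset.univ : Finset (Fin m)), HasFDerivAt (fun u : Fin (m+1) → ℝ => a j - u i.succ)
      (-(ContinuousLinearMap.proj (R := ℝ) (φ := fun _ : Fin (m+1) => ℝ) i.succ)) u := fun i _ =>
    (hasFDerivAt_apply i.succ u).const_sub (a j)
  have hp := HasFDerivAt.finsetProd hi
  have h := (h0.mul hp).mul_const (selbC a j)⁻¹
  simp only [← div_eq_mul_inv] at h
  refine h.congr_fderiv ?_
  ext v
  simp [selbJ, Matrix.mulVec, dotProduct, Fin.sum_univ_succ, selbQ_eval, selbq_eval, Fin.tail]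
  rw [add_comm, Finset.mul_sum, Finset.mul_sum]
  congr 1
  · ring
  · congr 1
    refine Finset.sum_congr rfl fun i _ => ?_
    ring

lemma selb_prod_cpow {ι : Type*} (s : Finset ι) (f : ι → ℝ) (hf : ∀ i ∈ s, 0 ≤ f i) (z : ℂ) :
    ((∏ i ∈ s, f i : ℝ) : ℂ) ^ z = ∏ i ∈ s, (f i : ℂ) ^ z := by
  classical
  induction s using Finset.induction_on with
  | empty => simp
  | insert i s hi ih =>
    rw [Finset.prod_insert hi, Finset.prod_insert hi, Complex.ofReal_mul,
      Complex.mul_cpow_ofReal_nonneg (hf i (by simp))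
        (Finset.prod_nonneg fun j hj => hf j (by simp [hj])), ih fun j hj => hf j (by simp [hj])]

lemma selb_cpow_sum {ι : Type*} (s : Finset ι) (r : ℝ) (hr : 0 < r) (f : ι → ℂ) :
    ∏ i ∈ s, (r : ℂ) ^ f i = (r : ℂ) ^ (∑ i ∈ s, f i) := by
  classical
  have : (r : ℂ) ≠ 0 := by exact_mod_cast hr.ne'
  induction s using Finset.induction_on with
  | empty => simp
  | insert i s hi ih =>
    rw [Finset.prod_insert hi, Finset.sum_insert hi, ih, Complex.cpow_add _ _ this]

lemma selb_cpow_ne {r : ℝ} (hr : 0 < r) (s : ℂ) : (r : ℂ) ^ s ≠ 0 := by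
  rw [Complex.cpow_ne_zero_iff]
  left; exact_mod_cast hr.ne'

lemma selb_pos_integral {n : ℕ} (s : Fin n → ℂ) (hs : ∀ j, 0 < (s j).re) :
    IntegrableOn (fun w : Fin n → ℝ => ∏ j, ((Real.exp (-(w j)) : ℝ) : ℂ) * (w j : ℂ) ^ (s j - 1))
      {w | ∀ j, 0 < w j} ∧
    ∫ w in {w : Fin n → ℝ | ∀ j, 0 < w j},
      ∏ j, ((Real.exp (-(w j)) : ℝ) : ℂ) * (w j : ℂ) ^ (s j - 1) = ∏ j, Gamma (s j) := by
  have e : {w : Fin n → ℝ | ∀ j, 0 < w j} = Set.univ.pi fun _ => Set.Ioi 0 := by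
    ext; simp
  rw [e, IntegrableOn, volume_pi, Measure.restrict_pi_pi]
  constructor
  · exact Integrable.fintype_prod (f := fun j x => ((Real.exp (-x) : ℝ) : ℂ) * (x : ℂ) ^ (s j - 1))
      fun j => GammaIntegral_convergent (hs j)
  · rw [integral_fintype_prod_eq_prod (f := fun j (x : ℝ) => ((Real.exp (-x) : ℝ) : ℂ) * (x : ℂ) ^ (s j - 1))]
    refine Finset.prod_congr rfl fun j _ => ?_
    rw [Gamma_eq_integral (hs j)]; rfl

lemma selbI_open {m : ℕ} (a : Fin (m+1) → ℝ) : IsOpen (selbI a) := by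
  have : selbI a = Set.univ.pi fun i => Set.Ioo (a i.succ) (a i.castSucc) := by
    ext; simp [selbI]
  rw [this]
  exact isOpen_set_pi Set.finite_univ fun _ _ => isOpen_Ioo

def selbH {m : ℕ} (a : Fin (m+1) → ℝ) (s : Fin (m+1) → ℂ) (t : Fin m → ℝ) : ℂ :=
  (selbV t : ℂ) * ∏ j, ((|∏ i, (a j - t i)| : ℝ) : ℂ) ^ (s j - 1)

lemma selb_pull {m : ℕ} {a : Fin (m+1) → ℝ} (ha : StrictAnti a) (s : Fin (m+1) → ℂ)
    {u : Fin (m+1) → ℝ} (hu : u ∈ selbD a) :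
    |(selbJ a u).det| • ∏ j, ((Real.exp (-(selbPhi a u j)) : ℝ) : ℂ) * (selbPhi a u j : ℂ) ^ (s j - 1) =
    (((Real.exp (-(u 0)) : ℝ) : ℂ) * (u 0 : ℂ) ^ (∑ j, s j - 1)) *
      (((selbV a : ℂ) * ∏ j, ((|selbC a j| : ℝ) : ℂ) ^ (s j - 1))⁻¹ * selbH a s (Fin.tail u)) := by
  have hu0 : (u 0 : ℂ) ≠ 0 := by exact_mod_cast hu.1.ne'
  have hVa : (selbV a : ℂ) ≠ 0 := by exact_mod_cast (selbV_pos ha.injective).ne'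
  have hexp : ∏ j, ((Real.exp (-(selbPhi a u j)) : ℝ) : ℂ) = ((Real.exp (-(u 0)) : ℝ) : ℂ) := by
    rw [← Complex.ofReal_prod, ← Real.exp_sum, Finset.sum_neg_distrib, selbPhi_sum ha]
  have hC : ∀ j, (0:ℝ) < |selbC a j| := fun j => abs_pos.2 (selbC_ne ha.injective j)
  have hpow : ∀ j, (selbPhi a u j : ℂ) ^ (s j - 1) = (u 0 : ℂ) ^ (s j - 1) *
      ((|∏ i, (a j - Fin.tail u i)| : ℝ) : ℂ) ^ (s j - 1) * (((|selbC a j| : ℝ) : ℂ) ^ (s j - 1))⁻¹ := by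
    intro j
    rw [eq_mul_inv_iff_mul_eq₀ (selb_cpow_ne (hC j) _)]
    have hpos := selbI_ratio ha hu.2 j
    have hphi : 0 < selbPhi a u j := by
      rw [selbPhi, mul_div_assoc]; exact mul_pos hu.1 hpos
    rw [← Complex.mul_cpow_ofReal_nonneg hphi.le (hC j).le,
      ← Complex.mul_cpow_ofReal_nonneg hu.1.le (abs_nonneg _), ← Complex.ofReal_mul, ← Complex.ofReal_mul]
    congr 2
    rw [← abs_of_pos hphi, ← abs_mul]
    conv_rhs => rw [← abs_of_pos hu.1, ← abs_mul]
    rw [selbPhi, div_mul_cancel₀ _ (selbC_ne ha.injective j)]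
    rfl
  rw [selbJ_det ha hu, Finset.prod_mul_distrib, hexp, Complex.real_smul]
  simp_rw [hpow]
  rw [Finset.prod_mul_distrib, Finset.prod_mul_distrib, selb_cpow_sum _ _ hu.1, Finset.prod_inv_distrib]
  have hsum : (u 0 : ℂ) ^ (∑ j, s j - 1) = (u 0 : ℂ) ^ m * (u 0 : ℂ) ^ (∑ j, (s j - 1)) := by
    rw [← Complex.cpow_natCast, ← Complex.cpow_add _ _ hu0]
    congr 1
    simp [Finset.sum_sub_distrib]
    ring
  rw [hsum, selbH, mul_inv]
  push_cast
  ring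

theorem selb_DA {m : ℕ} {a : Fin (m+1) → ℝ} (ha : StrictAnti a) (s : Fin (m+1) → ℂ)
    (hs : ∀ j, 0 < (s j).re) :
    IntegrableOn (selbH a s) (selbI a) ∧
    ∫ t in selbI a, selbH a s t = (∏ j, Gamma (s j)) / Gamma (∑ j, s j) *
      ((selbV a : ℂ) * ∏ j, ((|selbC a j| : ℝ) : ℂ) ^ (s j - 1)) := by
  obtain ⟨hint, hval⟩ := selb_pos_integral s hs
  set K : ℂ := (selbV a : ℂ) * ∏ j, ((|selbC a j| : ℝ) : ℂ) ^ (s j - 1) with hK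
  have hK0 : K ≠ 0 := by
    refine mul_ne_zero ?_ (Finset.prod_ne_zero_iff.2 fun j _ =>
      selb_cpow_ne (abs_pos.2 (selbC_ne ha.injective j)) _)
    exact_mod_cast (selbV_pos ha.injective).ne'
  have hsum : 0 < (∑ j, s j).re := by
    rw [Complex.re_sum]; exact Finset.sum_pos (fun j _ => hs j) Finset.univ_nonempty
  let e := MeasurableEquiv.piFinSuccAbove (fun _ : Fin (m+1) => ℝ) 0
  have he : MeasurePreserving e := volume_preserving_piFinSuccAbove (fun _ => ℝ) 0
  have heD : selbD a = e ⁻¹' (Set.Ioi 0 ×ˢ selbI a) := by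
    ext u; rfl
  have hDm : MeasurableSet (selbD a) := by
    rw [heD]
    exact e.measurable (measurableSet_Ioi.prod (selbI_open a).measurableSet)
  let F : ℝ → ℂ := fun r => ((Real.exp (-r) : ℝ) : ℂ) * (r : ℂ) ^ (∑ j, s j - 1)
  let G : (Fin m → ℝ) → ℂ := fun t => K⁻¹ * selbH a s t
  have hd : ∀ u ∈ selbD a, HasFDerivWithinAt (selbPhi a)
      (LinearMap.toContinuousLinearMap (Matrix.toLin' (selbJ a u))) (selbD a) u :=
    fun u _ => (selbPhi_deriv a u).hasFDerivWithinAt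
  rw [← selbPhi_image ha, integrableOn_image_iff_integrableOn_abs_det_fderiv_smul volume hDm hd
    (selbPhi_injOn ha)] at hint
  rw [← selbPhi_image ha, integral_image_eq_integral_abs_det_fderiv_smul volume hDm hd
    (selbPhi_injOn ha)] at hval
  have hcong : Set.EqOn (fun u => |(LinearMap.toContinuousLinearMap (Matrix.toLin' (selbJ a u))).det| •
      ∏ j, ((Real.exp (-(selbPhi a u j)) : ℝ) : ℂ) * (selbPhi a u j : ℂ) ^ (s j - 1))
      ((fun z : ℝ × (Fin m → ℝ) => F z.1 * G z.2) ∘ e) (selbD a) := by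
    intro u hu
    have h1 := selb_pull ha s hu
    have h2 : (LinearMap.toContinuousLinearMap (Matrix.toLin' (selbJ a u))).det = (selbJ a u).det := by
      simp [ContinuousLinearMap.det]
    simp only [h2]
    exact h1
  rw [integrableOn_congr_fun hcong hDm, heD, he.integrableOn_comp_preimage e.measurableEmbedding] at hint
  rw [setIntegral_congr_fun hDm hcong, heD] at hval
  have hval2 := he.setIntegral_preimage_emb e.measurableEmbedding
    (fun z : ℝ × (Fin m → ℝ) => F z.1 * G z.2) (Set.Ioi 0 ×ˢ selbI a)
  have hval3 : (∫ r in Set.Ioi (0:ℝ), F r) * ∫ t in selbI a, G t = ∏ j, Gamma (s j) := by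
    rw [← hval, ← setIntegral_prod_mul]
    exact hval2.symm
  have hF : ∫ r in Set.Ioi (0:ℝ), F r = Gamma (∑ j, s j) := by
    rw [Gamma_eq_integral hsum]; rfl
  rw [hF, integral_const_mul] at hval3
  have hG0 := Gamma_ne_zero_of_re_pos hsum
  constructor
  · rw [IntegrableOn, Measure.volume_eq_prod, ← Measure.prod_restrict] at hint
    have h1 := hint.prod_right_ae
    rw [ae_restrict_iff' measurableSet_Ioi] at h1
    have h2 : ∃ r : ℝ, 0 < r ∧ (r ∈ Set.Ioi (0:ℝ) → Integrable (fun t => F r * G t) (volume.restrict (selbI a))) := by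
      by_contra hcon
      push Not at hcon
      have : volume (Set.Ioi (0:ℝ)) ≤ 0 := by
        rw [← (ae_iff.1 h1)]
        exact measure_mono fun r hr => by
          have := hcon r hr
          simpa using this
      simp at this
    obtain ⟨r, hr, hri⟩ := h2
    have hri := hri hr
    have hFr : F r ≠ 0 := mul_ne_zero (by exact_mod_cast (Real.exp_pos _).ne') (selb_cpow_ne hr _)
    have h3 := (hri.const_mul (F r)⁻¹).const_mul K
    refine h3.congr (Filter.Eventually.of_forall fun t => ?_)
    simp only [G]
    field_simp
  · rw [div_mul_eq_mul_div, eq_div_iff hG0, ← hval3]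
    field_simp

def selbW {n : ℕ} (α β : ℂ) (y : Fin n → ℝ) : ℂ := ∏ i, ((y i : ℂ) ^ α * (((1 - y i : ℝ)) : ℂ) ^ β)

lemma selbergIntegrand_eq {n : ℕ} (α β γ : ℂ) {y : Fin n → ℝ} (hy : y ∈ orderedSimplex n) :
    selbergIntegrand n (fun _ => 1) α β γ y = selbW α β y * (selbV y : ℂ) ^ (2 * γ) := by
  unfold selbergIntegrand selbW selbV
  rw [mul_one, selb_prod_cpow _ _ (fun i _ => Finset.prod_nonneg fun j _ => by split_ifs <;> positivity)]
  congr 1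
  refine Finset.prod_congr rfl fun i _ => ?_
  rw [selb_prod_cpow _ _ (fun j _ => by split_ifs <;> positivity)]
  refine Finset.prod_congr rfl fun j _ => ?_
  split_ifs with h
  · rw [abs_of_pos (sub_pos.2 (hy.2 i j h))]
  · simp

lemma simplex_anti {n : ℕ} {y : Fin n → ℝ} (hy : y ∈ orderedSimplex n) : StrictAnti y :=
  fun i j h => hy.2 i j h

lemma simplex_open (n : ℕ) : IsOpen (orderedSimplex n) := by
  unfold orderedSimplex
  simp only [Set.ofPred_and, Set.ofPred_forall]
  refine IsOpen.inter (isOpen_iInter_of_finite fun i => IsOpen.inter ?_ ?_)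
    (isOpen_iInter_of_finite fun i => isOpen_iInter_of_finite fun j => isOpen_iInter_of_finite fun _ => ?_)
  · exact isOpen_lt continuous_const (continuous_apply i)
  · exact isOpen_lt (continuous_apply i) continuous_const
  · exact isOpen_lt (continuous_apply j) (continuous_apply i)

def selbZ (m : ℕ) : Set ((Fin m → ℝ) × (Fin (m+1) → ℝ)) :=
  {p : (Fin m → ℝ) × (Fin (m+1) → ℝ) | p.2 ∈ orderedSimplex (m+1) ∧ p.1 ∈ selbI p.2}

def selbA {m : ℕ} (x : Fin m → ℝ) : Fin (m+2) → ℝ := Fin.cons 1 (Fin.snoc (α := fun _ => ℝ) x 0 : Fin (m+1) → ℝ)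

def selbs (m : ℕ) (α β γ : ℂ) : Fin (m+2) → ℂ :=
  Fin.cons (β+1) (Fin.snoc (α := fun _ => ℂ) (fun _ => γ) (α+1) : Fin (m+1) → ℂ)

lemma selbZ_open (m : ℕ) : IsOpen (selbZ m) := by
  have e : selbZ m = (Prod.snd ⁻¹' orderedSimplex (m+1)) ∩
      ⋂ i : Fin m, ({p : (Fin m → ℝ) × (Fin (m+1) → ℝ) | p.2 i.succ < p.1 i} ∩ {p : (Fin m → ℝ) × (Fin (m+1) → ℝ) | p.1 i < p.2 i.castSucc}) := by
    ext p
    simp [selbZ, selbI]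
  rw [e]
  refine IsOpen.inter ((simplex_open (m+1)).preimage continuous_snd)
    (isOpen_iInter_of_finite fun i => IsOpen.inter ?_ ?_)
  · exact isOpen_lt (by fun_prop) (by fun_prop)
  · exact isOpen_lt (by fun_prop) (by fun_prop)

lemma selbA_anti {m : ℕ} {x : Fin m → ℝ} (hx : x ∈ orderedSimplex m) : StrictAnti (selbA x) := by
  have h1 : StrictAnti (Fin.snoc (α := fun _ => ℝ) x 0 : Fin (m+1) → ℝ) := by
    intro i j
    refine Fin.lastCases ?_ (fun j => ?_) j
    · refine Fin.lastCases ?_ (fun i => ?_) i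
      · intro h; exact absurd h (lt_irrefl _)
      · intro _; simpa using (hx.1 i).1
    · refine Fin.lastCases ?_ (fun i => ?_) i
      · intro h; exact absurd (Fin.castSucc_lt_last j) h.not_gt
      · intro h; simpa using hx.2 i j (by simpa using h)
  intro i j
  refine Fin.cases ?_ (fun j => ?_) j
  · intro h; exact absurd h (by simp)
  · refine Fin.cases ?_ (fun i => ?_) i
    · intro _
      simp only [selbA, Fin.cons_zero, Fin.cons_succ]
      refine Fin.lastCases ?_ (fun j => ?_) j
      · simp
      · simpa using (hx.1 j).2
    · intro h
      simpa [selbA] using h1 (by simpa using h)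

lemma selbZ_iff {m : ℕ} (x : Fin m → ℝ) (y : Fin (m+1) → ℝ) :
    (x, y) ∈ selbZ m ↔ x ∈ orderedSimplex m ∧ y ∈ selbI (selbA x) := by
  constructor
  · rintro ⟨hy, hx⟩
    change y ∈ orderedSimplex (m+1) at hy
    change x ∈ selbI y at hx
    have hxa := selbI_strictAnti (simplex_anti hy) hx
    refine ⟨⟨fun i => ⟨(hy.1 _).1.trans (hx i).1, (hx i).2.trans (hy.1 _).2⟩, fun i j h => hxa h⟩, ?_⟩
    intro i
    constructor
    · simp only [selbA, Fin.cons_succ]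
      refine Fin.lastCases ?_ (fun j => ?_) i
      · simpa using (hy.1 _).1
      · simpa using (hx j).2
    · refine Fin.cases ?_ (fun j => ?_) i
      · simpa [selbA] using (hy.1 _).2
      · rw [← Fin.succ_castSucc]
        simpa [selbA] using (hx j).1
  · rintro ⟨hx, hy⟩
    have ha := selbA_anti hx
    have hya := selbI_strictAnti ha hy
    refine ⟨⟨fun i => ⟨?_, ?_⟩, fun i j h => hya h⟩, ?_⟩
    · have := ha.antitone (Fin.le_last i.succ)
      have h0 : selbA x (Fin.last (m+1)) = 0 := by
        rw [← Fin.succ_last]; simp [selbA]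
      linarith [(hy i).1]
    · have := ha.antitone (Fin.zero_le i.castSucc)
      have h0 : selbA x 0 = 1 := by simp [selbA]
      linarith [(hy i).2]
    · intro i
      constructor
      · have := (hy i.succ).2
        rw [← Fin.succ_castSucc] at this
        simpa [selbA] using this
      · have := (hy i.castSucc).1
        simpa [selbA] using this

def selbf (m : ℕ) (α β γ : ℂ) (p : (Fin m → ℝ) × (Fin (m+1) → ℝ)) : ℂ :=
  selbW α β p.2 * (selbV p.2 : ℂ) * ((selbV p.1 : ℂ) *
    ∏ j : Fin (m+1), ((|∏ i : Fin m, (p.2 j - p.1 i)| : ℝ) : ℂ) ^ (γ - 1))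

def selbF (m : ℕ) (α β γ : ℂ) : (Fin m → ℝ) × (Fin (m+1) → ℝ) → ℂ :=
  (selbZ m).indicator (selbf m α β γ)

lemma selbF_meas (m : ℕ) (α β γ : ℂ) : Measurable (selbF m α β γ) := by
  refine Measurable.indicator ?_ (selbZ_open m).measurableSet
  have hV : ∀ n, Measurable (fun y : Fin n → ℝ => selbV y) := by
    intro n
    unfold selbV
    refine Finset.measurable_prod _ fun i _ => Finset.measurable_prod _ fun j _ => ?_
    split_ifs
    · fun_prop
    · fun_prop
  have hW : ∀ n, Measurable (fun y : Fin n → ℝ => selbW α β y) := by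
    intro n
    unfold selbW
    refine Finset.measurable_prod _ fun i _ => Measurable.mul ?_ ?_
    · exact Measurable.pow_const (by fun_prop) _
    · exact Measurable.pow_const (by fun_prop) _
  unfold selbf
  refine Measurable.mul (Measurable.mul ((hW _).comp measurable_snd) ?_) (Measurable.mul ?_ ?_)
  · exact Complex.measurable_ofReal.comp ((hV _).comp measurable_snd)
  · exact Complex.measurable_ofReal.comp ((hV _).comp measurable_fst)
  · refine Finset.measurable_prod _ fun i _ => Measurable.pow_const ?_ _
    refine Complex.measurable_ofReal.comp ?_
    refine Measurable.abs ?_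
    fun_prop

lemma selb_norm_cpow {r : ℝ} (hr : 0 < r) (s : ℂ) : ((‖(r : ℂ) ^ s‖ : ℝ) : ℂ) = (r : ℂ) ^ ((s.re : ℝ) : ℂ) := by
  rw [norm_cpow_eq_rpow_re_of_pos hr, Complex.ofReal_cpow hr.le]

lemma selbI_prod_ne {m : ℕ} {a : Fin (m+1) → ℝ} (ha : StrictAnti a) {t : Fin m → ℝ}
    (ht : t ∈ selbI a) (j : Fin (m+1)) : 0 < |∏ i : Fin m, (a j - t i)| := by
  have := selbI_ratio ha ht j
  rw [abs_pos]
  intro h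
  rw [h] at this
  simp at this

lemma selbF_norm (m : ℕ) (α β γ : ℂ) (p : (Fin m → ℝ) × (Fin (m+1) → ℝ)) :
    ((‖selbF m α β γ p‖ : ℝ) : ℂ) = selbF m α.re β.re γ.re p := by
  unfold selbF
  by_cases hp : p ∈ selbZ m
  · rw [Set.indicator_of_mem hp, Set.indicator_of_mem hp]
    have hanti := simplex_anti hp.1
    have hV2 := selbV_pos hanti.injective
    have hV1 := selbV_pos (selbI_strictAnti hanti hp.2).injective
    simp only [selbf, selbW, norm_mul, norm_prod, Complex.ofReal_mul, Complex.ofReal_prod,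
      Complex.norm_of_nonneg hV1.le, Complex.norm_of_nonneg hV2.le]
    congr 1
    · congr 1
      refine Finset.prod_congr rfl fun i _ => ?_
      rw [selb_norm_cpow (hp.1.1 i).1, selb_norm_cpow (sub_pos.2 (hp.1.1 i).2)]
    · congr 1
      refine Finset.prod_congr rfl fun i _ => ?_
      rw [selb_norm_cpow (selbI_prod_ne hanti hp.2 i)]
      simp
  · rw [Set.indicator_of_notMem hp, Set.indicator_of_notMem hp]
    simp

def selbK1 (m : ℕ) (α β γ : ℂ) : ℂ :=
  Gamma (β + 1) * (Gamma γ ^ m * Gamma (α + 1)) / Gamma (β + 1 + (m * γ + (α + 1)))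

def selbK2 (m : ℕ) (γ : ℂ) : ℂ := Gamma γ ^ (m+1) / Gamma ((m+1 : ℕ) * γ)

lemma selb_inner_x (m : ℕ) (α β γ : ℂ) (hγ : 0 < γ.re) (y : Fin (m+1) → ℝ) :
    ∫ x, selbF m α β γ (x, y) = (orderedSimplex (m+1)).indicator
        (fun y => selbK2 m γ * selbergIntegrand (m+1) (fun _ => 1) α β γ y) y := by
  by_cases hy : y ∈ orderedSimplex (m+1)
  · have e : (fun x => selbF m α β γ (x, y)) =
        (selbI y).indicator (fun x => selbW α β y * (selbV y : ℂ) * selbH y (fun _ => γ) x) := by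
      ext x
      unfold selbF
      by_cases hx : x ∈ selbI y
      · rw [Set.indicator_of_mem hx, Set.indicator_of_mem (show (x,y) ∈ selbZ m from ⟨hy, hx⟩)]
        rfl
      · rw [Set.indicator_of_notMem hx, Set.indicator_of_notMem fun h => hx h.2]
    have hV := selbV_pos (simplex_anti hy).injective
    have hV' : (selbV y : ℂ) ≠ 0 := by exact_mod_cast hV.ne'
    rw [Set.indicator_of_mem hy, e, integral_indicator (selbI_open y).measurableSet, integral_const_mul,
      (selb_DA (simplex_anti hy) (fun _ => γ) (fun _ => hγ)).2, selbergIntegrand_eq α β γ hy,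
      ← selb_prod_cpow _ _ (fun j _ => abs_nonneg _), selbC_prod, selbK2]
    have e2 : (((selbV y ^ 2 : ℝ)) : ℂ) ^ (γ - 1) * (selbV y : ℂ) * (selbV y : ℂ) = (selbV y : ℂ) ^ (2 * γ) := by
      rw [pow_two, Complex.ofReal_mul, Complex.mul_cpow_ofReal_nonneg hV.le hV.le, two_mul,
        Complex.cpow_add _ _ hV', show γ = (γ - 1) + 1 by ring, Complex.cpow_add _ _ hV', Complex.cpow_one]
      simp only [add_sub_cancel_right]
      ring
    rw [← e2]
    simp only [Finset.prod_const, Finset.sum_const, Finset.card_univ, Fintype.card_fin, nsmul_eq_mul]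
    ring
  · rw [Set.indicator_of_notMem hy]
    have e : (fun x => selbF m α β γ (x, y)) = fun _ => 0 := by
      ext x
      exact Set.indicator_of_notMem (fun h => hy h.1) _
    rw [e]; simp

lemma selbA_last {m : ℕ} (x : Fin m → ℝ) : selbA x (Fin.last (m+1)) = 0 := by
  rw [← Fin.succ_last]; simp [selbA]

lemma selbA_mid {m : ℕ} (x : Fin m → ℝ) (i : Fin m) : selbA x i.castSucc.succ = x i := by
  simp [selbA]

lemma selb_prod_split {M : Type*} [CommMonoid M] {m : ℕ} (f : Fin (m+2) → M) :
    ∏ j, f j = f 0 * ((∏ i : Fin m, f i.castSucc.succ) * f (Fin.last (m+1))) := by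
  rw [Fin.prod_univ_succ, Fin.prod_univ_castSucc, Fin.succ_last]

lemma selb_sum_split {m : ℕ} (f : Fin (m+2) → ℂ) :
    ∑ j, f j = f 0 + ((∑ i : Fin m, f i.castSucc.succ) + f (Fin.last (m+1))) := by
  rw [Fin.sum_univ_succ, Fin.sum_univ_castSucc, Fin.succ_last]

lemma selbs_zero (m : ℕ) (α β γ : ℂ) : selbs m α β γ 0 = β + 1 := by simp [selbs]
lemma selbs_last (m : ℕ) (α β γ : ℂ) : selbs m α β γ (Fin.last (m+1)) = α + 1 := by
  rw [← Fin.succ_last]; simp [selbs]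
lemma selbs_mid (m : ℕ) (α β γ : ℂ) (i : Fin m) : selbs m α β γ i.castSucc.succ = γ := by
  simp [selbs]

lemma selbW_eq {n : ℕ} (α β : ℂ) {y : Fin n → ℝ} (hy : ∀ i, 0 < y i ∧ y i < 1) :
    selbW α β y = ((∏ i, y i : ℝ) : ℂ) ^ α * ((∏ i, (1 - y i) : ℝ) : ℂ) ^ β := by
  rw [selbW, Finset.prod_mul_distrib, selb_prod_cpow _ _ fun i _ => (hy i).1.le,
    selb_prod_cpow _ _ fun i _ => (sub_pos.2 (hy i).2).le]

lemma selbf_eq {m : ℕ} (α β γ : ℂ) {x : Fin m → ℝ} {y : Fin (m+1) → ℝ} (hy : ∀ i, 0 < y i ∧ y i < 1) :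
    selbf m α β γ (x, y) = (selbV x : ℂ) * selbH (selbA x) (selbs m α β γ) y := by
  rw [selbf, selbH, selb_prod_split, selbs_zero, selbs_last, selbA_last, selbW_eq α β hy]
  simp only [selbs_mid, selbA_mid, add_sub_cancel_right]
  have h0 : |∏ i, (selbA x 0 - y i)| = ∏ i, (1 - y i) := by
    rw [abs_of_pos] <;> simp only [selbA, Fin.cons_zero]
    exact Finset.prod_pos fun i _ => sub_pos.2 (hy i).2
  have h1 : |∏ i, (0 - y i)| = ∏ i, y i := by
    rw [Finset.abs_prod]
    refine Finset.prod_congr rfl fun i _ => ?_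
    rw [zero_sub, abs_neg, abs_of_pos (hy i).1]
  have h2 : ∏ j : Fin (m+1), ((|∏ i : Fin m, (y j - x i)| : ℝ) : ℂ) ^ (γ - 1) =
      ∏ j : Fin m, ((|∏ i, (x j - y i)| : ℝ) : ℂ) ^ (γ - 1) := by
    rw [← selb_prod_cpow _ _ (fun j _ => abs_nonneg _), ← selb_prod_cpow _ _ (fun j _ => abs_nonneg _)]
    congr 2
    simp_rw [Finset.abs_prod]
    rw [Finset.prod_comm]
    simp_rw [abs_sub_comm]
  rw [h0, h1, h2]
  ring

lemma selbV_A {m : ℕ} {x : Fin m → ℝ} (hx : ∀ i, 0 < x i ∧ x i < 1) :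
    selbV (selbA x) = (∏ i, x i) * (∏ i, (1 - x i)) * selbV x := by
  rw [selbA, selbV_cons, Fin.prod_univ_castSucc]
  have h : selbV (Fin.snoc (α := fun _ => ℝ) x 0 : Fin (m+1) → ℝ) = (∏ i, x i) * selbV x := by
    unfold selbV
    rw [Fin.prod_univ_castSucc]
    simp only [Fin.prod_univ_castSucc]
    have e : ∀ j : Fin m, ¬ (Fin.last m < j.castSucc) := fun j => (Fin.castSucc_lt_last j).not_gt
    simp [e, Fin.castSucc_lt_last, Finset.prod_mul_distrib, mul_comm]
    left
    exact Finset.prod_congr rfl fun i _ => abs_of_pos (hx i).1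
  rw [h]
  have h2 : ∏ i, |1 - x i| = ∏ i, (1 - x i) :=
    Finset.prod_congr rfl fun i _ => abs_of_pos (sub_pos.2 (hx i).2)
  simp [h2]
  ring

lemma selbC_A0 {m : ℕ} {x : Fin m → ℝ} (hx : ∀ i, 0 < x i ∧ x i < 1) :
    |selbC (selbA x) 0| = ∏ i, (1 - x i) := by
  rw [selbC_succAbove, Finset.abs_prod, Fin.prod_univ_castSucc]
  simp [selbA]
  exact Finset.prod_congr rfl fun i _ => abs_of_pos (sub_pos.2 (hx i).2)

lemma selbC_Alast {m : ℕ} {x : Fin m → ℝ} (hx : ∀ i, 0 < x i ∧ x i < 1) :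
    |selbC (selbA x) (Fin.last (m+1))| = ∏ i, x i := by
  rw [selbC_succAbove, Finset.abs_prod, Fin.prod_univ_succ]
  simp only [selbA_last, Fin.succAbove_last, ← Fin.succ_castSucc, selbA_mid]
  simp [selbA]
  exact Finset.prod_congr rfl fun i _ => abs_of_pos (hx i).1

lemma selbC_Amid {m : ℕ} {x : Fin m → ℝ} (hx : ∀ i, 0 < x i ∧ x i < 1) :
    ∏ j : Fin m, |selbC (selbA x) j.castSucc.succ| = (∏ i, x i) * (∏ i, (1 - x i)) * selbV x ^ 2 := by
  have h : ∀ j : Fin m, |selbC (selbA x) j.castSucc.succ| = x j * (1 - x j) * |selbC x j| := by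
    intro j
    rw [selbC_abs, selbC_abs, selb_prod_split]
    have e1 : j.castSucc.succ ≠ Fin.last (m+1) := by
      rw [← Fin.succ_last]; simpa using (Fin.castSucc_lt_last j).ne
    simp only [selbA_mid, selbA_last, if_neg e1, if_neg (Fin.succ_ne_zero _), Fin.succ_inj,
      Fin.castSucc_inj]
    have e2 : |x j - selbA x 0| = 1 - x j := by
      rw [abs_sub_comm, abs_of_pos] <;> simp [selbA, (hx j).2]
    rw [e2, sub_zero, abs_of_pos (hx j).1]
    ring
  simp_rw [h, Finset.prod_mul_distrib]
  rw [selbC_prod]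

lemma selbs_re (m : ℕ) (α β γ : ℂ) (hα : -1 < α.re) (hβ : -1 < β.re) (hγ : 0 < γ.re) (j : Fin (m+2)) :
    0 < (selbs m α β γ j).re := by
  refine Fin.cases ?_ (fun j => ?_) j
  · rw [selbs_zero]; simp; linarith
  · refine Fin.lastCases ?_ (fun j => ?_) j
    · rw [Fin.succ_last, selbs_last]; simp; linarith
    · rw [selbs_mid]; exact hγ

lemma selb_inner_y (m : ℕ) (α β γ : ℂ) (hα : -1 < α.re) (hβ : -1 < β.re) (hγ : 0 < γ.re)
    (x : Fin m → ℝ) :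
    Integrable (fun y => selbF m α β γ (x, y)) ∧
    ∫ y, selbF m α β γ (x, y) = (orderedSimplex m).indicator
        (fun x => selbK1 m α β γ * selbergIntegrand m (fun _ => 1) (α + γ) (β + γ) γ x) x := by
  by_cases hx : x ∈ orderedSimplex m
  · have e : (fun y => selbF m α β γ (x, y)) =
        (selbI (selbA x)).indicator (fun y => (selbV x : ℂ) * selbH (selbA x) (selbs m α β γ) y) := by
      ext y
      unfold selbF
      by_cases hy : y ∈ selbI (selbA x)
      · have hz := (selbZ_iff x y).2 ⟨hx, hy⟩
        rw [Set.indicator_of_mem hy, Set.indicator_of_mem hz]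
        exact selbf_eq α β γ hz.1.1
      · rw [Set.indicator_of_notMem hy, Set.indicator_of_notMem fun h => hy ((selbZ_iff x y).1 h).2]
    obtain ⟨hI, hval⟩ := selb_DA (selbA_anti hx) (selbs m α β γ) (selbs_re m α β γ hα hβ hγ)
    rw [e]
    constructor
    · exact (integrable_indicator_iff (selbI_open _).measurableSet).2 (hI.const_mul _)
    have hV := selbV_pos (simplex_anti hx).injective
    have hV' : (selbV x : ℂ) ≠ 0 := by exact_mod_cast hV.ne'
    have hA : 0 < ∏ i, x i := Finset.prod_pos fun i _ => (hx.1 i).1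
    have hB : 0 < ∏ i, (1 - x i) := Finset.prod_pos fun i _ => sub_pos.2 (hx.1 i).2
    rw [Set.indicator_of_mem hx, integral_indicator (selbI_open _).measurableSet, integral_const_mul,
      hval, selbergIntegrand_eq _ _ γ hx, selb_prod_split, selb_prod_split, selb_sum_split]
    simp only [selbs_zero, selbs_last, selbs_mid, add_sub_cancel_right]
    rw [← selb_prod_cpow _ _ (fun j _ => abs_nonneg _), selbC_Amid hx.1, selbC_A0 hx.1, selbC_Alast hx.1,
      selbV_A hx.1, selbW_eq _ _ hx.1, selbK1]
    generalize (∏ i, x i) = A at *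
    generalize (∏ i, (1 - x i)) = B at *
    generalize selbV x = V at *
    have hA' : (A : ℂ) ≠ 0 := by exact_mod_cast hA.ne'
    have hB' : (B : ℂ) ≠ 0 := by exact_mod_cast hB.ne'
    have p1 : ∀ r : ℂ, r ≠ 0 → r ^ γ = r ^ (γ - 1) * r := by
      intro r hr
      conv_lhs => rw [show γ = (γ - 1) + 1 by ring]
      rw [Complex.cpow_add _ _ hr, Complex.cpow_one]
    rw [Complex.ofReal_mul (A * B) (V ^ 2), Complex.mul_cpow_ofReal_nonneg (mul_pos hA hB).le (sq_nonneg V),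
      Complex.ofReal_mul A B,
      Complex.mul_cpow_ofReal_nonneg hA.le hB.le, pow_two, Complex.ofReal_mul V V,
      Complex.mul_cpow_ofReal_nonneg hV.le hV.le, two_mul, Complex.cpow_add _ _ hV',
      Complex.cpow_add _ _ hA', Complex.cpow_add _ _ hB', p1 _ hA', p1 _ hB', p1 _ hV']
    simp only [Finset.prod_const, Finset.sum_const, Finset.card_univ, Fintype.card_fin, nsmul_eq_mul]
    push_cast
    ring
  · rw [Set.indicator_of_notMem hx]
    have e : (fun y => selbF m α β γ (x, y)) = fun _ => 0 := by
      ext y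
      exact Set.indicator_of_notMem (fun h => hx ((selbZ_iff x y).1 h).1) _
    rw [e]; simp

lemma selb_step (m : ℕ) (α β γ : ℂ) (hα : -1 < α.re) (hβ : -1 < β.re) (hγ : 0 < γ.re)
    (ih : IntegrableOn (selbergIntegrand m (fun _ => 1) ((α.re : ℂ) + (γ.re : ℂ)) ((β.re : ℂ) + (γ.re : ℂ)) (γ.re : ℂ))
      (orderedSimplex m)) :
    IntegrableOn (selbergIntegrand (m+1) (fun _ => 1) α β γ) (orderedSimplex (m+1)) ∧
    selbK2 m γ * selbergS (m+1) (fun _ => 1) α β γ =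
      selbK1 m α β γ * selbergS m (fun _ => 1) (α + γ) (β + γ) γ := by
  have hK2 : selbK2 m γ ≠ 0 := by
    refine div_ne_zero (pow_ne_zero _ (Gamma_ne_zero_of_re_pos hγ)) (Gamma_ne_zero_of_re_pos ?_)
    have h : (((m + 1 : ℕ) : ℂ) * γ).re = ((m:ℝ) + 1) * γ.re := by simp
    rw [h]; positivity
  have hF : Integrable (selbF m α β γ) (volume.prod volume) := by
    rw [integrable_prod_iff (selbF_meas m α β γ).aestronglyMeasurable]
    refine ⟨Filter.Eventually.of_forall fun x => (selb_inner_y m α β γ hα hβ hγ x).1, ?_⟩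
    suffices hc : Integrable (fun x => ((∫ y, ‖selbF m α β γ (x, y)‖ : ℝ) : ℂ)) by
      exact hc.re
    have e : (fun x => ((∫ y, ‖selbF m α β γ (x, y)‖ : ℝ) : ℂ)) =
        (orderedSimplex m).indicator (fun x => selbK1 m α.re β.re γ.re *
          selbergIntegrand m (fun _ => 1) (α.re + γ.re) (β.re + γ.re) γ.re x) := by
      ext x
      rw [← (selb_inner_y m α.re β.re γ.re (by simpa) (by simpa) (by simpa) x).2, ← integral_complex_ofReal]
      exact integral_congr_ae (Filter.Eventually.of_forall fun y => selbF_norm m α β γ (x, y))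
    refine Integrable.congr ?_ (Filter.Eventually.of_forall fun x => (congrFun e x).symm)
    exact (integrable_indicator_iff (simplex_open m).measurableSet).2 (ih.const_mul _)
  have h1 := integral_prod _ hF
  have h2 := integral_prod_symm _ hF
  have h3 := hF.integral_prod_right
  simp_rw [selb_inner_x m α β γ hγ] at h2 h3
  simp_rw [fun x => (selb_inner_y m α β γ hα hβ hγ x).2] at h1
  rw [integral_indicator (simplex_open _).measurableSet, integral_const_mul] at h1 h2
  constructor
  · have h4 := (integrable_indicator_iff (simplex_open _).measurableSet).1 h3
    have h5 := h4.const_mul (selbK2 m γ)⁻¹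
    refine Integrable.congr h5 (Filter.Eventually.of_forall fun y => ?_)
    simp only
    rw [inv_mul_cancel_left₀ hK2]
  · exact h2.symm.trans h1

lemma selb_integrable (n : ℕ) : ∀ (α β γ : ℂ), -1 < α.re → -1 < β.re → 0 < γ.re →
    IntegrableOn (selbergIntegrand n (fun _ => 1) α β γ) (orderedSimplex n) := by
  induction n with
  | zero =>
    intro α β γ _ _ _
    have : selbergIntegrand 0 (fun _ => 1) α β γ = fun _ => 1 := by
      ext; simp [selbergIntegrand]
    rw [this, IntegrableOn, volume_pi, Measure.pi_of_empty]
    exact integrable_const _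
  | succ m ih =>
    intro α β γ hα hβ hγ
    exact (selb_step m α β γ hα hβ hγ (ih _ _ _ (by simp; linarith) (by simp; linarith) (by simpa))).1

lemma selb_value (n : ℕ) : ∀ (α β γ : ℂ), -1 < α.re → -1 < β.re → 0 < γ.re →
    selbergS n (fun _ => 1) α β γ = (1 / (n.factorial : ℂ)) *
      ((∏ i ∈ Finset.range n, Gamma (1 + ((i:ℂ) + 1) * γ)) * (∏ i ∈ Finset.range n, Gamma (1 + α + i * γ)) *
        (∏ i ∈ Finset.range n, Gamma (1 + β + i * γ)) /
       (Gamma (1 + γ) ^ n * ∏ i ∈ Finset.range n, Gamma (2 + α + β + ((n : ℂ) + i - 1) * γ))) := by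
  induction n with
  | zero =>
    intro α β γ _ _ _
    have h1 : selbergIntegrand 0 (fun _ => 1) α β γ = fun _ => 1 := by
      ext; simp [selbergIntegrand]
    have h2 : orderedSimplex 0 = Set.univ := by
      ext; simp [orderedSimplex]
    rw [selbergS, h1, h2, volume_pi, Measure.pi_of_empty]
    simp
  | succ m ih =>
    intro α β γ hα hβ hγ
    have hstep := (selb_step m α β γ hα hβ hγ
      (selb_integrable m _ _ _ (by simp; linarith) (by simp; linarith) (by simpa))).2
    rw [ih (α + γ) (β + γ) γ (by simp; linarith) (by simp; linarith) hγ] at hstep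
    have hγ0 : γ ≠ 0 := by rintro rfl; simp at hγ
    have hm0 : ((m : ℂ) + 1) ≠ 0 := by exact_mod_cast Nat.succ_ne_zero m
    have g1 := Gamma_ne_zero_of_re_pos hγ
    have g2 : Gamma (((m : ℂ) + 1) * γ) ≠ 0 := by
      apply Gamma_ne_zero_of_re_pos
      have : (((m : ℂ) + 1) * γ).re = ((m:ℝ) + 1) * γ.re := by simp
      rw [this]; positivity
    have hre : ∀ k : ℝ, 0 ≤ k → Gamma (2 + α + β + (k : ℂ) * γ) ≠ 0 := by
      intro k hk
      apply Gamma_ne_zero_of_re_pos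
      have : (2 + α + β + (k : ℂ) * γ).re = 2 + α.re + β.re + k * γ.re := by simp
      rw [this]; nlinarith [mul_nonneg hk hγ.le]
    have e1 : Gamma (1 + γ) = γ * Gamma γ := by rw [add_comm, Gamma_add_one _ hγ0]
    have e2 : Gamma (1 + ((m : ℂ) + 1) * γ) = ((m : ℂ) + 1) * γ * Gamma (((m : ℂ) + 1) * γ) := by
      rw [add_comm, Gamma_add_one _ (mul_ne_zero hm0 hγ0)]
    have a1 : ∏ i ∈ Finset.range m, Gamma (1 + (α + γ) + i * γ) =
        ∏ i ∈ Finset.range m, Gamma (1 + α + ((i + 1 : ℕ) : ℂ) * γ) :=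
      Finset.prod_congr rfl fun i _ => by congr 1; push_cast; ring
    have a2 : ∏ i ∈ Finset.range m, Gamma (1 + (β + γ) + i * γ) =
        ∏ i ∈ Finset.range m, Gamma (1 + β + ((i + 1 : ℕ) : ℂ) * γ) :=
      Finset.prod_congr rfl fun i _ => by congr 1; push_cast; ring
    have a3 : ∏ i ∈ Finset.range m, Gamma (2 + (α + γ) + (β + γ) + ((m : ℂ) + i - 1) * γ) =
        ∏ i ∈ Finset.range m, Gamma (2 + α + β + (((m + 1 : ℕ) : ℂ) + ((i + 1 : ℕ) : ℂ) - 1) * γ) :=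
      Finset.prod_congr rfl fun i _ => by congr 1; push_cast; ring
    have hD : ∏ i ∈ Finset.range m, Gamma (2 + α + β + (((m + 1 : ℕ) : ℂ) + ((i + 1 : ℕ) : ℂ) - 1) * γ) ≠ 0 := by
      refine Finset.prod_ne_zero_iff.2 fun i _ => ?_
      have := hre ((m:ℝ) + i + 1) (by positivity)
      convert this using 4
      push_cast; ring
    have hD0 := hre m (by positivity)
    rw [a1, a2, a3] at hstep
    rw [Finset.prod_range_succ, Finset.prod_range_succ' (fun i : ℕ => Gamma (1 + α + i * γ)),
      Finset.prod_range_succ' (fun i : ℕ => Gamma (1 + β + i * γ)),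
      Finset.prod_range_succ' (fun i : ℕ => Gamma (2 + α + β + (((m + 1 : ℕ) : ℂ) + i - 1) * γ))]
    have b1 : Gamma (1 + α + ((0:ℕ):ℂ) * γ) = Gamma (α + 1) := by congr 1; push_cast; ring
    have b2 : Gamma (1 + β + ((0:ℕ):ℂ) * γ) = Gamma (β + 1) := by congr 1; push_cast; ring
    have b3 : Gamma (2 + α + β + (((m + 1 : ℕ) : ℂ) + ((0:ℕ):ℂ) - 1) * γ) =
        Gamma (2 + α + β + ((m:ℝ):ℂ) * γ) := by congr 1; push_cast; ring
    have b4 : Gamma (β + 1 + (m * γ + (α + 1))) = Gamma (2 + α + β + ((m:ℝ):ℂ) * γ) := by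
      congr 1; push_cast; ring
    rw [b1, b2, b3]
    rw [selbK1, selbK2, b4] at hstep
    have hfac : ((m.factorial : ℕ) : ℂ) ≠ 0 := by exact_mod_cast m.factorial_ne_zero
    rw [Nat.factorial_succ, e2, e1]
    rw [e1] at hstep
    push_cast at hstep hD ⊢
    generalize selbergS (m+1) (fun _ => 1) α β γ = S at *
    generalize (∏ i ∈ Finset.range m, Gamma (2 + α + β + ((m : ℂ) + 1 + ((i:ℂ) + 1) - 1) * γ)) = D at *
    generalize (∏ i ∈ Finset.range m, Gamma (1 + α + ((i:ℂ) + 1) * γ)) = X1 at *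
    generalize (∏ i ∈ Finset.range m, Gamma (1 + β + ((i:ℂ) + 1) * γ)) = X2 at *
    generalize (∏ i ∈ Finset.range m, Gamma (1 + ((i:ℂ) + 1) * γ)) = X3 at *
    have hgm : Gamma γ ^ (m+1) ≠ 0 := pow_ne_zero _ g1
    have hS : S = Gamma (((m : ℂ) + 1) * γ) / Gamma γ ^ (m+1) * (Gamma γ ^ (m+1) / Gamma (((m : ℂ) + 1) * γ) * S) := by
      field_simp
    rw [hS, hstep]
    push_cast at hD0
    field_simp
    ring

/-- Selberg's evaluation: for `Re α > −1`, `Re β > −1`, `Re γ > 0` the Selberg integral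
converges absolutely and equals the product of Gamma factors. -/
theorem selberg_integral_converges_and_eq (n : ℕ) (hn : 1 ≤ n) (α β γ : ℂ)
    (hα : -1 < α.re) (hβ : -1 < β.re) (hγ : 0 < γ.re) :
    IntegrableOn (selbergIntegrand n (fun _ => 1) α β γ) (orderedSimplex n) volume ∧
    selbergS n (fun _ => 1) α β γ =
      (1 / (n.factorial : ℂ)) *
        ∏ i ∈ Finset.Icc 1 n,
          Complex.Gamma (1 + (i : ℂ) * γ) * Complex.Gamma (1 + α + ((i : ℂ) - 1) * γ) *
              Complex.Gamma (1 + β + ((i : ℂ) - 1) * γ) /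
            (Complex.Gamma (1 + γ) *
              Complex.Gamma (2 + α + β + ((n : ℂ) + (i : ℂ) - 2) * γ)) := by
  refine ⟨selb_integrable n α β γ hα hβ hγ, ?_⟩
  rw [selb_value n α β γ hα hβ hγ]
  congr 1
  have hI : Finset.Icc 1 n = Finset.Ico 1 (n + 1) := by
    ext i; simp only [Finset.mem_Icc, Finset.mem_Ico]; omega
  rw [hI, Finset.prod_Ico_eq_prod_range, Nat.add_sub_cancel, Finset.prod_div_distrib,
    Finset.prod_mul_distrib, Finset.prod_mul_distrib, Finset.prod_mul_distrib, Finset.prod_const,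
    Finset.card_range]
  congr 1
  · congr 1
    · congr 1
      · exact Finset.prod_congr rfl fun i _ => by congr 1; push_cast; ring
      · exact Finset.prod_congr rfl fun i _ => by congr 1; push_cast; ring
    · exact Finset.prod_congr rfl fun i _ => by congr 1; push_cast; ring
  · congr 1
    exact Finset.prod_congr rfl fun i _ => by congr 1; push_cast; ring

end
end

section
/- For every integer n ≥ 1, every nonnegative integer d, and every Laurent polynomial f ∈ ℂ[y_i^{±1} : 1 ≤ i ≤ n] such that (y_1⋯y_n)^d · f(y) is a polynomial, the integral S_n[f](α,β,γ) converges absolutely for every (α,β,γ) in the open set D_d = {(α,β,γ) ∈ ℂ³ : Re α > d−1, Re β > −1, Re γ > 0}, and the function (α,β,γ) ↦ S_n[f](α,β,γ) is analytic (holomorphic in the three complex variables) on D_d. -/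
open MeasureTheory Complex

noncomputable section

/-- Evaluation of the Laurent polynomial with coefficient family `c` at a real point. -/
def laurentEval {n : ℕ} (c : (Fin n → ℤ) →₀ ℂ) (y : Fin n → ℝ) : ℂ :=
  c.sum fun k a => a * ∏ i, ((y i : ℂ)) ^ (k i)

/-- The domain `D_d = {Re α > d−1, Re β > −1, Re γ > 0}`. -/
def domainD (d : ℕ) : Set (ℂ × ℂ × ℂ) :=
  {p | (d : ℝ) - 1 < p.1.re ∧ -1 < p.2.1.re ∧ 0 < p.2.2.re}

theorem analytic_integral_exp {Y : Type*} [MeasurableSpace Y] {μ : Measure Y}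
    (L : Y → (ℂ × ℂ × ℂ) →L[ℂ] ℂ) (hL : AEStronglyMeasurable L μ) (F : Y → ℂ)
    (hF : AEStronglyMeasurable F μ) (r : NNReal) (hr : 0 < r)
    (hint : Integrable (fun y => ‖F y‖ * Real.exp (r * ‖L y‖)) μ) :
    AnalyticAt ℂ (fun h : ℂ × ℂ × ℂ => ∫ y, F y * Complex.exp (L y h) ∂μ) 0 := by
  let E := ℂ × ℂ × ℂ
  let P : (k : ℕ) → Y → ContinuousMultilinearMap ℂ (fun _ : Fin k => E) ℂ := fun k y =>
    (F y * ((k.factorial : ℂ))⁻¹) •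
      (ContinuousMultilinearMap.mkPiAlgebraFin ℂ k ℂ).compContinuousLinearMap (fun _ => L y)
  have hPapp : ∀ k y h, P k y (fun _ => h) = F y * ((L y h) ^ k / k.factorial) := by
    intro k y h
    simp [P]
    ring
  have hPm : ∀ k, AEStronglyMeasurable (P k) μ := by
    intro k
    refine (hF.mul_const _).smul ?_
    have hc : Continuous (fun l : E →L[ℂ] ℂ =>
        (ContinuousMultilinearMap.mkPiAlgebraFin ℂ k ℂ).compContinuousLinearMap (fun _ => l)) := by
      have h1 := (ContinuousMultilinearMap.compContinuousLinearMapContinuousMultilinear ℂ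
        (fun _ : Fin k => E) (fun _ : Fin k => ℂ) ℂ).cont
      have h2 : Continuous (fun l : E →L[ℂ] ℂ => (fun _ : Fin k => l)) := by fun_prop
      have h3 := (h1.comp h2).clm_apply
        (continuous_const (y := ContinuousMultilinearMap.mkPiAlgebraFin ℂ k ℂ))
      exact h3
    exact hc.comp_aestronglyMeasurable hL
  have hPn : ∀ k y, ‖P k y‖ ≤ ‖F y‖ * (‖L y‖ ^ k / k.factorial) := by
    intro k y
    have := (ContinuousMultilinearMap.mkPiAlgebraFin ℂ k ℂ).norm_compContinuousLinearMap_le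
      (fun _ => L y)
    simp only [ContinuousMultilinearMap.norm_mkPiAlgebraFin, one_mul, Finset.prod_const,
      Finset.card_univ, Fintype.card_fin] at this
    calc ‖P k y‖ = ‖F y‖ * ((k.factorial : ℝ))⁻¹ *
          ‖(ContinuousMultilinearMap.mkPiAlgebraFin ℂ k ℂ).compContinuousLinearMap
            (fun _ => L y)‖ := by
          simp only [P, norm_smul, norm_mul, norm_inv, Complex.norm_natCast]
      _ ≤ ‖F y‖ * ((k.factorial : ℝ))⁻¹ * ‖L y‖ ^ k := by gcongr
      _ = _ := by ring
  have hexp : ∀ x : ℝ, HasSum (fun k : ℕ => x ^ k / k.factorial) (Real.exp x) := by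
    intro x
    rw [Real.exp_eq_exp_ℝ]
    exact NormedSpace.expSeries_div_hasSum_exp x
  have hcexp : ∀ x : ℂ, HasSum (fun k : ℕ => x ^ k / k.factorial) (Complex.exp x) := by
    intro x
    rw [Complex.exp_eq_exp_ℂ]
    exact NormedSpace.expSeries_div_hasSum_exp x
  have hterm : ∀ k y, ‖P k y‖ * (r : ℝ) ^ k ≤ ‖F y‖ * Real.exp (r * ‖L y‖) := by
    intro k y
    calc ‖P k y‖ * (r : ℝ) ^ k ≤ ‖F y‖ * (‖L y‖ ^ k / k.factorial) * (r : ℝ) ^ k := by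
          gcongr; exact hPn k y
      _ = ‖F y‖ * ((r * ‖L y‖) ^ k / k.factorial) := by rw [mul_pow]; ring
      _ ≤ _ := by
          gcongr
          exact Real.pow_div_factorial_le_exp _ (by positivity) k
  have hPi : ∀ k, Integrable (P k) μ := by
    intro k
    refine Integrable.mono' (hint.mul_const (((r : ℝ) ^ k)⁻¹)) (hPm k) ?_
    filter_upwards with y
    rw [← div_eq_mul_inv, le_div_iff₀ (by positivity)]
    exact hterm k y
  have key : HasFPowerSeriesOnBall (fun h : E => ∫ y, F y * Complex.exp (L y h) ∂μ)
      (fun k => ∫ y, P k y ∂μ) 0 r := by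
    refine ⟨?_, by exact_mod_cast hr, ?_⟩
    · refine FormalMultilinearSeries.le_radius_of_bound _
        (∫ y, ‖F y‖ * Real.exp (r * ‖L y‖) ∂μ) ?_
      intro k
      calc ‖∫ y, P k y ∂μ‖ * (r : ℝ) ^ k ≤ (∫ y, ‖P k y‖ ∂μ) * (r : ℝ) ^ k := by
            gcongr; exact norm_integral_le_integral_norm _
        _ = ∫ y, ‖P k y‖ * (r : ℝ) ^ k ∂μ := by rw [integral_mul_const]
        _ ≤ _ := by
            refine integral_mono ((hPi k).norm.mul_const _) hint (fun y => hterm k y)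
    · intro h hh
      have hh' : ‖h‖ ≤ r := by
        have : ‖h‖ < r := by simpa using hh
        exact this.le
      simp only [zero_add]
      have : ∀ k, (∫ y, P k y ∂μ) (fun _ => h) = ∫ y, F y * ((L y h) ^ k / k.factorial) ∂μ := by
        intro k
        rw [ContinuousMultilinearMap.integral_apply (hPi k)]
        simp only [hPapp]
      simp only [this]
      refine hasSum_integral_of_dominated_convergence
        (fun k y => ‖F y‖ * ((r * ‖L y‖) ^ k / k.factorial)) ?_ ?_ ?_ ?_ ?_
      · intro k
        have hLh : AEStronglyMeasurable (fun y => L y h) μ := by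
          have : Continuous (fun l : E →L[ℂ] ℂ => l h) := by fun_prop
          exact this.comp_aestronglyMeasurable hL
        simp only [div_eq_mul_inv]
        exact hF.mul ((hLh.pow k).mul_const _)
      · intro k
        filter_upwards with y
        rw [norm_mul, norm_div, norm_pow, Complex.norm_natCast]
        gcongr
        rw [mul_comm]
        exact (L y).le_of_opNorm_le_of_le le_rfl hh'
      · filter_upwards with y
        exact ((hexp _).mul_left _).summable
      · refine hint.congr ?_
        filter_upwards with y
        exact ((hexp _).mul_left _).tsum_eq.symm
      · filter_upwards with y
        exact (hcexp _).mul_left _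
  exact key.analyticAt

def selA {n : ℕ} (y : Fin n → ℝ) : ℝ := ∑ i, Real.log (y i)

def selB {n : ℕ} (y : Fin n → ℝ) : ℝ := ∑ i, Real.log (1 - y i)

def selC {n : ℕ} (y : Fin n → ℝ) : ℝ :=
  ∑ i : Fin n, ∑ j : Fin n, if i < j then 2 * Real.log (y i - y j) else 0

def selL {n : ℕ} (y : Fin n → ℝ) : (ℂ × ℂ × ℂ) →L[ℂ] ℂ :=
  (selA y : ℂ) • ContinuousLinearMap.fst ℂ ℂ (ℂ × ℂ) +
  (selB y : ℂ) • (ContinuousLinearMap.fst ℂ ℂ ℂ).comp (ContinuousLinearMap.snd ℂ ℂ (ℂ × ℂ)) +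
  (selC y : ℂ) • (ContinuousLinearMap.snd ℂ ℂ ℂ).comp (ContinuousLinearMap.snd ℂ ℂ (ℂ × ℂ))

theorem selL_apply {n : ℕ} (y : Fin n → ℝ) (p : ℂ × ℂ × ℂ) :
    selL y p = selA y * p.1 + selB y * p.2.1 + selC y * p.2.2 := by
  simp [selL]

theorem selA_meas (n : ℕ) : Measurable (selA (n := n)) := by
  unfold selA; fun_prop

theorem selB_meas (n : ℕ) : Measurable (selB (n := n)) := by
  unfold selB; fun_prop

theorem selC_meas (n : ℕ) : Measurable (selC (n := n)) := by
  unfold selC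
  refine Finset.measurable_fun_sum _ fun i _ => Finset.measurable_fun_sum _ fun j _ => ?_
  split_ifs <;> fun_prop

theorem selL_meas (n : ℕ) : StronglyMeasurable (selL (n := n)) := by
  unfold selL
  have hA := (Complex.measurable_ofReal.comp (selA_meas n)).stronglyMeasurable
  have hB := (Complex.measurable_ofReal.comp (selB_meas n)).stronglyMeasurable
  have hC := (Complex.measurable_ofReal.comp (selC_meas n)).stronglyMeasurable
  exact ((hA.smul_const _).add (hB.smul_const _)).add (hC.smul_const _)

theorem cpow_pos_eq {x : ℝ} (hx : 0 < x) (w : ℂ) :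
    (x : ℂ) ^ w = Complex.exp ((Real.log x : ℝ) * w) := by
  rw [Complex.cpow_def_of_ne_zero (by exact_mod_cast hx.ne'), Complex.ofReal_log hx.le]

theorem selberg_eq_exp {n : ℕ} (f : (Fin n → ℝ) → ℂ) (p : ℂ × ℂ × ℂ) {y : Fin n → ℝ}
    (hy : y ∈ orderedSimplex n) :
    selbergIntegrand n f p.1 p.2.1 p.2.2 y = Complex.exp (selL y p) * f y := by
  rw [selL_apply, Complex.exp_add, Complex.exp_add]
  unfold selbergIntegrand
  congr 1
  rw [Finset.prod_mul_distrib]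
  congr 1
  · congr 1
    · rw [selA, Complex.ofReal_sum, Finset.sum_mul, Complex.exp_sum]
      exact Finset.prod_congr rfl fun i _ => cpow_pos_eq (hy.1 i).1 _
    · rw [selB, Complex.ofReal_sum, Finset.sum_mul, Complex.exp_sum]
      exact Finset.prod_congr rfl fun i _ => cpow_pos_eq (by linarith [(hy.1 i).2]) _
  · rw [selC, Complex.ofReal_sum, Finset.sum_mul, Complex.exp_sum]
    refine Finset.prod_congr rfl fun i _ => ?_
    rw [Complex.ofReal_sum, Finset.sum_mul, Complex.exp_sum]
    refine Finset.prod_congr rfl fun j _ => ?_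
    split_ifs with h
    · rw [cpow_pos_eq (by linarith [hy.2 i j h])]
      congr 1
      push_cast
      ring
    · simp

theorem selA_nonpos {n : ℕ} {y : Fin n → ℝ} (hy : y ∈ orderedSimplex n) : selA y ≤ 0 :=
  Finset.sum_nonpos fun i _ => Real.log_nonpos (hy.1 i).1.le (hy.1 i).2.le

theorem selB_nonpos {n : ℕ} {y : Fin n → ℝ} (hy : y ∈ orderedSimplex n) : selB y ≤ 0 :=
  Finset.sum_nonpos fun i _ => Real.log_nonpos (by linarith [(hy.1 i).2])
    (by linarith [(hy.1 i).1])

theorem selC_nonpos {n : ℕ} {y : Fin n → ℝ} (hy : y ∈ orderedSimplex n) : selC y ≤ 0 := by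
  refine Finset.sum_nonpos fun i _ => Finset.sum_nonpos fun j _ => ?_
  split_ifs with h
  · have := Real.log_nonpos (x := y i - y j) (by linarith [hy.2 i j h])
      (by linarith [(hy.1 i).2, (hy.1 j).1])
    linarith
  · exact le_rfl

theorem selL_norm {n : ℕ} {y : Fin n → ℝ} (hy : y ∈ orderedSimplex n) :
    ‖selL y‖ ≤ -(selA y + selB y + selC y) := by
  have hA := selA_nonpos hy
  have hB := selB_nonpos hy
  have hC := selC_nonpos hy
  refine ContinuousLinearMap.opNorm_le_bound _ (by linarith) fun p => ?_
  rw [selL_apply]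
  have h1 : ‖p.1‖ ≤ ‖p‖ := norm_fst_le p
  have h2 : ‖p.2.1‖ ≤ ‖p‖ := (norm_fst_le p.2).trans (norm_snd_le p)
  have h3 : ‖p.2.2‖ ≤ ‖p‖ := (norm_snd_le p.2).trans (norm_snd_le p)
  refine (norm_add₃_le).trans ?_
  simp only [norm_mul, Complex.norm_real, Real.norm_eq_abs, abs_of_nonpos hA, abs_of_nonpos hB,
    abs_of_nonpos hC]
  nlinarith

theorem orderedSimplex_meas (n : ℕ) : MeasurableSet (orderedSimplex n) := by
  unfold orderedSimplex
  measurability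

theorem laurentEval_meas {n : ℕ} (c : (Fin n → ℤ) →₀ ℂ) : Measurable (laurentEval c) := by
  unfold laurentEval Finsupp.sum
  refine Finset.measurable_fun_sum _ fun k _ => ?_
  refine Measurable.const_mul (Finset.measurable_fun_prod _ fun i _ => ?_) _
  exact (Complex.measurable_ofReal.comp (measurable_pi_apply i)).pow_const _

theorem selbergIntegrand_aesm {n : ℕ} (c : (Fin n → ℤ) →₀ ℂ) (p : ℂ × ℂ × ℂ) :
    AEStronglyMeasurable (selbergIntegrand n (laurentEval c) p.1 p.2.1 p.2.2)
      (volume.restrict (orderedSimplex n)) := by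
  have h : Continuous (fun l : (ℂ × ℂ × ℂ) →L[ℂ] ℂ => Complex.exp (l p)) := by fun_prop
  have h1 := (h.comp_stronglyMeasurable (selL_meas n)).mul (laurentEval_meas c).stronglyMeasurable
  refine h1.aestronglyMeasurable.congr ?_
  filter_upwards [ae_restrict_mem (orderedSimplex_meas n)] with y hy
  exact (selberg_eq_exp _ p hy).symm

theorem beta_integrable {a b : ℂ} (ha : -1 < a.re) (hb : -1 < b.re) :
    Integrable ((Set.Ioc (0 : ℝ) 1).indicator
      (fun x : ℝ => ‖(x : ℂ) ^ a * (1 - (x : ℂ)) ^ b‖)) := by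
  have h := Complex.betaIntegral_convergent (u := a + 1) (v := b + 1)
    (by simp; linarith) (by simp; linarith)
  rw [intervalIntegrable_iff, Set.uIoc_of_le zero_le_one] at h
  simp only [add_sub_cancel_right] at h
  exact (integrable_indicator_iff measurableSet_Ioc).2 h.norm

theorem laurent_bound {n d : ℕ} (c : (Fin n → ℤ) →₀ ℂ)
    (hd : ∀ k ∈ c.support, ∀ i, -(d : ℤ) ≤ k i) {y : Fin n → ℝ} (hy : y ∈ orderedSimplex n) :
    ‖laurentEval c y‖ ≤ (∑ k ∈ c.support, ‖c k‖) * ∏ i, (y i) ^ (-(d : ℤ)) := by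
  unfold laurentEval Finsupp.sum
  rw [Finset.sum_mul]
  refine (norm_sum_le _ _).trans (Finset.sum_le_sum fun k hk => ?_)
  rw [norm_mul, norm_prod]
  gcongr with i _
  rw [norm_zpow, Complex.norm_real, Real.norm_of_nonneg (hy.1 i).1.le]
  exact zpow_le_zpow_right_of_le_one₀ (hy.1 i).1 (hy.1 i).2.le (hd k hk i)

theorem selberg_integrable {n d : ℕ} (c : (Fin n → ℤ) →₀ ℂ)
    (hd : ∀ k ∈ c.support, ∀ i, -(d : ℤ) ≤ k i) (p : ℂ × ℂ × ℂ) (hp : p ∈ domainD d) :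
    IntegrableOn (selbergIntegrand n (laurentEval c) p.1 p.2.1 p.2.2)
        (orderedSimplex n) volume := by
  obtain ⟨h1, h2, h3⟩ := hp
  have hb := beta_integrable (a := p.1 - d) (b := p.2.1) (by simp; linarith) h2
  have hprod := (Integrable.fintype_prod (ι := Fin n) (μ := fun _ => (volume : Measure ℝ))
    (fun _ => hb)).const_mul (∑ k ∈ c.support, ‖c k‖)
  rw [← volume_pi] at hprod
  refine Integrable.mono' (hprod.mono_measure Measure.restrict_le_self)
    (selbergIntegrand_aesm c p) ?_
  filter_upwards [ae_restrict_mem (orderedSimplex_meas n)] with y hy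
  have hφ : ∀ i, (Set.Ioc (0 : ℝ) 1).indicator
      (fun x : ℝ => ‖(x : ℂ) ^ (p.1 - d) * (1 - (x : ℂ)) ^ p.2.1‖) (y i) =
      ‖(y i : ℂ) ^ p.1 * (((1 - y i : ℝ)) : ℂ) ^ p.2.1‖ * (y i) ^ (-(d : ℤ)) := by
    intro i
    have hi := hy.1 i
    have hne : (y i : ℂ) ≠ 0 := by exact_mod_cast hi.1.ne'
    rw [Set.indicator_of_mem (Set.mem_Ioc.2 ⟨hi.1, hi.2.le⟩), Complex.cpow_sub _ _ hne, norm_mul, norm_mul,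
      norm_div, Complex.cpow_natCast, norm_pow, Complex.norm_real, Real.norm_of_nonneg hi.1.le,
      zpow_neg, zpow_natCast]
    push_cast
    ring
  simp only [hφ]
  rw [Finset.prod_mul_distrib]
  unfold selbergIntegrand
  rw [norm_mul, norm_mul, norm_prod]
  have hV : ‖∏ i : Fin n, ∏ j : Fin n,
      if i < j then (((y i - y j : ℝ)) : ℂ) ^ (2 * p.2.2) else 1‖ ≤ 1 := by
    rw [norm_prod]
    refine Finset.prod_le_one (fun _ _ => norm_nonneg _) fun i _ => ?_
    rw [norm_prod]
    refine Finset.prod_le_one (fun _ _ => norm_nonneg _) fun j _ => ?_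
    split_ifs with h
    · have := hy.2 i j h
      rw [Complex.norm_cpow_eq_rpow_re_of_pos (by linarith)]
      refine Real.rpow_le_one (by linarith) (by linarith [(hy.1 i).2, (hy.1 j).1]) ?_
      simp
      linarith
    · simp
  calc _ ≤ (∏ i, ‖(y i : ℂ) ^ p.1 * (((1 - y i : ℝ)) : ℂ) ^ p.2.1‖) * 1 *
        ((∑ k ∈ c.support, ‖c k‖) * ∏ i, (y i) ^ (-(d : ℤ))) := by
        gcongr
        exact laurent_bound c hd hy
    _ = _ := by ring

/-- For a Laurent polynomial `f` such that `(y_1⋯y_n)^d · f` is a polynomial, the Selberg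
integral `S_n[f]` converges absolutely on `D_d` and is an analytic function of `(α,β,γ)`
there. -/
theorem selberg_integral_analyticOn_domainD (n d : ℕ) (hn : 1 ≤ n)
    (c : (Fin n → ℤ) →₀ ℂ) (hd : ∀ k ∈ c.support, ∀ i, -(d : ℤ) ≤ k i) :
    (∀ p ∈ domainD d,
      IntegrableOn (selbergIntegrand n (laurentEval c) p.1 p.2.1 p.2.2)
        (orderedSimplex n) volume) ∧
    AnalyticOnNhd ℂ
      (fun p : ℂ × ℂ × ℂ => selbergS n (laurentEval c) p.1 p.2.1 p.2.2) (domainD d) := by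
  refine ⟨fun p hp => selberg_integrable c hd p hp, ?_⟩
  intro p hp
  obtain ⟨h1, h2, h3⟩ := hp
  obtain ⟨r, hr, hr1, hr2, hr3⟩ : ∃ r : NNReal, 0 < r ∧ (d : ℝ) - 1 < p.1.re - r ∧
      -1 < p.2.1.re - r ∧ 0 < p.2.2.re - r := by
    have hm : 0 < min (p.1.re - (d - 1)) (min (p.2.1.re + 1) p.2.2.re) := by
      refine lt_min (by linarith) (lt_min (by linarith) h3)
    obtain ⟨s, hs0, hs⟩ := exists_between hm
    rw [lt_min_iff, lt_min_iff] at hs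
    lift s to NNReal using hs0.le
    exact ⟨s, by exact_mod_cast hs0, by linarith, by linarith, by linarith⟩
  let q : ℂ × ℂ × ℂ := p - ((r : ℂ), (r : ℂ), (r : ℂ))
  have hq : q ∈ domainD d := by
    refine ⟨?_, ?_, ?_⟩ <;> simp [q] <;> linarith
  have hqi := (selberg_integrable c hd q hq).norm
  have hint : Integrable (fun y => ‖selbergIntegrand n (laurentEval c) p.1 p.2.1 p.2.2 y‖ *
      Real.exp (r * ‖selL y‖)) (volume.restrict (orderedSimplex n)) := by
    refine Integrable.mono' hqi ?_ ?_
    · refine (selbergIntegrand_aesm c p).norm.mul ?_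
      exact (Real.continuous_exp.comp (continuous_const.mul continuous_id)
        ).comp_aestronglyMeasurable (selL_meas n).norm.aestronglyMeasurable
    · filter_upwards [ae_restrict_mem (orderedSimplex_meas n)] with y hy
      rw [Real.norm_of_nonneg (by positivity), selberg_eq_exp _ p hy, selberg_eq_exp _ q hy,
        norm_mul, norm_mul, Complex.norm_exp, Complex.norm_exp, mul_right_comm, ← Real.exp_add]
      gcongr
      have hLn := mul_le_mul_of_nonneg_left (selL_norm hy) (NNReal.coe_nonneg r)
      have : (selL y q).re = (selL y p).re - r * (selA y + selB y + selC y) := by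
        simp [selL_apply, q]
        ring
      rw [this]
      linarith
  have key := analytic_integral_exp selL (selL_meas n).aestronglyMeasurable _
    (selbergIntegrand_aesm c p) r hr hint
  have hsub : AnalyticAt ℂ (fun x : ℂ × ℂ × ℂ => x - p) p :=
    analyticAt_id.sub analyticAt_const
  have key2 := AnalyticAt.comp_of_eq key hsub (sub_self p)
  refine key2.congr (Filter.Eventually.of_forall fun x => ?_)
  unfold selbergS
  refine setIntegral_congr_fun (orderedSimplex_meas n) fun y hy => ?_
  simp only
  rw [selberg_eq_exp _ p hy, selberg_eq_exp _ x hy, map_sub, mul_right_comm, ← Complex.exp_add,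
    add_sub_cancel]

end
end

section
/- Let n ≥ 1 be an integer, d a nonnegative integer, and f ∈ ℂ[y_i^{±1} : 1 ≤ i ≤ n] a Laurent polynomial such that (y_1⋯y_n)^d · f(y) is a polynomial. Then there exists an analytic function F on the open set ℂ³∖𝒜_n such that F(α,β,γ) = S_n[f](α,β,γ) for every (α,β,γ) ∉ 𝒜_n with Re α > d−1, Re β > −1 and Re γ > 0; that is, S_n[f] admits an analytic continuation to ℂ³∖𝒜_n. -/
open MeasureTheory Complex

noncomputable section

/-- The hyperplane arrangement `𝒜_n ⊂ ℂ³`. -/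
def setA (n : ℕ) : Set (ℂ × ℂ × ℂ) :=
  {p | (∃ j : ℕ, 1 ≤ j ∧ j ≤ n ∧
          ((∃ m : ℤ, (j : ℂ) * (p.1 + ((j : ℂ) - 1) * p.2.2) = m) ∨
           (∃ m : ℤ, (j : ℂ) * (p.2.1 + ((j : ℂ) - 1) * p.2.2) = m))) ∨
       (∃ j : ℕ, 1 ≤ j ∧ j ≤ n - 1 ∧ ∃ m : ℤ, (j : ℂ) * ((j : ℂ) + 1) * p.2.2 = m)}

namespace Selb

open Finset

/-- nodes: x 0 = 1, x i = y_{i-1}, x (n+1) = 0 -/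
def xn {n : ℕ} (y : Fin n → ℝ) (i : ℕ) : ℝ :=
  if i = 0 then 1 else if h : i - 1 < n then y ⟨i - 1, h⟩ else 0

def Lam {n : ℕ} (s : ℕ → ℕ → ℂ) (y : Fin n → ℝ) : ℂ :=
  ∑ i ∈ range (n + 2), ∑ j ∈ range (n + 2), s i j * ((Real.log (xn y i - xn y j) : ℝ) : ℂ)

def lam {n : ℕ} (m : ℕ → ℕ → ℤ) (y : Fin n → ℝ) : ℝ :=
  ∑ i ∈ range (n + 2), ∑ j ∈ range (n + 2), (m i j : ℝ) * Real.log (xn y i - xn y j)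

lemma xn_zero {n : ℕ} (y : Fin n → ℝ) : xn y 0 = 1 := by simp [xn]

lemma xn_succ {n : ℕ} (y : Fin n → ℝ) (k : Fin n) : xn y (k + 1) = y k := by
  simp [xn]

lemma xn_last {n : ℕ} (y : Fin n → ℝ) : xn y (n + 1) = 0 := by
  simp [xn]

lemma xn_gap {n : ℕ} {y : Fin n → ℝ} (hy : y ∈ orderedSimplex n) {i : ℕ} (hi : i ≤ n) :
    xn y (i + 1) < xn y i := by
  obtain ⟨h1, h2⟩ := hy
  rcases Nat.lt_or_ge i n with h | h
  · have e1 : xn y (i + 1) = y ⟨i, h⟩ := xn_succ y ⟨i, h⟩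
    rw [e1]
    rcases Nat.eq_zero_or_pos i with h0 | h0
    · subst h0; rw [xn_zero]; exact (h1 _).2
    · have e2 : xn y i = y ⟨i - 1, by omega⟩ := by
        have := xn_succ y ⟨i - 1, by omega⟩
        rw [← this]; congr 1; simp; omega
      rw [e2]; apply h2; simp [Fin.lt_def]; omega
  · obtain rfl : i = n := by omega
    rw [xn_last]
    rcases Nat.eq_zero_or_pos i with h0 | h0
    · subst h0; rw [xn_zero]; norm_num
    · have e2 : xn y i = y ⟨i - 1, by omega⟩ := by
        have := xn_succ y ⟨i - 1, by omega⟩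
        rw [← this]; congr 1; simp; omega
      rw [e2]; exact (h1 _).1

lemma anti_of_gap {x : ℕ → ℝ} {N : ℕ} (h : ∀ i ≤ N, x (i + 1) < x i) {i j : ℕ} (hij : i < j)
    (hj : j ≤ N + 1) : x j < x i := by
  induction j with
  | zero => omega
  | succ j ih =>
    have := h j (by omega)
    rcases Nat.lt_or_ge i j with h' | h'
    · exact this.trans (ih h' (by omega))
    · obtain rfl : i = j := by omega
      exact this

lemma xn_lt {n : ℕ} {y : Fin n → ℝ} (hy : y ∈ orderedSimplex n) {i j : ℕ} (hij : i < j)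
    (hj : j ≤ n + 1) : xn y j < xn y i :=
  anti_of_gap (fun _ h => xn_gap hy h) hij hj

lemma xn_le {n : ℕ} {y : Fin n → ℝ} (hy : y ∈ orderedSimplex n) {i j : ℕ} (hij : i ≤ j)
    (hj : j ≤ n + 1) : xn y j ≤ xn y i := by
  rcases hij.eq_or_lt with h | h
  · rw [h]
  · exact (xn_lt hy h hj).le

lemma mem_of_gap {n : ℕ} {y : Fin n → ℝ} (h : ∀ i ≤ n, xn y (i + 1) < xn y i) :
    y ∈ orderedSimplex n := by
  refine ⟨fun i => ⟨?_, ?_⟩, fun i j hij => ?_⟩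
  · rw [← xn_succ y i, ← xn_last y]
    exact anti_of_gap h (by omega) le_rfl
  · rw [← xn_succ y i, ← xn_zero y]
    exact anti_of_gap h (by omega) (by omega)
  · rw [← xn_succ y i, ← xn_succ y j]
    exact anti_of_gap h (by simpa using hij) (by omega)

lemma xn_mem01 {n : ℕ} {y : Fin n → ℝ} (hy : y ∈ orderedSimplex n) {i : ℕ} (hi : i ≤ n + 1) :
    0 ≤ xn y i ∧ xn y i ≤ 1 := by
  constructor
  · rw [← xn_last y]; exact xn_le hy hi le_rfl
  · rw [← xn_zero y]; exact xn_le hy (Nat.zero_le _) hi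

lemma xn_sub_ne {n : ℕ} {y : Fin n → ℝ} (hy : y ∈ orderedSimplex n) {i j : ℕ} (hij : i ≠ j)
    (hi : i ≤ n + 1) (hj : j ≤ n + 1) : xn y i - xn y j ≠ 0 := by
  rcases lt_or_gt_of_ne hij with h | h
  · have := xn_lt hy h hj; linarith
  · have := xn_lt hy h hi; intro h'; linarith

lemma abs_sub_le_one {n : ℕ} {y : Fin n → ℝ} (hy : y ∈ orderedSimplex n) {i j : ℕ}
    (hi : i ≤ n + 1) (hj : j ≤ n + 1) : |xn y i - xn y j| ≤ 1 := by
  have h1 := xn_mem01 hy hi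
  have h2 := xn_mem01 hy hj
  rw [abs_le]; constructor <;> linarith [h1.1, h1.2, h2.1, h2.2]

lemma log_nonpos' {n : ℕ} {y : Fin n → ℝ} (hy : y ∈ orderedSimplex n) {i j : ℕ}
    (hi : i ≤ n + 1) (hj : j ≤ n + 1) : Real.log (xn y i - xn y j) ≤ 0 := by
  rw [← Real.log_abs]
  exact Real.log_nonpos (abs_nonneg _) (abs_sub_le_one hy hi hj)

lemma lam_add {n : ℕ} (m m' : ℕ → ℕ → ℤ) (y : Fin n → ℝ) :
    lam (m + m') y = lam m y + lam m' y := by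
  simp only [lam, ← sum_add_distrib]
  refine sum_congr rfl fun i _ => sum_congr rfl fun j _ => ?_
  simp only [Pi.add_apply]; push_cast; ring

lemma lam_sub {n : ℕ} (m m' : ℕ → ℕ → ℤ) (y : Fin n → ℝ) :
    lam (m - m') y = lam m y - lam m' y := by
  simp only [lam, ← sum_sub_distrib]
  refine sum_congr rfl fun i _ => sum_congr rfl fun j _ => ?_
  simp only [Pi.sub_apply]; push_cast; ring

lemma lam_zero {n : ℕ} (y : Fin n → ℝ) : lam 0 y = 0 := by simp [lam]

lemma lam_nsmul {n : ℕ} (k : ℕ) (m : ℕ → ℕ → ℤ) (y : Fin n → ℝ) :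
    lam (k • m) y = k * lam m y := by
  simp only [lam, mul_sum]
  refine sum_congr rfl fun i _ => sum_congr rfl fun j _ => ?_
  simp only [Pi.smul_apply]; simp; ring

def ee (u v : ℕ) : ℕ → ℕ → ℤ := fun i j => if i = u ∧ j = v then 1 else 0

lemma lam_ee {n : ℕ} (y : Fin n → ℝ) {u v : ℕ} (hu : u ≤ n + 1) (hv : v ≤ n + 1) :
    lam (ee u v) y = Real.log (xn y u - xn y v) := by
  rw [lam, sum_eq_single u, sum_eq_single v]
  · simp [ee]
  · intro j _ hj; simp [ee, hj]
  · intro h; simp at h; omega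
  · intro i _ hi; refine sum_eq_zero fun j _ => ?_; simp [ee, hi]
  · intro h; simp at h; omega

lemma Lam_add {n : ℕ} (s s' : ℕ → ℕ → ℂ) (y : Fin n → ℝ) :
    Lam (s + s') y = Lam s y + Lam s' y := by
  simp only [Lam, ← sum_add_distrib]
  refine sum_congr rfl fun i _ => sum_congr rfl fun j _ => ?_
  simp only [Pi.add_apply]; ring

def toC (m : ℕ → ℕ → ℤ) : ℕ → ℕ → ℂ := fun i j => (m i j : ℂ)

lemma Lam_toC {n : ℕ} (m : ℕ → ℕ → ℤ) (y : Fin n → ℝ) : Lam (toC m) y = (lam m y : ℝ) := by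
  simp only [Lam, lam, toC]; push_cast; rfl

lemma Lam_re {n : ℕ} (s : ℕ → ℕ → ℂ) (y : Fin n → ℝ) : (Lam s y).re =
    ∑ i ∈ range (n + 2), ∑ j ∈ range (n + 2), (s i j).re * Real.log (xn y i - xn y j) := by
  simp only [Lam, Complex.re_sum, Complex.re_mul_ofReal]

/-- `P = - log D` -/
def PP {n : ℕ} (y : Fin n → ℝ) : ℝ := - lam 1 y

lemma neg_log_le_PP {n : ℕ} {y : Fin n → ℝ} (hy : y ∈ orderedSimplex n) {i j : ℕ}
    (hi : i ≤ n + 1) (hj : j ≤ n + 1) : - Real.log (xn y i - xn y j) ≤ PP y := by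
  simp only [PP, lam, Pi.one_apply, Int.cast_one, one_mul, ← sum_neg_distrib]
  have h0 : ∀ a ∈ range (n + 2), ∀ b ∈ range (n + 2), 0 ≤ - Real.log (xn y a - xn y b) := by
    intro a ha b hb
    simp at ha hb
    have := log_nonpos' hy (i := a) (j := b) (by omega) (by omega); linarith
  refine le_trans ?_ (single_le_sum (fun a ha => sum_nonneg (h0 a ha))
    (show i ∈ range (n + 2) by simp; omega))
  exact single_le_sum (f := fun b => - Real.log (xn y i - xn y b)) (h0 i (by simp; omega))
    (show j ∈ range (n + 2) by simp; omega)

lemma PP_nonneg {n : ℕ} {y : Fin n → ℝ} (hy : y ∈ orderedSimplex n) : 0 ≤ PP y := by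
  have h := neg_log_le_PP hy (i := 0) (j := 0) (by omega) (by omega)
  simpa using h

lemma inv_le_exp_PP {n : ℕ} {y : Fin n → ℝ} (hy : y ∈ orderedSimplex n) {i j : ℕ}
    (hi : i ≤ n + 1) (hj : j ≤ n + 1) : |(xn y i - xn y j)⁻¹| ≤ Real.exp (PP y) := by
  by_cases hij : i = j
  · subst hij; simp; positivity
  · have h := xn_sub_ne hy hij hi hj
    have h2 := neg_log_le_PP hy hi hj
    rw [← Real.log_abs] at h2
    rw [abs_inv, ← Real.exp_log (abs_pos.2 h), ← Real.exp_neg]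
    exact Real.exp_le_exp.2 h2

lemma exp_neg_PP_le {n : ℕ} {y : Fin n → ℝ} (hy : y ∈ orderedSimplex n) {i j : ℕ} (hij : i ≠ j)
    (hi : i ≤ n + 1) (hj : j ≤ n + 1) : Real.exp (-PP y) ≤ |xn y i - xn y j| := by
  have h := xn_sub_ne hy hij hi hj
  have h2 := neg_log_le_PP hy hi hj
  rw [← Real.log_abs] at h2
  rw [← Real.exp_log (abs_pos.2 h)]
  exact Real.exp_le_exp.2 (by linarith)

lemma Lam_re_le {n : ℕ} {y : Fin n → ℝ} (hy : y ∈ orderedSimplex n) (s : ℕ → ℕ → ℂ) :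
    (Lam s y).re ≤ (∑ i ∈ range (n + 2), ∑ j ∈ range (n + 2), ‖s i j‖) * PP y := by
  rw [Lam_re, sum_mul]
  refine sum_le_sum fun i hi => ?_
  rw [sum_mul]
  refine sum_le_sum fun j hj => ?_
  simp at hi hj
  have h1 := log_nonpos' hy (i := i) (j := j) (by omega) (by omega)
  have h2 := neg_log_le_PP hy (i := i) (j := j) (by omega) (by omega)
  have h3 : -‖s i j‖ ≤ (s i j).re := by
    have := Complex.abs_re_le_norm (s i j); linarith [neg_abs_le (s i j).re]
  calc _ ≤ -‖s i j‖ * Real.log (xn y i - xn y j) := mul_le_mul_of_nonpos_right h3 h1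
    _ = ‖s i j‖ * -Real.log (xn y i - xn y j) := by ring
    _ ≤ _ := mul_le_mul_of_nonneg_left h2 (norm_nonneg _)

lemma isOpen_simplex (n : ℕ) : IsOpen (orderedSimplex n) := by
  have : orderedSimplex n = (⋂ i, {y | 0 < y i ∧ y i < 1}) ∩
      ⋂ i : Fin n, ⋂ j : Fin n, {y : Fin n → ℝ | i < j → y j < y i} := by
    ext y; simp [orderedSimplex]
  rw [this]
  refine IsOpen.inter (isOpen_iInter_of_finite fun i => ?_)
    (isOpen_iInter_of_finite fun i => isOpen_iInter_of_finite fun j => ?_)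
  · exact (isOpen_lt continuous_const (continuous_apply i)).inter
      (isOpen_lt (continuous_apply i) continuous_const)
  · by_cases h : i < j
    · simp only [h, true_imp_iff]
      exact isOpen_lt (continuous_apply j) (continuous_apply i)
    · simp [h]

lemma volume_simplex (n : ℕ) : volume (orderedSimplex n) < ⊤ := by
  refine lt_of_le_of_lt (measure_mono (t := Set.Icc 0 1) ?_) isCompact_Icc.measure_lt_top
  intro y hy
  exact ⟨fun i => (hy.1 i).1.le, fun i => (hy.1 i).2.le⟩

lemma continuous_xn {n : ℕ} (i : ℕ) : Continuous (fun y : Fin n → ℝ => xn y i) := by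
  unfold xn
  by_cases h : i = 0
  · simp [h, continuous_const]
  · by_cases h' : i - 1 < n
    · simp only [h, h', if_false, dif_pos]; exact continuous_apply _
    · simp [h, h', continuous_const]

lemma continuousOn_log {n : ℕ} {i j : ℕ} (hi : i ≤ n + 1) (hj : j ≤ n + 1) :
    ContinuousOn (fun y : Fin n → ℝ => Real.log (xn y i - xn y j)) (orderedSimplex n) := by
  by_cases h : i = j
  · subst h; simp [continuousOn_const]
  · exact ContinuousOn.log ((continuous_xn i).sub (continuous_xn j)).continuousOn
      fun y hy => xn_sub_ne hy h hi hj

lemma continuousOn_inv {n : ℕ} {i j : ℕ} (hi : i ≤ n + 1) (hj : j ≤ n + 1) :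
    ContinuousOn (fun y : Fin n → ℝ => (xn y i - xn y j)⁻¹) (orderedSimplex n) := by
  by_cases h : i = j
  · subst h; simp [continuousOn_const]
  · exact ContinuousOn.inv₀ ((continuous_xn i).sub (continuous_xn j)).continuousOn
      fun y hy => xn_sub_ne hy h hi hj

lemma continuousOn_Lam {n : ℕ} (s : ℕ → ℕ → ℂ) :
    ContinuousOn (fun y : Fin n → ℝ => Lam s y) (orderedSimplex n) := by
  unfold Lam
  refine continuousOn_finsetSum _ fun i hi => continuousOn_finsetSum _ fun j hj => ?_
  simp at hi hj
  exact continuousOn_const.mul (Complex.continuous_ofReal.comp_continuousOn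
    (continuousOn_log (by omega) (by omega)))

lemma continuousOn_lam {n : ℕ} (s : ℕ → ℕ → ℤ) :
    ContinuousOn (fun y : Fin n → ℝ => lam s y) (orderedSimplex n) := by
  unfold lam
  refine continuousOn_finsetSum _ fun i hi => continuousOn_finsetSum _ fun j hj => ?_
  simp at hi hj
  exact continuousOn_const.mul (continuousOn_log (by omega) (by omega))

end Selb
namespace Selb

open Finset

def dl {n : ℕ} (i : ℕ) (k : Fin n) : ℝ := if i = (k : ℕ) + 1 then 1 else 0

lemma xn_line {n : ℕ} (y : Fin n → ℝ) (k : Fin n) (t : ℝ) (i : ℕ) :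
    xn (y + t • Pi.single k (1 : ℝ)) i = xn y i + t * dl i k := by
  unfold xn dl
  by_cases h : i = 0
  · simp [h]
  · by_cases h' : i - 1 < n
    · by_cases h3 : i = k + 1
      · have : (⟨i - 1, h'⟩ : Fin n) = k := by ext; simp; omega
        simp [h3]
      · have : (⟨i - 1, h'⟩ : Fin n) ≠ k := by
          intro h4; apply h3; rw [← h4]; simp; omega
        simp [h, h', h3, this]
    · have h3 : ¬ i = k + 1 := by omega
      simp [h, h', h3]

lemma dl_le {n : ℕ} (i j : ℕ) (k : Fin n) : |dl i k - dl j k| ≤ 1 := by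
  unfold dl; split_ifs <;> norm_num

def DLam {n : ℕ} (s : ℕ → ℕ → ℂ) (k : Fin n) (y : Fin n → ℝ) : ℂ :=
  ∑ i ∈ range (n + 2), ∑ j ∈ range (n + 2),
    s i j * (((dl i k - dl j k) / (xn y i - xn y j) : ℝ) : ℂ)

lemma hasLineDerivAt_Lam {n : ℕ} (s : ℕ → ℕ → ℂ) (k : Fin n) {y : Fin n → ℝ}
    (hy : y ∈ orderedSimplex n) :
    HasLineDerivAt ℝ (Lam s) (DLam s k y) y (Pi.single k (1 : ℝ)) := by
  unfold HasLineDerivAt Lam DLam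
  refine HasDerivAt.fun_sum fun i hi => HasDerivAt.fun_sum fun j hj => ?_
  simp only [mem_range] at hi hj
  refine HasDerivAt.const_mul _ (HasDerivAt.ofReal_comp ?_)
  simp only [xn_line]
  by_cases h : i = j
  · subst h; simp [hasDerivAt_const]
  · have h0 := xn_sub_ne hy h (by omega) (by omega)
    have h1 : HasDerivAt (fun t : ℝ => xn y i + t * dl i k - (xn y j + t * dl j k))
        (dl i k - dl j k) 0 := by
      have := (((hasDerivAt_id (0 : ℝ)).mul_const (dl i k)).const_add (xn y i)).fun_sub
        (((hasDerivAt_id (0 : ℝ)).mul_const (dl j k)).const_add (xn y j))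
      simpa using this
    have h2 := h1.log (by simpa using h0)
    simpa using h2

lemma continuousOn_DLam {n : ℕ} (s : ℕ → ℕ → ℂ) (k : Fin n) :
    ContinuousOn (DLam s k) (orderedSimplex n) := by
  unfold DLam
  refine continuousOn_finsetSum _ fun i hi => continuousOn_finsetSum _ fun j hj => ?_
  simp at hi hj
  refine continuousOn_const.mul (Complex.continuous_ofReal.comp_continuousOn ?_)
  simp only [div_eq_mul_inv]
  exact continuousOn_const.mul (continuousOn_inv (by omega) (by omega))

lemma DLam_le {n : ℕ} {y : Fin n → ℝ} (hy : y ∈ orderedSimplex n) (s : ℕ → ℕ → ℂ) (k : Fin n) :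
    ‖DLam s k y‖ ≤ (∑ i ∈ range (n + 2), ∑ j ∈ range (n + 2), ‖s i j‖) * Real.exp (PP y) := by
  unfold DLam
  rw [sum_mul]
  refine (norm_sum_le _ _).trans (sum_le_sum fun i hi => ?_)
  rw [sum_mul]
  refine (norm_sum_le _ _).trans (sum_le_sum fun j hj => ?_)
  simp only [mem_range] at hi hj
  rw [norm_mul]
  refine mul_le_mul_of_nonneg_left ?_ (norm_nonneg _)
  rw [Complex.norm_real, Real.norm_eq_abs, div_eq_mul_inv, abs_mul]
  calc _ ≤ 1 * Real.exp (PP y) := by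
        refine mul_le_mul (dl_le _ _ _) (inv_le_exp_PP hy (by omega) (by omega)) (abs_nonneg _)
          zero_le_one
    _ = _ := one_mul _

lemma exists_bound (N : ℝ) {ε : ℝ} (hε : 0 < ε) :
    ∃ K : ℝ, 0 ≤ K ∧ ∀ t : ℝ, 0 ≤ t → Real.exp (N * t) * Real.exp (-ε * Real.exp t) ≤ K := by
  obtain ⟨q, hq⟩ := exists_nat_ge N
  refine ⟨q.factorial / ε ^ q, by positivity, fun t ht => ?_⟩
  have h1 := Real.pow_div_factorial_le_exp (ε * Real.exp t) (by positivity) q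
  have h2 : Real.exp (N * t) ≤ Real.exp t ^ q := by
    rw [← Real.exp_nat_mul]
    exact Real.exp_le_exp.2 (mul_le_mul_of_nonneg_right hq ht)
  have h3 : Real.exp t ^ q ≤ q.factorial / ε ^ q * Real.exp (ε * Real.exp t) := by
    rw [mul_pow, div_le_iff₀ (by positivity)] at h1
    rw [div_mul_eq_mul_div, le_div_iff₀ (by positivity)]
    linarith
  calc _ ≤ (q.factorial / ε ^ q * Real.exp (ε * Real.exp t)) * Real.exp (-ε * Real.exp t) :=
        mul_le_mul_of_nonneg_right (h2.trans h3) (Real.exp_pos _).le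
    _ = q.factorial / ε ^ q * (Real.exp (ε * Real.exp t) * Real.exp (-ε * Real.exp t)) := by ring
    _ = _ := by rw [← Real.exp_add]; simp

def hh {n : ℕ} (s : ℕ → ℕ → ℂ) (ε : ℝ) (y : Fin n → ℝ) : ℂ :=
  cexp (Lam s y - ε * cexp (- Lam 1 y))

lemma Lam_one {n : ℕ} (y : Fin n → ℝ) : - Lam 1 y = ((PP y : ℝ) : ℂ) := by
  have := Lam_toC 1 y
  have h1 : toC 1 = 1 := by ext; simp [toC]
  rw [h1] at this
  rw [this, PP]; push_cast; rfl

lemma norm_hh {n : ℕ} (s : ℕ → ℕ → ℂ) (ε : ℝ) (y : Fin n → ℝ) :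
    ‖hh s ε y‖ = Real.exp (Lam s y).re * Real.exp (- ε * Real.exp (PP y)) := by
  rw [hh, Lam_one, Complex.norm_exp, ← Complex.ofReal_exp, ← Complex.ofReal_mul, Complex.sub_re,
    Complex.ofReal_re, ← Real.exp_add]
  congr 1; ring

lemma hasLineDerivAt_hh {n : ℕ} (s : ℕ → ℕ → ℂ) (ε : ℝ) (k : Fin n) {y : Fin n → ℝ}
    (hy : y ∈ orderedSimplex n) :
    HasLineDerivAt ℝ (hh s ε) (hh s ε y * (DLam s k y + ε * cexp (- Lam 1 y) * DLam 1 k y)) y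
      (Pi.single k (1 : ℝ)) := by
  have h1 := hasLineDerivAt_Lam s k hy
  have h2 := hasLineDerivAt_Lam 1 k hy
  unfold HasLineDerivAt at *
  have := (h1.fun_sub ((h2.fun_neg.cexp).const_mul (ε : ℂ))).cexp
  convert! this using 1
  simp [hh]; ring

lemma hh_bound {n : ℕ} (s : ℕ → ℕ → ℂ) {ε : ℝ} (hε : 0 < ε) (q : ℝ) :
    ∃ K : ℝ, 0 ≤ K ∧ ∀ y ∈ orderedSimplex n,
      Real.exp (q * PP y) * ‖hh s ε y‖ ≤ K := by
  obtain ⟨K, hK, h⟩ := exists_bound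
    (q + ∑ i ∈ range (n + 2), ∑ j ∈ range (n + 2), ‖s i j‖) hε
  refine ⟨K, hK, fun y hy => le_trans ?_ (h (PP y) (PP_nonneg hy))⟩
  rw [norm_hh, ← mul_assoc, ← Real.exp_add]
  refine mul_le_mul_of_nonneg_right (Real.exp_le_exp.2 ?_) (Real.exp_pos _).le
  have := Lam_re_le hy s
  linarith

lemma continuousOn_hh {n : ℕ} (s : ℕ → ℕ → ℂ) (ε : ℝ) :
    ContinuousOn (hh s ε) (orderedSimplex n) := by
  unfold hh
  exact ((continuousOn_Lam s).sub (continuousOn_const.mul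
    (continuousOn_Lam 1).neg.cexp)).cexp

lemma integrableOn_of_bound {n : ℕ} {f : (Fin n → ℝ) → ℂ}
    (hf : ContinuousOn f (orderedSimplex n)) {K : ℝ} (hK : ∀ y ∈ orderedSimplex n, ‖f y‖ ≤ K) :
    IntegrableOn f (orderedSimplex n) := by
  refine IntegrableOn.of_bound (C := K) (volume_simplex n)
    (hf.aestronglyMeasurable (isOpen_simplex n).measurableSet) ?_
  exact (ae_restrict_iff' (isOpen_simplex n).measurableSet).2 (.of_forall hK)

lemma ibp_one {n : ℕ} (s : ℕ → ℕ → ℂ) {ε : ℝ} (hε : 0 < ε) (k : Fin n)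
    (V V' : (Fin n → ℝ) → ℝ) (C : ℝ)
    (hVc : ContinuousOn V (orderedSimplex n)) (hVc' : ContinuousOn V' (orderedSimplex n))
    (hVd : ∀ y ∈ orderedSimplex n, HasLineDerivAt ℝ V (V' y) y (Pi.single k (1 : ℝ)))
    (hVb : ∀ y ∈ orderedSimplex n, |V y| ≤ C * Real.exp (PP y))
    (hVb' : ∀ y ∈ orderedSimplex n, |V' y| ≤ C * Real.exp (PP y)) :
    IntegrableOn (fun y => V' y * hh s ε y + V y * (hh s ε y *
      (DLam s k y + ε * cexp (- Lam 1 y) * DLam 1 k y))) (orderedSimplex n) ∧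
    ∫ y in orderedSimplex n, (V' y * hh s ε y + V y * (hh s ε y *
      (DLam s k y + ε * cexp (- Lam 1 y) * DLam 1 k y))) = 0 := by
  set f' : (Fin n → ℝ) → ℂ := fun y => V' y * hh s ε y + V y * (hh s ε y *
      (DLam s k y + ε * cexp (- Lam 1 y) * DLam 1 k y)) with hf'
  set f : (Fin n → ℝ) → ℂ := fun y => V y * hh s ε y with hf
  have hms := (isOpen_simplex n).measurableSet
  have cV : ContinuousOn (fun y => (V y : ℂ)) (orderedSimplex n) :=
    Complex.continuous_ofReal.comp_continuousOn hVc
  have cV' : ContinuousOn (fun y => (V' y : ℂ)) (orderedSimplex n) :=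
    Complex.continuous_ofReal.comp_continuousOn hVc'
  have cf : ContinuousOn f (orderedSimplex n) := cV.mul (continuousOn_hh s ε)
  have cf' : ContinuousOn f' (orderedSimplex n) :=
    (cV'.mul (continuousOn_hh s ε)).add (cV.mul ((continuousOn_hh s ε).mul
      ((continuousOn_DLam s k).add ((continuousOn_const.mul
        (continuousOn_Lam 1).neg.cexp).mul (continuousOn_DLam 1 k)))))
  -- quadratic bound
  have bf : ∃ K, 0 ≤ K ∧ ∀ y ∈ orderedSimplex n, ‖f y‖ ≤ K * Real.exp (-PP y) ^ 2 := by
    obtain ⟨K, hK, h⟩ := hh_bound (n := n) s hε 3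
    refine ⟨|C| * K, by positivity, fun y hy => ?_⟩
    have h1 := h y hy
    have e1 : Real.exp (3 * PP y) = Real.exp (PP y) * Real.exp (PP y) ^ 2 := by
      rw [← Real.exp_nat_mul, ← Real.exp_add]; congr 1; push_cast; ring
    have e2 : Real.exp (PP y) ^ 2 * Real.exp (-PP y) ^ 2 = 1 := by
      rw [← mul_pow, ← Real.exp_add]; simp
    rw [hf, norm_mul, Complex.norm_real, Real.norm_eq_abs]
    calc |V y| * ‖hh s ε y‖ ≤ (|C| * Real.exp (PP y)) * ‖hh s ε y‖ := by
          refine mul_le_mul_of_nonneg_right ((hVb y hy).trans ?_) (norm_nonneg _)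
          exact mul_le_mul_of_nonneg_right (le_abs_self C) (Real.exp_pos _).le
      _ = |C| * (Real.exp (3 * PP y) * ‖hh s ε y‖) * Real.exp (-PP y) ^ 2 := by
          rw [e1]; linear_combination (-|C| * Real.exp (PP y) * ‖hh s ε y‖) * e2
      _ ≤ |C| * K * Real.exp (-PP y) ^ 2 := by gcongr
  have bf' : ∃ K, ∀ y ∈ orderedSimplex n, ‖f' y‖ ≤ K := by
    obtain ⟨K, hK, h⟩ := hh_bound (n := n) s hε 3
    set S1 := ∑ i ∈ range (n + 2), ∑ j ∈ range (n + 2), ‖s i j‖ with hS1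
    set S2 := ∑ i ∈ range (n + 2), ∑ j ∈ range (n + 2), ‖(1 : ℕ → ℕ → ℂ) i j‖ with hS2
    have hS1' : 0 ≤ S1 := sum_nonneg fun _ _ => sum_nonneg fun _ _ => norm_nonneg _
    have hS2' : 0 ≤ S2 := sum_nonneg fun _ _ => sum_nonneg fun _ _ => norm_nonneg _
    refine ⟨(|C| * (1 + (S1 + ε * S2))) * K, fun y hy => ?_⟩
    have h1 := h y hy
    have d1 := DLam_le hy s k
    have d2 := DLam_le hy 1 k
    rw [← hS1] at d1
    rw [← hS2] at d2
    have e1 : Real.exp (3 * PP y) = Real.exp (PP y) ^ 3 := by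
      rw [← Real.exp_nat_mul]; congr 1
    rw [e1] at h1
    set X := Real.exp (PP y) with hX
    have hX1 : 1 ≤ X := Real.one_le_exp (PP_nonneg hy)
    have n1 : ‖cexp (-Lam 1 y)‖ = X := by
      rw [Lam_one, ← Complex.ofReal_exp, Complex.norm_real, Real.norm_eq_abs,
        abs_of_pos (Real.exp_pos _)]
    have hv : |V y| ≤ |C| * X := (hVb y hy).trans (by gcongr; exact le_abs_self C)
    have hv' : |V' y| ≤ |C| * X := (hVb' y hy).trans (by gcongr; exact le_abs_self C)
    have hX13 : X ≤ X ^ 3 := le_self_pow₀ hX1 (by norm_num)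
    have hX23 : X ^ 2 ≤ X ^ 3 := pow_le_pow_right₀ hX1 (by norm_num)
    have t1 : ‖DLam s k y + ε * cexp (-Lam 1 y) * DLam 1 k y‖ ≤ S1 * X + ε * X * (S2 * X) := by
      refine (norm_add_le _ _).trans (add_le_add d1 ?_)
      rw [norm_mul, norm_mul, n1, Complex.norm_real, Real.norm_eq_abs, abs_of_pos hε]
      gcongr
    calc ‖f' y‖ ≤ |V' y| * ‖hh s ε y‖ + |V y| * (‖hh s ε y‖ *
          ‖DLam s k y + ε * cexp (-Lam 1 y) * DLam 1 k y‖) := by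
          refine (norm_add_le _ _).trans (le_of_eq ?_)
          simp only [norm_mul, Complex.norm_real, Real.norm_eq_abs]
      _ ≤ |C| * X * ‖hh s ε y‖ + (|C| * X) * (‖hh s ε y‖ * (S1 * X + ε * X * (S2 * X))) := by
          gcongr
      _ = (|C| * (X + (S1 * X ^ 2 + ε * S2 * X ^ 3))) * ‖hh s ε y‖ := by ring
      _ ≤ (|C| * (X ^ 3 + (S1 * X ^ 3 + ε * S2 * X ^ 3))) * ‖hh s ε y‖ := by
          gcongr
      _ = (|C| * (1 + (S1 + ε * S2))) * (X ^ 3 * ‖hh s ε y‖) := by ring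
      _ ≤ _ := by gcongr
  obtain ⟨K', hK'⟩ := bf'
  obtain ⟨K, hK0, hK⟩ := bf
  have if' : IntegrableOn f' (orderedSimplex n) := integrableOn_of_bound cf' hK'
  have if0 : IntegrableOn f (orderedSimplex n) := by
    refine integrableOn_of_bound cf (K := K) fun y hy => (hK y hy).trans ?_
    refine mul_le_of_le_one_right hK0 (pow_le_one₀ (Real.exp_pos _).le ?_)
    exact Real.exp_le_one_iff.2 (by linarith [PP_nonneg hy])
  refine ⟨if', ?_⟩
  have hD : ∀ y, HasLineDerivAt ℝ ((orderedSimplex n).indicator f)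
      ((orderedSimplex n).indicator f' y) y (Pi.single k (1 : ℝ)) := by
    intro y
    by_cases hy : y ∈ orderedSimplex n
    · have h1 := hVd y hy
      have h2 := hasLineDerivAt_hh s ε k hy
      rw [Set.indicator_of_mem hy]
      unfold HasLineDerivAt at h1 h2 ⊢
      have h3 := (h1.ofReal_comp).mul h2
      simp only [zero_smul, add_zero] at h3
      refine h3.congr_of_eventuallyEq ?_
      have hc : Filter.Tendsto (fun t : ℝ => y + t • Pi.single k (1 : ℝ)) (nhds 0) (nhds y) := by
        have : Continuous (fun t : ℝ => y + t • (Pi.single k (1 : ℝ) : Fin n → ℝ)) := by fun_prop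
        simpa using this.tendsto 0
      filter_upwards [hc.eventually ((isOpen_simplex n).mem_nhds hy)] with t ht
      rw [Set.indicator_of_mem (show y + t • Pi.single k (1 : ℝ) ∈ orderedSimplex n from ht)]
      rfl
    · rw [Set.indicator_of_notMem hy]
      obtain ⟨i, hi, hgap⟩ : ∃ i ≤ n, xn y i ≤ xn y (i + 1) := by
        by_contra! hcon
        exact hy (mem_of_gap hcon)
      have hb : ∀ t : ℝ, ‖(orderedSimplex n).indicator f (y + t • Pi.single k (1 : ℝ))‖ ≤
          K * ‖t - 0‖ ^ 2 := by
        intro t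
        by_cases ht : y + t • Pi.single k (1 : ℝ) ∈ orderedSimplex n
        · rw [Set.indicator_of_mem ht]
          refine (hK _ ht).trans ?_
          have g1 := exp_neg_PP_le ht (i := i) (j := i + 1) (by omega) (by omega) (by omega)
          have g2 := xn_gap ht hi
          rw [abs_of_pos (by linarith)] at g1
          rw [xn_line, xn_line] at g1
          have g3 : t * (dl i k - dl (i + 1) k) ≤ |t| := by
            refine (le_abs_self _).trans ?_
            rw [abs_mul]
            exact mul_le_of_le_one_right (abs_nonneg _) (dl_le _ _ _)
          have g4 : Real.exp (-PP (y + t • Pi.single k (1 : ℝ))) ≤ |t| := by linarith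
          rw [sub_zero, Real.norm_eq_abs]
          gcongr
        · rw [Set.indicator_of_notMem ht]; simp; positivity
      unfold HasLineDerivAt
      have := (Asymptotics.IsBigO.hasFDerivAt (𝕜 := ℝ)
        (f := fun t : ℝ => (orderedSimplex n).indicator f (y + t • Pi.single k (1 : ℝ)))
        (x₀ := 0) (n := 2) (Asymptotics.IsBigO.of_bound K (.of_forall fun t => by
          simpa using hb t)) (by norm_num)).hasDerivAt
      simpa using this
  have key := integral_bilinear_hasLineDerivAt_right_eq_neg_left_of_integrable
    (μ := (volume : Measure (Fin n → ℝ)))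
    (f := fun _ : Fin n → ℝ => (1 : ℂ)) (f' := fun _ => 0)
    (g := (orderedSimplex n).indicator f) (g' := (orderedSimplex n).indicator f')
    (v := Pi.single k (1 : ℝ)) (B := ContinuousLinearMap.mul ℝ ℂ)
    (by simp) (by simpa using if'.integrable_indicator hms)
    (by simpa using if0.integrable_indicator hms)
    (by intro x _; simp [HasLineDerivAt, hasDerivAt_const]) (fun x _ => hD x)
  simp only [ContinuousLinearMap.mul_apply', one_mul, zero_mul, integral_zero, neg_zero] at key
  rw [integral_indicator hms] at key
  exact key

end Selb
namespace Selb

open Finset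

lemma ibp {n : ℕ} (s : ℕ → ℕ → ℂ)
    (V V' : Fin n → (Fin n → ℝ) → ℝ) (C : ℝ)
    (hVc : ∀ k, ContinuousOn (V k) (orderedSimplex n))
    (hVc' : ∀ k, ContinuousOn (V' k) (orderedSimplex n))
    (hVd : ∀ k, ∀ y ∈ orderedSimplex n,
      HasLineDerivAt ℝ (V k) (V' k y) y (Pi.single k (1 : ℝ)))
    (hVb : ∀ k, ∀ y ∈ orderedSimplex n, |V k y| ≤ C * Real.exp (PP y))
    (hVb' : ∀ k, ∀ y ∈ orderedSimplex n, |V' k y| ≤ C * Real.exp (PP y))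
    (hB : ∃ B : ℝ, ∀ y ∈ orderedSimplex n,
      ‖∑ k, (V' k y : ℂ) + ∑ k, (V k y : ℂ) * DLam s k y‖ ≤ B)
    (hB1 : ∃ B : ℝ, ∀ y ∈ orderedSimplex n, ‖∑ k, (V k y : ℂ) * DLam 1 k y‖ ≤ B)
    (hint : IntegrableOn (fun y => cexp (Lam s y)) (orderedSimplex n)) :
    ∫ y in orderedSimplex n, cexp (Lam s y) *
      (∑ k, (V' k y : ℂ) + ∑ k, (V k y : ℂ) * DLam s k y) = 0 := by
  obtain ⟨B, hB⟩ := hB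
  obtain ⟨B1, hB1⟩ := hB1
  have hms := (isOpen_simplex n).measurableSet
  set T : (Fin n → ℝ) → ℂ := fun y => ∑ k, (V' k y : ℂ) + ∑ k, (V k y : ℂ) * DLam s k y with hT
  set T1 : (Fin n → ℝ) → ℂ := fun y => ∑ k, (V k y : ℂ) * DLam 1 k y with hT1
  have hV : ∀ k, ContinuousOn (fun y => (V k y : ℂ)) (orderedSimplex n) := fun k =>
    Complex.continuous_ofReal.comp_continuousOn (hVc k)
  have hV' : ∀ k, ContinuousOn (fun y => (V' k y : ℂ)) (orderedSimplex n) := fun k =>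
    Complex.continuous_ofReal.comp_continuousOn (hVc' k)
  have cT : ContinuousOn T (orderedSimplex n) :=
    (continuousOn_finsetSum _ fun k _ => hV' k).add
      (continuousOn_finsetSum _ fun k _ => (hV k).mul (continuousOn_DLam s k))
  have cT1 : ContinuousOn T1 (orderedSimplex n) :=
    (continuousOn_finsetSum _ fun k _ => (hV k).mul (continuousOn_DLam 1 k))
  set ep : ℕ → ℝ := fun N => 1 / ((N : ℝ) + 1) with hep
  have ep_pos : ∀ N, 0 < ep N := fun N => by simp only [hep]; positivity
  have ep_lim : Filter.Tendsto ep Filter.atTop (nhds 0) := tendsto_one_div_add_atTop_nhds_zero_nat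
  set F : ℕ → (Fin n → ℝ) → ℂ := fun N y => hh s (ep N) y *
    (T y + (ep N) * cexp (-Lam 1 y) * T1 y) with hF
  have h0 : ∀ N, ∫ y in orderedSimplex n, F N y = 0 := by
    intro N
    have h := fun k => ibp_one s (ep_pos N) k (V k) (V' k) C (hVc k) (hVc' k) (hVd k) (hVb k)
      (hVb' k)
    have e : ∀ y, F N y = ∑ k, (V' k y * hh s (ep N) y + V k y * (hh s (ep N) y *
      (DLam s k y + (ep N) * cexp (- Lam 1 y) * DLam 1 k y))) := by
      intro y
      simp only [hF, hT, hT1, mul_add, mul_sum, sum_add_distrib, add_assoc]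
      congr 1
      · exact sum_congr rfl fun k _ => by ring
      · congr 1
        · exact sum_congr rfl fun k _ => by ring
        · exact sum_congr rfl fun k _ => by ring
    simp only [e]
    rw [integral_finsetSum _ fun k _ => (h k).1]
    exact sum_eq_zero fun k _ => (h k).2
  have hlim : Filter.Tendsto (fun N => ∫ y in orderedSimplex n, F N y) Filter.atTop
      (nhds (∫ y in orderedSimplex n, cexp (Lam s y) * T y)) := by
    refine tendsto_integral_of_dominated_convergence
      (fun y => ‖cexp (Lam s y)‖ * (B + B1)) ?_ (hint.norm.mul_const _) ?_ ?_
    · intro N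
      refine ContinuousOn.aestronglyMeasurable ?_ hms
      exact (continuousOn_hh s _).mul (cT.add ((continuousOn_const.mul
        (continuousOn_Lam 1).neg.cexp).mul cT1))
    · intro N
      refine (ae_restrict_iff' hms).2 (.of_forall fun y hy => ?_)
      have b1 := hB y hy
      have b2 := hB1 y hy
      have hB0 : 0 ≤ B := (norm_nonneg _).trans b1
      have hB10 : 0 ≤ B1 := (norm_nonneg _).trans b2
      simp only [hF]
      rw [norm_mul, norm_hh, Complex.norm_exp, mul_assoc]
      refine mul_le_mul_of_nonneg_left ?_ (Real.exp_pos _).le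
      set X := Real.exp (PP y) with hX
      have n1 : ‖cexp (-Lam 1 y)‖ = X := by
        rw [Lam_one, ← Complex.ofReal_exp, Complex.norm_real, Real.norm_eq_abs,
          abs_of_pos (Real.exp_pos _)]
      have hX0 : 0 < X := Real.exp_pos _
      have hz : 0 ≤ ep N * X := mul_nonneg (ep_pos N).le hX0.le
      have hT' : ‖T y + (ep N) * cexp (-Lam 1 y) * T1 y‖ ≤ B + (ep N * X) * B1 := by
        refine (norm_add_le _ _).trans (add_le_add b1 ?_)
        rw [norm_mul, norm_mul, n1, Complex.norm_real, Real.norm_eq_abs, abs_of_pos (ep_pos N)]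
        gcongr
      have k1 : Real.exp (-ep N * X) ≤ 1 := Real.exp_le_one_iff.2 (by linarith)
      have k2 : Real.exp (-ep N * X) * (ep N * X) ≤ 1 := by
        have := Real.add_one_le_exp (ep N * X)
        rw [neg_mul, Real.exp_neg, inv_mul_le_iff₀ (Real.exp_pos _)]
        linarith
      calc _ ≤ Real.exp (-ep N * X) * (B + (ep N * X) * B1) := by gcongr
        _ = Real.exp (-ep N * X) * B + (Real.exp (-ep N * X) * (ep N * X)) * B1 := by ring
        _ ≤ 1 * B + 1 * B1 := by gcongr
        _ = _ := by ring
    · refine .of_forall fun y => ?_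
      have c : Filter.Tendsto (fun N => (ep N : ℂ)) Filter.atTop (nhds ((0 : ℝ) : ℂ)) :=
        (Complex.continuous_ofReal.tendsto 0).comp ep_lim
      have c2 : Continuous (fun e : ℂ => cexp (Lam s y - e * cexp (- Lam 1 y)) *
        (T y + e * cexp (-Lam 1 y) * T1 y)) := by fun_prop
      have := (c2.tendsto ((0 : ℝ) : ℂ)).comp c
      simpa [hF, hh, Function.comp_def] using this
  simp only [h0] at hlim
  exact (tendsto_nhds_unique hlim tendsto_const_nhds)

end Selb
namespace Selb

open Finset

/-- log distance -/
def LL {n : ℕ} (u v : ℕ) (y : Fin n → ℝ) : ℝ := Real.log (xn y u - xn y v)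

lemma LL_symm {n : ℕ} (u v : ℕ) (y : Fin n → ℝ) : LL u v y = LL v u y := by
  unfold LL; rw [← Real.log_neg_eq_log]; congr 1; ring

lemma LL_mono {n : ℕ} {y : Fin n → ℝ} (hy : y ∈ orderedSimplex n) {u v u' v' : ℕ}
    (h1 : u' ≤ u) (h2 : u < v) (h3 : v ≤ v') (h4 : v' ≤ n + 1) : LL u v y ≤ LL u' v' y := by
  unfold LL
  have a1 := xn_lt hy h2 (by omega)
  have a2 := xn_le hy h1 (by omega)
  have a3 := xn_le hy h3 h4
  exact Real.log_le_log (by linarith) (by linarith)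

lemma LL_nonpos {n : ℕ} {y : Fin n → ℝ} (hy : y ∈ orderedSimplex n) {i j : ℕ}
    (hi : i ≤ n + 1) (hj : j ≤ n + 1) : LL i j y ≤ 0 := log_nonpos' hy hi hj

lemma LL_ratio {n : ℕ} {y : Fin n → ℝ} (hy : y ∈ orderedSimplex n) {a b k : ℕ}
    (h1 : 1 ≤ a) (h2 : a < k) (h3 : k ≤ b) (h4 : b ≤ n + 1) :
    LL a k y - LL (a - 1) k y ≤ LL a b y - LL (a - 1) b y := by
  unfold LL
  have a1 := xn_lt hy (show a - 1 < a by omega) (by omega)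
  have a2 := xn_lt hy h2 (by omega)
  have a3 := xn_le hy h3 h4
  have e : Real.log (xn y a - xn y k) + Real.log (xn y (a - 1) - xn y b) ≤
      Real.log (xn y a - xn y b) + Real.log (xn y (a - 1) - xn y k) := by
    rw [← Real.log_mul (by linarith) (by linarith), ← Real.log_mul (by linarith) (by linarith)]
    refine Real.log_le_log (mul_pos (by linarith) (by linarith)) ?_
    nlinarith
  linarith

def Adm (c : (ℕ → ℕ → ℂ) → ℂ) : Prop :=
  ∀ q : ℂ × ℂ × ℂ → ℕ → ℕ → ℂ, (∀ i j p, AnalyticAt ℂ (fun p => q p i j) p) →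
    ∀ p, AnalyticAt ℂ (fun p => c (q p)) p

def Lin (n : ℕ) (Q : (ℕ → ℕ → ℤ) → Prop) (H : (ℕ → ℕ → ℂ) → (Fin n → ℝ) → ℂ) : Prop :=
  ∃ (ι : Type) (_ : Fintype ι) (c : ι → (ℕ → ℕ → ℂ) → ℂ) (sh : ι → ℕ → ℕ → ℤ),
    (∀ i, Adm (c i) ∧ Q (sh i)) ∧ ∀ s, ∀ y ∈ orderedSimplex n,
      H s y = ∑ i, c i s * ((Real.exp (lam (sh i) y) : ℝ) : ℂ)

lemma Lin.zero {n : ℕ} {Q : (ℕ → ℕ → ℤ) → Prop} : Lin n Q (fun _ _ => 0) :=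
  ⟨Empty, inferInstance, fun _ _ => 0, fun _ => 0, fun i => i.elim, fun s y _ => by simp⟩

lemma Lin.add {n : ℕ} {Q : (ℕ → ℕ → ℤ) → Prop} {H H' : (ℕ → ℕ → ℂ) → (Fin n → ℝ) → ℂ}
    (h : Lin n Q H) (h' : Lin n Q H') : Lin n Q (fun s y => H s y + H' s y) := by
  obtain ⟨ι, _, c, sh, h1, h2⟩ := h
  obtain ⟨ι', _, c', sh', h1', h2'⟩ := h'
  refine ⟨ι ⊕ ι', inferInstance, Sum.elim c c', Sum.elim sh sh', ?_, ?_⟩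
  · rintro (i | i)
    · exact h1 i
    · exact h1' i
  · intro s y hy
    beta_reduce
    rw [h2 s y hy, h2' s y hy, Fintype.sum_sum_type]; rfl

lemma Lin.sum {n : ℕ} {Q : (ℕ → ℕ → ℤ) → Prop} (S : Finset ℕ)
    {H : ℕ → (ℕ → ℕ → ℂ) → (Fin n → ℝ) → ℂ}
    (h : ∀ i ∈ S, Lin n Q (H i)) : Lin n Q (fun s y => ∑ i ∈ S, H i s y) := by
  classical
  induction S using Finset.induction_on with
  | empty => simpa using Lin.zero
  | insert a S ha ih =>
    simp only [sum_insert ha]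
    exact (h a (by simp)).add (ih fun i hi => h i (by simp [hi]))

lemma Lin.congr {n : ℕ} {Q : (ℕ → ℕ → ℤ) → Prop} {H H' : (ℕ → ℕ → ℂ) → (Fin n → ℝ) → ℂ}
    (h : Lin n Q H) (e : ∀ s, ∀ y ∈ orderedSimplex n, H' s y = H s y) : Lin n Q H' := by
  obtain ⟨ι, _, c, sh, h1, h2⟩ := h
  exact ⟨ι, inferInstance, c, sh, h1, fun s y hy => by rw [e s y hy, h2 s y hy]⟩

lemma Lin.single {n : ℕ} {Q : (ℕ → ℕ → ℤ) → Prop} {c : (ℕ → ℕ → ℂ) → ℂ} (hc : Adm c)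
    {sh : ℕ → ℕ → ℤ} (hs : Q sh) :
    Lin n Q (fun s y => c s * ((Real.exp (lam sh y) : ℝ) : ℂ)) :=
  ⟨Unit, inferInstance, fun _ => c, fun _ => sh, fun _ => ⟨hc, hs⟩, fun s y _ => by simp⟩

lemma Lin.bound {n : ℕ} {Q : (ℕ → ℕ → ℤ) → Prop} {H : (ℕ → ℕ → ℂ) → (Fin n → ℝ) → ℂ}
    (h : Lin n Q H) (hQ : ∀ sh, Q sh → ∀ y ∈ orderedSimplex n, lam sh y ≤ 0) (s : ℕ → ℕ → ℂ) :
    ∃ B : ℝ, ∀ y ∈ orderedSimplex n, ‖H s y‖ ≤ B := by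
  obtain ⟨ι, _, c, sh, h1, h2⟩ := h
  refine ⟨∑ i, ‖c i s‖, fun y hy => ?_⟩
  rw [h2 s y hy]
  refine (norm_sum_le _ _).trans (sum_le_sum fun i _ => ?_)
  rw [norm_mul, Complex.norm_real, Real.norm_eq_abs, abs_of_pos (Real.exp_pos _)]
  exact mul_le_of_le_one_right (norm_nonneg _) (Real.exp_le_one_iff.2 (hQ _ (h1 i).2 y hy))

lemma adm_const (z : ℂ) : Adm (fun _ => z) := fun _ _ _ => analyticAt_const
lemma adm_entry (i j : ℕ) : Adm (fun s => s i j) := fun _ hq p => hq i j p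
lemma Adm.neg {c : (ℕ → ℕ → ℂ) → ℂ} (h : Adm c) : Adm (fun s => - c s) :=
  fun q hq p => (h q hq p).fun_neg
lemma Adm.mul_const {c : (ℕ → ℕ → ℂ) → ℂ} (h : Adm c) (z : ℂ) : Adm (fun s => c s * z) :=
  fun q hq p => (h q hq p).fun_mul analyticAt_const

/-- configuration for a step -/
def Conf (n a b c o : ℕ) : Prop :=
  a < b ∧ ((c = a ∧ o = b + 1 ∧ b ≤ n) ∨ (c = b ∧ b = n + 1 ∧ o + 1 = a))

def QQ (n a b : ℕ) (sh : ℕ → ℕ → ℤ) : Prop :=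
  (1 ≤ a ∧ ∀ y ∈ orderedSimplex n, lam sh y ≤ LL a b y - LL (a - 1) b y) ∨
  (b ≤ n ∧ ∀ y ∈ orderedSimplex n, lam sh y ≤ LL a b y - LL a (b + 1) y)

lemma QQ_nonpos {n a b : ℕ} (hab : a < b) (hb : b ≤ n + 1) (sh : ℕ → ℕ → ℤ) (h : QQ n a b sh) :
    ∀ y ∈ orderedSimplex n, lam sh y ≤ 0 := by
  intro y hy
  rcases h with ⟨h1, h2⟩ | ⟨h1, h2⟩
  · have := LL_mono hy (show a - 1 ≤ a by omega) hab le_rfl hb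
    linarith [h2 y hy]
  · have := LL_mono hy (le_refl a) hab (show b ≤ b + 1 by omega) (by omega)
    linarith [h2 y hy]

def sh1 (c o k : ℕ) : ℕ → ℕ → ℤ := ee k c - ee c o
def sh2 (c o k l : ℕ) : ℕ → ℕ → ℤ := ee k c - ee c o + (ee k o - ee k l)

lemma lam_sh1 {n c o k : ℕ} (hc : c ≤ n + 1) (ho : o ≤ n + 1) (hk : k ≤ n + 1) (y : Fin n → ℝ) :
    lam (sh1 c o k) y = LL k c y - LL c o y := by
  rw [sh1, lam_sub, lam_ee _ hk hc, lam_ee _ hc ho]; rfl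

lemma lam_sh2 {n c o k l : ℕ} (hc : c ≤ n + 1) (ho : o ≤ n + 1) (hk : k ≤ n + 1) (hl : l ≤ n + 1)
    (y : Fin n → ℝ) :
    lam (sh2 c o k l) y = LL k c y - LL c o y + (LL k o y - LL k l y) := by
  rw [sh2, lam_add, lam_sub, lam_sub, lam_ee _ hk hc, lam_ee _ hc ho, lam_ee _ hk ho,
    lam_ee _ hk hl]; rfl

lemma QQ_sh1 {n a b c o k : ℕ} (h : Conf n a b c o) (hk : a ≤ k ∧ k ≤ b) (hkc : k ≠ c) :
    QQ n a b (sh1 c o k) := by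
  obtain ⟨hab, ⟨rfl, rfl, hb⟩ | ⟨rfl, rfl, ho⟩⟩ := h
  · right
    refine ⟨hb, fun y hy => ?_⟩
    rw [lam_sh1 (by omega) (by omega) (by omega), LL_symm k c]
    have := LL_mono hy (le_refl c) (show c < k by omega) hk.2 (by omega)
    linarith
  · left
    refine ⟨by omega, fun y hy => ?_⟩
    obtain rfl : o = a - 1 := by omega
    rw [lam_sh1 (by omega) (by omega) (by omega), LL_symm _ (a - 1)]
    have := LL_mono hy hk.1 (show k < n + 1 by omega) le_rfl (by omega)
    linarith

lemma QQ_sh2 {n a b c o k l : ℕ} (h : Conf n a b c o) (hk : a ≤ k ∧ k ≤ b) (hkc : k ≠ c)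
    (hl : ¬ (a ≤ l ∧ l ≤ b)) (hl' : l ≤ n + 1) : QQ n a b (sh2 c o k l) := by
  obtain ⟨hab, ⟨rfl, rfl, hb⟩ | ⟨rfl, rfl, ho⟩⟩ := h
  · by_cases hlc : l < c
    · left
      refine ⟨by omega, fun y hy => ?_⟩
      rw [lam_sh2 (by omega) (by omega) (by omega) (by omega), LL_symm k c, LL_symm k l]
      have h1 := LL_ratio hy (a := c) (k := k) (b := b) (by omega) (by omega) hk.2 (by omega)
      have h2 := LL_mono hy (show l ≤ c - 1 by omega) (show c - 1 < k by omega) le_rfl (by omega)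
      have h3 := LL_mono hy (show c ≤ k by omega) (show k < b + 1 by omega) le_rfl (by omega)
      linarith
    · right
      refine ⟨hb, fun y hy => ?_⟩
      rw [lam_sh2 (by omega) (by omega) (by omega) (by omega), LL_symm k c]
      have h1 := LL_mono hy (le_refl c) (show c < k by omega) hk.2 (by omega)
      have h2 := LL_mono hy (le_refl k) (show k < b + 1 by omega) (show b + 1 ≤ l by omega)
        (by omega)
      linarith
  · left
    refine ⟨by omega, fun y hy => ?_⟩
    obtain rfl : o = a - 1 := by omega
    rw [lam_sh2 (by omega) (by omega) (by omega) (by omega), LL_symm _ (a - 1),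
      LL_symm k (a - 1), LL_symm k l]
    have h1 := LL_mono hy hk.1 (show k < n + 1 by omega) le_rfl (by omega)
    have h2 := LL_mono hy (show l ≤ a - 1 by omega) (show a - 1 < k by omega) le_rfl (by omega)
    linarith

def rho {n : ℕ} (c o k : ℕ) (y : Fin n → ℝ) : ℝ := (xn y k - xn y c) / (xn y c - xn y o)

lemma exp_LL {n : ℕ} {y : Fin n → ℝ} (hy : y ∈ orderedSimplex n) {u v : ℕ} (huv : u < v)
    (hv : v ≤ n + 1) : Real.exp (LL u v y) = xn y u - xn y v := by
  unfold LL
  rw [Real.exp_log]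
  have := xn_lt hy huv hv
  linarith

lemma rho_eq {n a b c o k : ℕ} (h : Conf n a b c o) (hk : a ≤ k ∧ k ≤ b) (hkc : k ≠ c)
    {y : Fin n → ℝ} (hy : y ∈ orderedSimplex n) :
    rho c o k y = - Real.exp (lam (sh1 c o k) y) := by
  obtain ⟨hab, ⟨rfl, rfl, hb⟩ | ⟨rfl, rfl, ho⟩⟩ := h
  · rw [lam_sh1 (by omega) (by omega) (by omega), LL_symm k c, Real.exp_sub,
      exp_LL hy (by omega) (by omega), exp_LL hy (by omega) (by omega), rho, ← neg_div, neg_sub]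
  · rw [lam_sh1 (by omega) (by omega) (by omega), LL_symm _ o, Real.exp_sub,
      exp_LL hy (by omega) (by omega), exp_LL hy (by omega) (by omega), rho, ← neg_sub (xn y o),
      div_neg]

lemma Conf_le {n a b c o : ℕ} (h : Conf n a b c o) : c ≤ n + 1 ∧ o ≤ n + 1 ∧ b ≤ n + 1 ∧ a ≤ c ∧
    c ≤ b ∧ (o < a ∨ b < o) := by
  obtain ⟨hab, ⟨rfl, rfl, hb⟩ | ⟨rfl, rfl, ho⟩⟩ := h <;> omega

lemma exp_LL' {n : ℕ} {y : Fin n → ℝ} (hy : y ∈ orderedSimplex n) {u v : ℕ} (huv : u ≠ v)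
    (hu : u ≤ n + 1) (hv : v ≤ n + 1) : 
    xn y u - xn y v = (if u < v then 1 else -1) * Real.exp (LL u v y) := by
  split_ifs with h
  · rw [exp_LL hy h hv, one_mul]
  · rw [LL_symm, exp_LL hy (by omega) hu]; ring

lemma W_eq {n a b c o k l : ℕ} (h : Conf n a b c o) (hk : a ≤ k ∧ k ≤ b) (hkc : k ≠ c)
    (hl : ¬ (a ≤ l ∧ l ≤ b)) (hl' : l ≤ n + 1)
    {y : Fin n → ℝ} (hy : y ∈ orderedSimplex n) :
    rho c o k y * (xn y k - xn y o) / (xn y k - xn y l) =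
      (- ((if k < o then 1 else -1) / (if k < l then 1 else -1))) *
        Real.exp (lam (sh2 c o k l) y) := by
  have hh := Conf_le h
  rw [rho_eq h hk hkc hy, exp_LL' hy (u := k) (v := o) (by omega) (by omega) (by omega),
    exp_LL' hy (u := k) (v := l) (by rintro rfl; exact hl hk) (by omega) (by omega),
    lam_sh1 (by omega) (by omega) (by omega), lam_sh2 (by omega) (by omega) (by omega) (by omega),
    Real.exp_add, Real.exp_sub (LL k o y)]
  rw [mul_div_assoc, mul_div_mul_comm]; ring

lemma Lin_rho {n a b c o k : ℕ} (h : Conf n a b c o) (hk : a ≤ k ∧ k ≤ b)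
    {σ : (ℕ → ℕ → ℂ) → ℂ} (hσ : Adm σ) :
    Lin n (QQ n a b) (fun s y => σ s * ((rho c o k y : ℝ) : ℂ)) := by
  by_cases hkc : k = c
  · subst hkc
    refine Lin.zero.congr fun s y hy => ?_
    simp [rho]
  · refine (Lin.single hσ.neg (QQ_sh1 h hk hkc)).congr fun s y hy => ?_
    rw [rho_eq h hk hkc hy]; push_cast; ring

lemma Lin_W {n a b c o k l : ℕ} (h : Conf n a b c o) (hk : a ≤ k ∧ k ≤ b)
    (hl : ¬ (a ≤ l ∧ l ≤ b)) (hl' : l ≤ n + 1)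
    {σ : (ℕ → ℕ → ℂ) → ℂ} (hσ : Adm σ) :
    Lin n (QQ n a b) (fun s y => σ s *
      ((rho c o k y * (xn y k - xn y o) / (xn y k - xn y l) : ℝ) : ℂ)) := by
  by_cases hkc : k = c
  · subst hkc
    refine Lin.zero.congr fun s y hy => ?_
    simp [rho]
  · refine (Lin.single (hσ.mul_const (((- ((if k < o then 1 else -1) / (if k < l then 1 else -1))
      : ℝ)) : ℂ)) (QQ_sh2 h hk hkc hl hl')).congr fun s y hy => ?_
    rw [W_eq h hk hkc hl hl' hy]; push_cast; ring

end Selb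
namespace Selb

open Finset

def Vn {n : ℕ} (a b c o i : ℕ) (y : Fin n → ℝ) : ℝ :=
  if a ≤ i ∧ i ≤ b then rho c o i y * (xn y i - xn y o) else 0

def Vd {n : ℕ} (a b c o i : ℕ) (y : Fin n → ℝ) : ℝ :=
  if (a ≤ i ∧ i ≤ b) ∧ i ≠ c then 1 + 2 * rho c o i y else 0

def sJ (n a b : ℕ) (s : ℕ → ℕ → ℂ) : ℂ :=
  ∑ i ∈ range (n + 2), ∑ j ∈ range (n + 2),
    if (a ≤ i ∧ i ≤ b) ∧ (a ≤ j ∧ j ≤ b) ∧ i ≠ j then s i j else 0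

lemma Vn_ends {n a b c o : ℕ} (h : Conf n a b c o) (y : Fin n → ℝ) :
    Vn a b c o 0 y = 0 ∧ Vn a b c o (n + 1) y = 0 := by
  obtain ⟨hab, ⟨rfl, rfl, hb⟩ | ⟨rfl, rfl, ho⟩⟩ := h
  · constructor
    · unfold Vn; split_ifs with h
      · obtain rfl : c = 0 := by omega
        simp [rho]
      · rfl
    · unfold Vn; rw [if_neg (by omega)]
  · constructor
    · unfold Vn; rw [if_neg (by omega)]
    · unfold Vn; simp [rho]

lemma Vd_ends {n a b c o : ℕ} (h : Conf n a b c o) (y : Fin n → ℝ) :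
    Vd a b c o 0 y = 0 ∧ Vd a b c o (n + 1) y = 0 := by
  obtain ⟨hab, ⟨rfl, rfl, hb⟩ | ⟨rfl, rfl, ho⟩⟩ := h
  · constructor <;> (unfold Vd; rw [if_neg (by omega)])
  · constructor <;> (unfold Vd; rw [if_neg (by omega)])

lemma sum_ends {n : ℕ} (g : ℕ → ℝ) (h0 : g 0 = 0) (h1 : g (n + 1) = 0) :
    ∑ k : Fin n, g (k + 1) = ∑ i ∈ range (n + 2), g i := by
  rw [sum_range_succ, sum_range_succ', h0, h1, sum_range]; simp

lemma sum_dl {n : ℕ} (g : ℕ → ℝ) (h0 : g 0 = 0) (h1 : g (n + 1) = 0) {i : ℕ} (hi : i ≤ n + 1) :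
    ∑ k : Fin n, g (k + 1) * dl i k = g i := by
  by_cases hi0 : i = 0
  · subst hi0; simp [dl, h0]
  by_cases hi1 : i = n + 1
  · subst hi1
    rw [h1]; refine sum_eq_zero fun k _ => ?_
    simp [dl]; intro h; omega
  · rw [sum_eq_single ⟨i - 1, by omega⟩]
    · have : i - 1 + 1 = i := by omega
      simp [dl, this]
    · intro k _ hk
      have : ¬ i = k + 1 := by
        rintro rfl; apply hk; ext; simp
      simp [dl, this]
    · simp

def RR {n : ℕ} (a b c o : ℕ) (s : ℕ → ℕ → ℂ) (y : Fin n → ℝ) : ℂ :=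
  ∑ i ∈ range (n + 2), (if (a ≤ i ∧ i ≤ b) ∧ i ≠ c then 2 * ((rho c o i y : ℝ) : ℂ) else 0) +
  ∑ i ∈ range (n + 2), ∑ j ∈ range (n + 2),
    (if a ≤ i ∧ i ≤ b then
      (if a ≤ j ∧ j ≤ b then
        (if i = j then 0 else s i j * ((rho c o i y : ℝ) : ℂ) + s i j * ((rho c o j y : ℝ) : ℂ))
      else s i j * ((rho c o i y * (xn y i - xn y o) / (xn y i - xn y j) : ℝ) : ℂ))
    else
      (if a ≤ j ∧ j ≤ b then
        s i j * ((rho c o j y * (xn y j - xn y o) / (xn y j - xn y i) : ℝ) : ℂ)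
      else 0))

lemma Lin_RR {n a b c o : ℕ} (h : Conf n a b c o) : Lin n (QQ n a b) (RR a b c o) := by
  unfold RR
  refine Lin.add (Lin.sum _ fun i hi => ?_) (Lin.sum _ fun i hi => Lin.sum _ fun j hj => ?_)
  · split_ifs with h1
    · exact Lin_rho h h1.1 (adm_const 2)
    · exact Lin.zero
  · simp only [mem_range] at hi hj
    split_ifs with h1 h2 h3 h2
    · exact Lin.zero
    · exact (Lin_rho h h1 (adm_entry i j)).add (Lin_rho h h2 (adm_entry i j))
    · exact Lin_W h h1 h2 (by omega) (adm_entry i j)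
    · exact Lin_W h h2 h1 (by omega) (adm_entry i j)
    · exact Lin.zero

lemma sum_V_DLam {n a b c o : ℕ} (h : Conf n a b c o) (s : ℕ → ℕ → ℂ) (y : Fin n → ℝ) :
    ∑ k : Fin n, ((Vn a b c o (k + 1) y : ℝ) : ℂ) * DLam s k y =
    ∑ i ∈ range (n + 2), ∑ j ∈ range (n + 2),
      s i j * (((Vn a b c o i y - Vn a b c o j y) / (xn y i - xn y j) : ℝ) : ℂ) := by
  simp only [DLam, mul_sum]
  rw [sum_comm]
  refine sum_congr rfl fun i hi => ?_
  rw [sum_comm]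
  refine sum_congr rfl fun j hj => ?_
  simp only [mem_range] at hi hj
  have e1 := sum_dl (fun i => Vn a b c o i y) (Vn_ends h y).1 (Vn_ends h y).2
    (i := i) (by omega)
  have e2 := sum_dl (fun i => Vn a b c o i y) (Vn_ends h y).1 (Vn_ends h y).2
    (i := j) (by omega)
  rw [← e1, ← e2, ← sum_sub_distrib, sum_div, Complex.ofReal_sum, mul_sum]
  refine sum_congr rfl fun k _ => ?_
  push_cast; ring

lemma HH_eq {n a b c o : ℕ} (h : Conf n a b c o) (s : ℕ → ℕ → ℂ) {y : Fin n → ℝ}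
    (hy : y ∈ orderedSimplex n) :
    ∑ k : Fin n, ((Vd a b c o (k + 1) y : ℝ) : ℂ) +
      ∑ k : Fin n, ((Vn a b c o (k + 1) y : ℝ) : ℂ) * DLam s k y =
    (((b : ℂ) - a) + sJ n a b s) + RR a b c o s y := by
  have hc := Conf_le h
  have hab := h.1
  rw [sum_V_DLam h, ← Complex.ofReal_sum,
    sum_ends (fun i => Vd a b c o i y) (Vd_ends h y).1 (Vd_ends h y).2]
  have e1 : ((∑ i ∈ range (n + 2), Vd a b c o i y : ℝ) : ℂ) = ((b : ℂ) - a) +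
      ∑ i ∈ range (n + 2), (if (a ≤ i ∧ i ≤ b) ∧ i ≠ c then 2 * ((rho c o i y : ℝ) : ℂ) else 0) := by
    have : ((b : ℂ) - a) = ∑ i ∈ range (n + 2), (if (a ≤ i ∧ i ≤ b) ∧ i ≠ c then 1 else 0) := by
      rw [sum_ite, sum_const_zero, add_zero, sum_const, nsmul_eq_mul, mul_one]
      have : ({x ∈ range (n + 2) | (a ≤ x ∧ x ≤ b) ∧ x ≠ c}) = (Icc a b).erase c := by
        ext x; simp; omega
      rw [this, card_erase_of_mem (by simp; omega), Nat.card_Icc]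
      rw [show b + 1 - a - 1 = b - a by omega, Nat.cast_sub (by omega)]
    rw [this, ← sum_add_distrib, Complex.ofReal_sum]
    refine sum_congr rfl fun i _ => ?_
    unfold Vd
    split_ifs <;> simp
  have e2 : ∑ i ∈ range (n + 2), ∑ j ∈ range (n + 2),
      s i j * (((Vn a b c o i y - Vn a b c o j y) / (xn y i - xn y j) : ℝ) : ℂ) =
      sJ n a b s + ∑ i ∈ range (n + 2), ∑ j ∈ range (n + 2),
    (if a ≤ i ∧ i ≤ b then
      (if a ≤ j ∧ j ≤ b then
        (if i = j then 0 else s i j * ((rho c o i y : ℝ) : ℂ) + s i j * ((rho c o j y : ℝ) : ℂ))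
      else s i j * ((rho c o i y * (xn y i - xn y o) / (xn y i - xn y j) : ℝ) : ℂ))
    else
      (if a ≤ j ∧ j ≤ b then
        s i j * ((rho c o j y * (xn y j - xn y o) / (xn y j - xn y i) : ℝ) : ℂ)
      else 0)) := by
    unfold sJ
    rw [← sum_add_distrib]
    refine sum_congr rfl fun i hi => ?_
    rw [← sum_add_distrib]
    refine sum_congr rfl fun j hj => ?_
    simp only [mem_range] at hi hj
    by_cases h1 : a ≤ i ∧ i ≤ b
    · by_cases h2 : a ≤ j ∧ j ≤ b
      · by_cases h3 : i = j
        · subst h3; simp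
        · have hne := xn_sub_ne hy h3 (by omega) (by omega)
          have hco := xn_sub_ne hy (show c ≠ o by omega) (by omega) (by omega)
          have : (Vn a b c o i y - Vn a b c o j y) / (xn y i - xn y j) =
              1 + rho c o i y + rho c o j y := by
            simp only [Vn, h1, h2, and_self, if_true, rho]
            field_simp
            ring
          rw [this, if_pos ⟨h1, h2, h3⟩, if_pos h1, if_pos h2, if_neg h3]
          push_cast; ring
      · rw [if_neg (fun h => h2 h.2.1), if_pos h1, if_neg h2, zero_add]
        simp only [Vn, if_pos h1, if_neg h2, sub_zero]
    · by_cases h2 : a ≤ j ∧ j ≤ b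
      · rw [if_neg (fun h => h1 h.1), if_neg h1, if_pos h2, zero_add]
        simp only [Vn, if_pos h2, if_neg h1, zero_sub]
        rw [← neg_sub (xn y j), neg_div_neg_eq]
      · simp [Vn, h1, h2]
  rw [e1, e2, RR]; ring

lemma continuousOn_rho {n : ℕ} {c o i : ℕ} (hc : c ≤ n + 1) (ho : o ≤ n + 1) :
    ContinuousOn (fun y : Fin n → ℝ => rho c o i y) (orderedSimplex n) := by
  simp only [rho, div_eq_mul_inv]
  exact ((continuous_xn i).sub (continuous_xn c)).continuousOn.mul (continuousOn_inv hc ho)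

lemma rho_bound {n : ℕ} {c o i : ℕ} (hc : c ≤ n + 1) (ho : o ≤ n + 1) (hi : i ≤ n + 1)
    {y : Fin n → ℝ} (hy : y ∈ orderedSimplex n) : |rho c o i y| ≤ Real.exp (PP y) := by
  rw [rho, div_eq_mul_inv, abs_mul, ← one_mul (Real.exp _)]
  exact mul_le_mul (abs_sub_le_one hy hi hc) (inv_le_exp_PP hy hc ho) (abs_nonneg _) zero_le_one

lemma hasLineDerivAt_Vn {n a b c o : ℕ} (h : Conf n a b c o) (k : Fin n) {y : Fin n → ℝ}
    (hy : y ∈ orderedSimplex n) :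
    HasLineDerivAt ℝ (Vn a b c o (k + 1)) (Vd a b c o (k + 1) y) y (Pi.single k (1 : ℝ)) := by
  have hc := Conf_le h
  unfold HasLineDerivAt
  by_cases h1 : a ≤ (k : ℕ) + 1 ∧ (k : ℕ) + 1 ≤ b
  · by_cases h2 : (k : ℕ) + 1 = c
    · have e : ∀ y : Fin n → ℝ, Vn a b c o (k + 1) y = 0 := by
        intro y; simp [Vn, h2, rho]
      have e2 : Vd a b c o (k + 1) y = 0 := by simp [Vd, h2]
      simp only [e, e2]; exact hasDerivAt_const _ _
    · have h3 : (k : ℕ) + 1 ≠ o := by omega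
      have hco := xn_sub_ne hy (show c ≠ o by omega) (by omega) (by omega)
      have e2 : Vd a b c o (k + 1) y = 1 + 2 * rho c o (k + 1) y := by simp [Vd, h2, h1]
      have e : ∀ t : ℝ, Vn a b c o (k + 1) (y + t • Pi.single k (1 : ℝ)) =
          (xn y (k + 1) + t - xn y c) / (xn y c - xn y o) * (xn y (k + 1) + t - xn y o) := by
        intro t
        simp only [Vn, h1, and_self, if_true, rho, xn_line]
        have d1 : dl (n := n) (k + 1) k = 1 := by simp [dl]
        have d2 : dl (n := n) c k = 0 := by simp [dl]; omega
        have d3 : dl (n := n) o k = 0 := by simp [dl]; omega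
        simp [d1, d2, d3]
      simp only [e, e2]
      have i1 := (((hasDerivAt_id (0 : ℝ)).const_add (xn y (k + 1))).sub_const (xn y c)).div_const
        (xn y c - xn y o)
      have i2 := ((hasDerivAt_id (0 : ℝ)).const_add (xn y (k + 1))).sub_const (xn y o)
      convert! i1.fun_mul i2 using 1
      simp only [id, add_zero, rho]
      field_simp
      ring
  · have e : ∀ y : Fin n → ℝ, Vn a b c o (k + 1) y = 0 := by
      intro y; simp only [Vn, if_neg h1]
    have e2 : Vd a b c o (k + 1) y = 0 := by
      simp only [Vd]; rw [if_neg]; exact fun h => h1 h.1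
    simp only [e, e2]; exact hasDerivAt_const _ _

lemma step_integral {n a b c o : ℕ} (h : Conf n a b c o) (s : ℕ → ℕ → ℂ)
    (hint : IntegrableOn (fun y => cexp (Lam s y)) (orderedSimplex n)) :
    ∫ y in orderedSimplex n, cexp (Lam s y) *
      ((((b : ℂ) - a) + sJ n a b s) + RR a b c o s y) = 0 := by
  have hc := Conf_le h
  have hb : ∀ s : ℕ → ℕ → ℂ, ∃ B : ℝ, ∀ y ∈ orderedSimplex n,
      ‖∑ k : Fin n, ((Vd a b c o (k + 1) y : ℝ) : ℂ) +
      ∑ k : Fin n, ((Vn a b c o (k + 1) y : ℝ) : ℂ) * DLam s k y‖ ≤ B := by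
    intro s
    obtain ⟨B, hB⟩ := (Lin_RR h).bound (QQ_nonpos h.1 (by omega)) s
    refine ⟨‖((b : ℂ) - a) + sJ n a b s‖ + B, fun y hy => ?_⟩
    rw [HH_eq h s hy]
    exact (norm_add_le _ _).trans (add_le_add le_rfl (hB y hy))
  have key := ibp s (fun k => Vn a b c o (k + 1)) (fun k => Vd a b c o (k + 1)) 3
    ?_ ?_ (fun k y hy => hasLineDerivAt_Vn h k hy) ?_ ?_ (hb s) ?_ hint
  · rw [← key]
    refine setIntegral_congr_fun (isOpen_simplex n).measurableSet fun y hy => ?_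
    beta_reduce
    rw [HH_eq h s hy]
  · intro k
    unfold Vn
    split_ifs
    · exact (continuousOn_rho (by omega) (by omega)).mul
        ((continuous_xn _).sub (continuous_xn _)).continuousOn
    · exact continuousOn_const
  · intro k
    unfold Vd
    split_ifs
    · exact continuousOn_const.add (continuousOn_const.mul (continuousOn_rho (by omega) (by omega)))
    · exact continuousOn_const
  · intro k y hy
    have := k.2
    have h2 := Real.exp_pos (PP y)
    unfold Vn
    split_ifs
    · have h1 := rho_bound (c := c) (o := o) (i := k + 1) (by omega) (by omega) (by omega) hy
      rw [abs_mul]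
      have h3 := abs_sub_le_one hy (i := k + 1) (j := o) (by omega) (by omega)
      calc _ ≤ Real.exp (PP y) * 1 := mul_le_mul h1 h3 (abs_nonneg _) h2.le
        _ ≤ _ := by linarith
    · simp; positivity
  · intro k y hy
    have := k.2
    have h2 := Real.one_le_exp (PP_nonneg hy)
    unfold Vd
    split_ifs
    · have h1 := rho_bound (c := c) (o := o) (i := k + 1) (by omega) (by omega) (by omega) hy
      rw [abs_le] at h1 ⊢
      constructor <;> linarith [h1.1, h1.2]
    · simp; positivity
  · obtain ⟨B0, h0⟩ := hb 0
    obtain ⟨B1, h1⟩ := hb 1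
    refine ⟨B0 + B1, fun y hy => ?_⟩
    have h0 := h0 y hy
    have h1 := h1 y hy
    have e : ∀ k : Fin n, DLam 0 k y = 0 := fun k => by simp [DLam]
    simp only [e, mul_zero, sum_const_zero, add_zero] at h0
    calc _ = ‖(∑ k : Fin n, ((Vd a b c o (k + 1) y : ℝ) : ℂ) +
      ∑ k : Fin n, ((Vn a b c o (k + 1) y : ℝ) : ℂ) * DLam 1 k y) -
        ∑ k : Fin n, ((Vd a b c o (k + 1) y : ℝ) : ℂ)‖ := by rw [add_sub_cancel_left]
      _ ≤ _ := (norm_sub_le _ _).trans (by linarith)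

end Selb

namespace Selb

open Finset

def base (n : ℕ) (p : ℂ × ℂ × ℂ) : ℕ → ℕ → ℂ := fun i j =>
  if i < j then
    (if i = 0 then (if j = n + 1 then 0 else p.2.1) else
      (if j = n + 1 then p.1 else 2 * p.2.2))
  else 0

lemma sJ_add (n a b : ℕ) (s s' : ℕ → ℕ → ℂ) : sJ n a b (s + s') = sJ n a b s + sJ n a b s' := by
  unfold sJ
  simp only [← sum_add_distrib]
  refine sum_congr rfl fun i _ => sum_congr rfl fun j _ => ?_
  split_ifs <;> simp

lemma sJ_toC (n a b : ℕ) (m : ℕ → ℕ → ℤ) : ∃ z : ℤ, sJ n a b (toC m) = z := by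
  refine ⟨∑ i ∈ range (n + 2), ∑ j ∈ range (n + 2),
    if (a ≤ i ∧ i ≤ b) ∧ (a ≤ j ∧ j ≤ b) ∧ i ≠ j then m i j else 0, ?_⟩
  unfold sJ toC
  push_cast
  rfl

lemma sJ_tri (n a b : ℕ) (hb : b ≤ n + 1) (s : ℕ → ℕ → ℂ) (hs : ∀ i j, ¬ i < j → s i j = 0) :
    sJ n a b s = ∑ j ∈ Ico a (b + 1), ∑ i ∈ Ico a j, s i j := by
  unfold sJ
  rw [sum_comm]
  have h1 : Ico a (b + 1) = (range (n + 2)).filter (fun j => a ≤ j ∧ j ≤ b) := by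
    ext; simp; omega
  rw [h1, sum_filter]
  refine sum_congr rfl fun j hj => ?_
  split_ifs with h
  · have h2 : Ico a j = (range (n + 2)).filter (fun i => a ≤ i ∧ i < j) := by
      ext; simp; simp at hj; omega
    rw [h2, sum_filter]
    refine sum_congr rfl fun i hi => ?_
    by_cases h3 : a ≤ i ∧ i < j
    · rw [if_pos h3, if_pos (by omega)]
    · rw [if_neg h3]
      split_ifs with h4
      · exact hs _ _ (by omega)
      · rfl
  · refine sum_eq_zero fun i hi => ?_
    rw [if_neg (by tauto)]

lemma base_tri (n : ℕ) (p : ℂ × ℂ × ℂ) : ∀ i j, ¬ i < j → base n p i j = 0 := by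
  intro i j h; simp [base, h]

lemma tri_int (n a q : ℕ) (p : ℂ × ℂ × ℂ) (ha : 1 ≤ a) (hb : a + q ≤ n + 1) :
    ∑ j ∈ Ico a (a + q), ∑ i ∈ Ico a j, base n p i j = q * ((q : ℂ) - 1) * p.2.2 := by
  induction q with
  | zero => simp
  | succ q ih =>
    rw [← add_assoc, sum_Ico_succ_top (by omega), ih (by omega)]
    have : ∀ i ∈ Ico a (a + q), base n p i (a + q) = 2 * p.2.2 := by
      intro i hi
      simp at hi
      simp only [base]
      rw [if_pos (by omega), if_neg (by omega), if_neg (by omega)]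
    rw [sum_congr rfl this]
    simp
    ring

lemma tri_left (n q : ℕ) (p : ℂ × ℂ × ℂ) (hb : q ≤ n) :
    ∑ j ∈ Ico 0 (q + 1), ∑ i ∈ Ico 0 j, base n p i j =
      q * (p.2.1 + ((q : ℂ) - 1) * p.2.2) := by
  induction q with
  | zero => simp
  | succ q ih =>
    rw [sum_Ico_succ_top (by omega), ih (by omega), sum_eq_sum_Ico_succ_bot (by omega)]
    have : ∀ i ∈ Ico (0 + 1) (q + 1), base n p i (q + 1) = 2 * p.2.2 := by
      intro i hi
      simp at hi
      simp only [base]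
      rw [if_pos (by omega), if_neg (by omega), if_neg (by omega)]
    rw [sum_congr rfl this]
    have : base n p 0 (q + 1) = p.2.1 := by
      simp only [base]
      rw [if_pos (by omega), if_true, if_neg (by omega)]
    rw [this]
    simp
    ring

lemma tri_right (n a q : ℕ) (p : ℂ × ℂ × ℂ) (ha : 1 ≤ a) (hb : a + q = n + 1) :
    ∑ j ∈ Ico a (n + 1 + 1), ∑ i ∈ Ico a j, base n p i j =
      q * (p.1 + ((q : ℂ) - 1) * p.2.2) := by
  rw [sum_Ico_succ_top (by omega)]
  rw [← hb, tri_int n a q p ha (by omega)]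
  have : ∀ i ∈ Ico a (a + q), base n p i (a + q) = p.1 := by
    intro i hi
    simp at hi
    simp only [base]
    rw [if_pos (by omega), if_neg (by omega), if_pos (by omega)]
  rw [sum_congr rfl this]
  simp
  ring

lemma den_ne {n a b : ℕ} (hab : a < b) (hb : b ≤ n + 1) (hne : ¬ (a = 0 ∧ b = n + 1))
    {p : ℂ × ℂ × ℂ} (hp : p ∉ setA n) (m : ℕ → ℕ → ℤ) :
    ((b : ℂ) - a) + sJ n a b (base n p + toC m) ≠ 0 := by
  obtain ⟨z, hz⟩ := sJ_toC n a b m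
  rw [sJ_add, hz, sJ_tri n a b hb _ (base_tri n p)]
  intro h
  apply hp
  obtain ⟨k, rfl⟩ : ∃ k, b = a + k := ⟨b - a, by omega⟩
  rcases Nat.eq_zero_or_pos a with h0 | h0
  · subst h0
    rw [zero_add] at *
    rw [tri_left n k p (by omega)] at h
    refine Or.inl ⟨k, by omega, by omega, Or.inr ⟨-(k + z), ?_⟩⟩
    push_cast at h ⊢
    linear_combination h
  · by_cases hn : a + k = n + 1
    · rw [hn] at h
      rw [tri_right n a k p h0 hn] at h
      refine Or.inl ⟨k, by omega, by omega, Or.inl ⟨-(k + z), ?_⟩⟩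
      have : (a : ℂ) + k = n + 1 := by exact_mod_cast hn
      push_cast at h ⊢
      linear_combination h + this
    · rw [add_assoc, tri_int n a (k + 1) p h0 (by omega)] at h
      refine Or.inr ⟨k, by omega, by omega, -(k + z), ?_⟩
      push_cast at h ⊢
      linear_combination h

lemma base_analytic (n : ℕ) (m : ℕ → ℕ → ℤ) (i j : ℕ) (p : ℂ × ℂ × ℂ) :
    AnalyticAt ℂ (fun p => (base n p + toC m) i j) p := by
  simp only [Pi.add_apply]
  refine AnalyticAt.add ?_ analyticAt_const
  unfold base
  split_ifs
  · exact analyticAt_const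
  · exact (analyticAt_fst (𝕜 := ℂ)).comp analyticAt_snd
  · exact analyticAt_fst
  · exact analyticAt_const.mul ((analyticAt_snd (𝕜 := ℂ)).comp analyticAt_snd)
  · exact analyticAt_const

lemma sJ_analytic (n a b : ℕ) (m : ℕ → ℕ → ℤ) (p : ℂ × ℂ × ℂ) :
    AnalyticAt ℂ (fun p => sJ n a b (base n p + toC m)) p := by
  unfold sJ
  refine Finset.analyticAt_fun_sum _ fun i _ => Finset.analyticAt_fun_sum _ fun j _ => ?_
  split_ifs
  · exact base_analytic n m i j p
  · exact analyticAt_const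

def KK {n : ℕ} (m : ℕ → ℕ → ℤ) (p : ℂ × ℂ × ℂ) (y : Fin n → ℝ) : ℂ :=
  cexp (Lam (base n p + toC m) y)

def EE (n : ℕ) (m : ℕ → ℕ → ℤ) (p : ℂ × ℂ × ℂ) : ℂ := ∫ y in orderedSimplex n, KK m p y

def Int (n : ℕ) (m : ℕ → ℕ → ℤ) (p : ℂ × ℂ × ℂ) : Prop :=
  IntegrableOn (fun y => KK m p y) (orderedSimplex n)

lemma KK_cont {n : ℕ} (m : ℕ → ℕ → ℤ) (p : ℂ × ℂ × ℂ) :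
    ContinuousOn (fun y : Fin n → ℝ => KK m p y) (orderedSimplex n) :=
  (continuousOn_Lam _).cexp

lemma KK_norm {n : ℕ} (m : ℕ → ℕ → ℤ) (p : ℂ × ℂ × ℂ) (y : Fin n → ℝ) :
    ‖KK m p y‖ = Real.exp ((Lam (base n p) y).re + lam m y) := by
  unfold KK
  rw [Complex.norm_exp, Lam_add, Lam_toC]; simp

lemma KK_shift {n : ℕ} (m m' : ℕ → ℕ → ℤ) (p : ℂ × ℂ × ℂ) (y : Fin n → ℝ) :
    KK (m + m') p y = KK m p y * ((Real.exp (lam m' y) : ℝ) : ℂ) := by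
  unfold KK
  rw [Lam_add, Lam_add, Lam_toC, Lam_toC, lam_add, Complex.ofReal_exp, ← Complex.exp_add]
  congr 1; push_cast; ring

lemma Int_mono {n : ℕ} {m m' : ℕ → ℕ → ℤ} {p p' : ℂ × ℂ × ℂ} (h : Int n m p)
    (hm : ∀ y ∈ orderedSimplex n, (Lam (base n p') y).re + lam m' y ≤
      (Lam (base n p) y).re + lam m y) :
    Int n m' p' := by
  unfold Int at *
  refine Integrable.mono h ((KK_cont m' p').aestronglyMeasurable (isOpen_simplex n).measurableSet) ?_
  refine (ae_restrict_iff' (isOpen_simplex n).measurableSet).2 (ae_of_all _ fun y hy => ?_)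
  rw [KK_norm, KK_norm]
  exact Real.exp_le_exp.2 (hm y hy)

lemma Int_mono' {n : ℕ} {m m' : ℕ → ℕ → ℤ} {p : ℂ × ℂ × ℂ} (h : Int n m p)
    (hm : ∀ y ∈ orderedSimplex n, lam m' y ≤ lam m y) : Int n m' p :=
  Int_mono h fun y hy => by linarith [hm y hy]

def Rep (n : ℕ) (φ : (Fin n → ℝ) → ℝ) : Prop :=
  ∀ m : ℕ → ℕ → ℤ, ∃ (ι : Type) (_ : Fintype ι) (c : ι → ℂ × ℂ × ℂ → ℂ) (m' : ι → ℕ → ℕ → ℤ),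
    (∀ i, AnalyticOnNhd ℂ (c i) (setA n)ᶜ) ∧
    (∀ i, ∀ y ∈ orderedSimplex n, lam (m' i) y ≤ lam m y + φ y) ∧
    ∀ p, p ∉ setA n → Int n m p → EE n m p = ∑ i, c i p * EE n (m' i) p

lemma Rep.zero {n : ℕ} {φ : (Fin n → ℝ) → ℝ} (h : ∀ y ∈ orderedSimplex n, 0 ≤ φ y) : Rep n φ := by
  intro m
  exact ⟨Unit, inferInstance, fun _ _ => 1, fun _ => m, fun _ _ _ => analyticAt_const,
    fun _ y hy => by linarith [h y hy], fun p _ _ => by simp⟩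

lemma Rep.comp {n : ℕ} {φ ψ χ : (Fin n → ℝ) → ℝ} (hφ : Rep n φ) (hψ : Rep n ψ)
    (h0 : ∀ y ∈ orderedSimplex n, φ y ≤ 0)
    (h : ∀ y ∈ orderedSimplex n, φ y + ψ y ≤ χ y) : Rep n χ := by
  intro m
  obtain ⟨ι, _, c, m', h1, h2, h3⟩ := hφ m
  choose κ fκ d m'' g1 g2 g3 using fun i => hψ (m' i)
  refine ⟨Σ i, κ i, inferInstance, fun x p => c x.1 p * d x.1 x.2 p, fun x => m'' x.1 x.2,
    fun x p hp => (h1 x.1 p hp).mul (g1 x.1 x.2 p hp), ?_, ?_⟩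
  · intro x y hy
    linarith [h y hy, h2 x.1 y hy, g2 x.1 x.2 y hy]
  · intro p hp hi
    rw [h3 p hp hi, Fintype.sum_sigma]
    refine sum_congr rfl fun i _ => ?_
    rw [g3 i p hp (Int_mono' hi fun y hy => by linarith [h0 y hy, h2 i y hy]), mul_sum]
    refine sum_congr rfl fun j _ => by ring

/-- one IBP step -/
lemma step {n a b : ℕ} (hab : a < b) (hb : b ≤ n + 1) (hne : ¬ (a = 0 ∧ b = n + 1))
    (m : ℕ → ℕ → ℤ) :
    ∃ (ι : Type) (_ : Fintype ι) (c : ι → ℂ × ℂ × ℂ → ℂ) (sh : ι → ℕ → ℕ → ℤ),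
    (∀ i, AnalyticOnNhd ℂ (c i) (setA n)ᶜ) ∧
    (∀ i, QQ n a b (sh i)) ∧
    ∀ p, p ∉ setA n → Int n m p → EE n m p = ∑ i, c i p * EE n (m + sh i) p := by
  obtain ⟨c0, o0, hC⟩ : ∃ c o, Conf n a b c o := by
    by_cases h : b ≤ n
    · exact ⟨a, b + 1, hab, Or.inl ⟨rfl, rfl, h⟩⟩
    · exact ⟨b, a - 1, hab, Or.inr ⟨rfl, by omega, by omega⟩⟩
  obtain ⟨ι, hι, c, sh, h1, h2⟩ := Lin_RR hC
  refine ⟨ι, hι, fun i p => - c i (base n p + toC m) *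
    (((b : ℂ) - a) + sJ n a b (base n p + toC m))⁻¹, sh, ?_, fun i => (h1 i).2, ?_⟩
  · intro i p hp
    refine AnalyticAt.mul (AnalyticAt.neg ?_) (AnalyticAt.inv ?_ (den_ne hab hb hne hp m))
    · exact (h1 i).1 (fun p => base n p + toC m) (base_analytic n m) p
    · exact analyticAt_const.add (sJ_analytic n a b m p)
  · intro p hp hi
    have key := step_integral hC (base n p + toC m) hi
    have hd := den_ne hab hb hne hp m
    set D := ((b : ℂ) - a) + sJ n a b (base n p + toC m) with hD
    have hii : ∀ i, Int n (m + sh i) p := fun i => Int_mono' hi fun y hy => by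
      rw [lam_add]; linarith [QQ_nonpos hab hb _ (h1 i).2 y hy]
    have e : ∫ y in orderedSimplex n, cexp (Lam (base n p + toC m) y) *
        (D + RR a b c0 o0 (base n p + toC m) y) =
        ∫ y in orderedSimplex n, (KK m p y * D +
          ∑ i, KK (m + sh i) p y * c i (base n p + toC m)) := by
      refine setIntegral_congr_fun (isOpen_simplex n).measurableSet fun y hy => ?_
      rw [h2 _ y hy, mul_add, mul_sum]
      congr 1
      refine sum_congr rfl fun i _ => ?_
      rw [KK_shift]
      unfold KK
      ring
    rw [e, integral_add (Integrable.mul_const hi D)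
      (integrable_finsetSum _ fun i _ => (Integrable.mul_const (hii i) _)),
      integral_finsetSum _ fun i _ => (Integrable.mul_const (hii i) _), integral_mul_const] at key
    simp only [integral_mul_const] at key
    change EE n m p * D + ∑ i, EE n (m + sh i) p * c i (base n p + toC m) = 0 at key
    have : EE n m p * D = - ∑ i, EE n (m + sh i) p * c i (base n p + toC m) := by
      linear_combination key
    rw [← mul_left_inj' hd, this, sum_mul, ← sum_neg_distrib]
    refine sum_congr rfl fun i _ => ?_
    simp only [← hD]
    field_simp

lemma Rep_LL {n : ℕ} : ∀ k a b : ℕ, n + 1 - (b - a) = k → a < b → b ≤ n + 1 → Rep n (LL a b) := by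
  intro k
  induction k with
  | zero =>
    intro a b hk hab hb
    have ha : a = 0 := by omega
    have hb : b = n + 1 := by omega
    subst ha hb
    refine Rep.zero fun y hy => ?_
    simp [LL, xn_zero, xn_last]
  | succ k ih =>
    intro a b hk hab hb
    have hL : Rep n (fun y => if 1 ≤ a then LL (a - 1) b y else 0) := by
      split_ifs with h
      · exact ih (a - 1) b (by omega) (by omega) hb
      · exact Rep.zero fun y _ => le_rfl
    have hR : Rep n (fun y => if b ≤ n then LL a (b + 1) y else 0) := by
      split_ifs with h
      · exact ih a (b + 1) (by omega) (by omega) (by omega)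
      · exact Rep.zero fun y _ => le_rfl
    intro m
    obtain ⟨ι, _, c, sh, h1, h2, h3⟩ := step hab hb (by omega) m
    have hx : ∀ i, ∃ (κ : Type) (_ : Fintype κ) (d : κ → ℂ × ℂ × ℂ → ℂ) (m' : κ → ℕ → ℕ → ℤ),
      (∀ j, AnalyticOnNhd ℂ (d j) (setA n)ᶜ) ∧
      (∀ j, ∀ y ∈ orderedSimplex n, lam (m' j) y ≤ lam m y + LL a b y) ∧
      ∀ p, p ∉ setA n → Int n (m + sh i) p →
        EE n (m + sh i) p = ∑ j, d j p * EE n (m' j) p := by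
      intro i
      rcases h2 i with ⟨q1, q2⟩ | ⟨q1, q2⟩
      · obtain ⟨κ, fκ, d, m', g1, g2, g3⟩ := hL (m + sh i)
        refine ⟨κ, fκ, d, m', g1, fun j y hy => ?_, g3⟩
        have := g2 j y hy
        simp only [lam_add, if_pos q1] at this
        linarith [q2 y hy]
      · obtain ⟨κ, fκ, d, m', g1, g2, g3⟩ := hR (m + sh i)
        refine ⟨κ, fκ, d, m', g1, fun j y hy => ?_, g3⟩
        have := g2 j y hy
        simp only [lam_add, if_pos q1] at this
        linarith [q2 y hy]
    choose κ fκ d m'' g1 g2 g3 using hx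
    refine ⟨Σ i, κ i, inferInstance, fun x p => c x.1 p * d x.1 x.2 p, fun x => m'' x.1 x.2,
      fun x p hp => (h1 x.1 p hp).mul (g1 x.1 x.2 p hp), fun x y hy => g2 x.1 x.2 y hy, ?_⟩
    intro p hp hi
    rw [h3 p hp hi, Fintype.sum_sigma]
    refine sum_congr rfl fun i _ => ?_
    rw [g3 i p hp (Int_mono' hi fun y hy => by
      rw [lam_add]; linarith [QQ_nonpos hab hb _ (h2 i) y hy]), mul_sum]
    refine sum_congr rfl fun j _ => by ring

lemma Rep_LL' {n i j : ℕ} (hi : i ≤ n + 1) (hj : j ≤ n + 1) : Rep n (LL i j) := by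
  rcases lt_trichotomy i j with h | h | h
  · exact Rep_LL _ i j rfl h hj
  · subst h
    exact Rep.zero fun y _ => by simp [LL]
  · have := Rep_LL (n := n) _ j i rfl h hi
    have e : LL (n := n) i j = LL j i := by ext y; exact LL_symm i j y
    rw [e]; exact this

lemma Rep.sum {n : ℕ} {ι : Type*} (s : Finset ι) (φ : ι → (Fin n → ℝ) → ℝ)
    (h : ∀ i ∈ s, Rep n (φ i)) (h0 : ∀ i ∈ s, ∀ y ∈ orderedSimplex n, φ i y ≤ 0) :
    Rep n (fun y => ∑ i ∈ s, φ i y) := by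
  classical
  induction s using Finset.induction_on with
  | empty => exact Rep.zero fun y _ => by simp
  | insert i s hi ih =>
    refine Rep.comp (h i (mem_insert_self _ _)) (ih (fun j hj => h j (mem_insert_of_mem hj))
      (fun j hj => h0 j (mem_insert_of_mem hj))) (h0 i (mem_insert_self _ _)) fun y _ => ?_
    rw [sum_insert hi]

lemma Rep_one (n : ℕ) : Rep n (fun y => lam 1 y) := by
  have : (fun y : Fin n → ℝ => lam 1 y) =
      fun y => ∑ i ∈ range (n + 2), ∑ j ∈ range (n + 2), LL i j y := by
    ext y; simp [lam, LL]
  rw [this]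
  have hn : ∀ i ∈ range (n + 2), ∀ j ∈ range (n + 2), ∀ y ∈ orderedSimplex n, LL i j y ≤ 0 :=
    fun i hi j hj y hy => LL_nonpos hy (by simp at hi; omega) (by simp at hj; omega)
  refine Rep.sum _ _ (fun i hi => Rep.sum _ _ (fun j hj => ?_) (hn i hi)) fun i hi y hy =>
    sum_nonpos fun j hj => hn i hi j hj y hy
  exact Rep_LL' (by simp at hi; omega) (by simp at hj; omega)

end Selb

namespace Selb

open Finset

lemma analyticAt_param {X : Type*} [MeasurableSpace X] {μ : Measure X} {V : Type*}
    [NormedAddCommGroup V] [NormedSpace ℂ V] (L : X → V →L[ℂ] ℂ)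
    (hL : AEStronglyMeasurable L μ) (w : X → ℂ) (hw : AEStronglyMeasurable w μ) {r : NNReal}
    (hr : 0 < r) (hint : Integrable (fun x => ‖w x‖ * Real.exp (r * ‖L x‖)) μ) :
    AnalyticAt ℂ (fun v => ∫ x, w x * cexp (L x v) ∂μ) 0 := by
  let T : ∀ k : ℕ, X → ContinuousMultilinearMap ℂ (fun _ : Fin k => V) ℂ := fun k x =>
    (w x / (k.factorial : ℂ)) •
      (ContinuousMultilinearMap.mkPiAlgebraFin ℂ k ℂ).compContinuousLinearMap (fun _ => L x)
  have hTm : ∀ k, AEStronglyMeasurable (T k) μ := by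
    intro k
    refine AEStronglyMeasurable.smul ((continuous_id.div_const _).comp_aestronglyMeasurable hw) ?_
    have hc : Continuous (fun l : V →L[ℂ] ℂ =>
        (ContinuousMultilinearMap.mkPiAlgebraFin ℂ k ℂ).compContinuousLinearMap
          (fun _ : Fin k => l)) := by
      have h1 := (ContinuousMultilinearMap.compContinuousLinearMapContinuousMultilinear ℂ
        (fun _ : Fin k => V) (fun _ : Fin k => ℂ) ℂ).cont
      have h2 : Continuous (fun l : V →L[ℂ] ℂ => (fun _ : Fin k => l)) := by fun_prop
      have h3 := h1.comp h2
      exact (ContinuousLinearMap.apply ℂ _ 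
        (ContinuousMultilinearMap.mkPiAlgebraFin ℂ k ℂ)).continuous.comp h3
    exact hc.comp_aestronglyMeasurable hL
  have hTn : ∀ k x, ‖T k x‖ ≤ ‖w x‖ * (‖L x‖ ^ k / k.factorial) := by
    intro k x
    have := ContinuousMultilinearMap.norm_compContinuousLinearMap_le
      (ContinuousMultilinearMap.mkPiAlgebraFin ℂ k ℂ) (fun _ : Fin k => L x)
    rw [ContinuousMultilinearMap.norm_mkPiAlgebraFin, one_mul] at this
    simp only [prod_const, card_univ, Fintype.card_fin] at this
    simp only [T, norm_smul, norm_div, Complex.norm_natCast]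
    calc _ ≤ ‖w x‖ / k.factorial * ‖L x‖ ^ k := by gcongr
      _ = _ := by ring
  have hs : ∀ x, HasSum (fun k : ℕ => ‖w x‖ * ((r * ‖L x‖) ^ k / k.factorial))
      (‖w x‖ * Real.exp (r * ‖L x‖)) := by
    intro x
    refine HasSum.mul_left _ ?_
    rw [Real.exp_eq_exp_ℝ]
    exact NormedSpace.expSeries_div_hasSum_exp (r * ‖L x‖ : ℝ)
  have hterm : ∀ k x, ‖w x‖ * ((r * ‖L x‖) ^ k / k.factorial) ≤
      ‖w x‖ * Real.exp (r * ‖L x‖) := by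
    intro k x
    exact le_hasSum (hs x) k fun j _ => by positivity
  have hTr : ∀ k x, ‖T k x‖ * r ^ k ≤ ‖w x‖ * ((r * ‖L x‖) ^ k / k.factorial) := by
    intro k x
    calc _ ≤ ‖w x‖ * (‖L x‖ ^ k / k.factorial) * r ^ k := by gcongr; exact hTn k x
      _ = _ := by rw [mul_pow]; ring
  have hTi : ∀ k, Integrable (T k) μ := by
    intro k
    refine Integrable.mono' (hint.mul_const (((r : ℝ) ^ k)⁻¹)) (hTm k) (ae_of_all _ fun x => ?_)
    rw [le_mul_inv_iff₀ (by positivity)]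
    exact (hTr k x).trans (hterm k x)
  let P : FormalMultilinearSeries ℂ V ℂ := fun k => ∫ x, T k x ∂μ
  refine ⟨P, r, ?_, by simpa using hr, ?_⟩
  · refine P.le_radius_of_bound (∫ x, ‖w x‖ * Real.exp (r * ‖L x‖) ∂μ) fun k => ?_
    calc ‖P k‖ * (r : ℝ) ^ k ≤ (∫ x, ‖T k x‖ ∂μ) * r ^ k := by
          gcongr; exact norm_integral_le_integral_norm _
      _ = ∫ x, ‖T k x‖ * r ^ k ∂μ := (integral_mul_const _ _).symm
      _ ≤ _ := integral_mono ((hTi k).norm.mul_const _) hint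
          fun x => (hTr k x).trans (hterm k x)
  · intro v hv
    rw [zero_add]
    have hv' : ‖v‖ ≤ r := by
      simp only [Metric.mem_eball, edist_zero_right] at hv
      have : (‖v‖₊ : ENNReal) < r := hv
      exact_mod_cast this.le
    have hPv : ∀ k, (P k fun _ => v) = ∫ x, w x * ((L x v) ^ k / k.factorial) ∂μ := by
      intro k
      change (∫ x, T k x ∂μ) (fun _ => v) = _
      rw [ContinuousMultilinearMap.integral_apply (hTi k)]
      congr 1
      ext x
      simp [T]
      ring
    simp only [hPv]
    refine hasSum_integral_of_dominated_convergence
      (fun k x => ‖w x‖ * ((r * ‖L x‖) ^ k / k.factorial)) ?_ ?_ ?_ ?_ ?_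
    · intro k
      refine hw.mul ((((ContinuousLinearMap.apply ℂ ℂ v).continuous.pow k).div_const _).comp_aestronglyMeasurable hL)
    · intro k
      refine ae_of_all _ fun x => ?_
      rw [norm_mul, norm_div, norm_pow, Complex.norm_natCast]
      gcongr
      calc ‖L x v‖ ≤ ‖L x‖ * ‖v‖ := (L x).le_opNorm v
        _ ≤ ‖L x‖ * r := by gcongr
        _ = _ := by ring
    · exact ae_of_all _ fun x => (hs x).summable
    · simpa only [(hs _).tsum_eq] using hint
    · refine ae_of_all _ fun x => HasSum.mul_left _ ?_
      rw [Complex.exp_eq_exp_ℂ]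
      exact NormedSpace.expSeries_div_hasSum_exp (L x v)

def mA (n : ℕ) : ℕ → ℕ → ℤ := fun i j => if i < j then
    (if i = 0 then 0 else (if j = n + 1 then 1 else 0)) else 0
def mB (n : ℕ) : ℕ → ℕ → ℤ := fun i j => if i < j then
    (if i = 0 then (if j = n + 1 then 0 else 1) else 0) else 0
def mC (n : ℕ) : ℕ → ℕ → ℤ := fun i j => if i < j then
    (if i = 0 then 0 else (if j = n + 1 then 0 else 2)) else 0

lemma Lam_base {n : ℕ} (p : ℂ × ℂ × ℂ) (y : Fin n → ℝ) :
    Lam (base n p) y = p.1 * (lam (mA n) y : ℝ) + p.2.1 * (lam (mB n) y : ℝ) +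
      p.2.2 * (lam (mC n) y : ℝ) := by
  simp only [← Lam_toC]
  simp only [Lam, mul_sum, ← sum_add_distrib]
  refine sum_congr rfl fun i _ => sum_congr rfl fun j _ => ?_
  simp only [base, toC, mA, mB, mC]
  split_ifs <;> simp <;> ring

lemma lam_nonpos {n : ℕ} {m : ℕ → ℕ → ℤ} (hm : ∀ i j, 0 ≤ m i j) {y : Fin n → ℝ}
    (hy : y ∈ orderedSimplex n) : lam m y ≤ 0 := by
  unfold lam
  refine sum_nonpos fun i hi => sum_nonpos fun j hj => ?_
  refine mul_nonpos_of_nonneg_of_nonpos (by exact_mod_cast hm i j)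
    (log_nonpos' hy (by simp at hi; omega) (by simp at hj; omega))

lemma lamA_nonpos {n : ℕ} {y : Fin n → ℝ} (hy : y ∈ orderedSimplex n) : lam (mA n) y ≤ 0 :=
  lam_nonpos (fun i j => by unfold mA; split_ifs <;> simp) hy
lemma lamB_nonpos {n : ℕ} {y : Fin n → ℝ} (hy : y ∈ orderedSimplex n) : lam (mB n) y ≤ 0 :=
  lam_nonpos (fun i j => by unfold mB; split_ifs <;> simp) hy
lemma lamC_nonpos {n : ℕ} {y : Fin n → ℝ} (hy : y ∈ orderedSimplex n) : lam (mC n) y ≤ 0 :=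
  lam_nonpos (fun i j => by unfold mC; split_ifs <;> simp) hy

def Lv {n : ℕ} (y : Fin n → ℝ) : (ℂ × ℂ × ℂ) →L[ℂ] ℂ :=
  ((lam (mA n) y : ℝ) : ℂ) • ContinuousLinearMap.fst ℂ ℂ (ℂ × ℂ) +
  ((lam (mB n) y : ℝ) : ℂ) • (ContinuousLinearMap.fst ℂ ℂ ℂ).comp
    (ContinuousLinearMap.snd ℂ ℂ (ℂ × ℂ)) +
  ((lam (mC n) y : ℝ) : ℂ) • (ContinuousLinearMap.snd ℂ ℂ ℂ).comp
    (ContinuousLinearMap.snd ℂ ℂ (ℂ × ℂ))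

lemma Lv_apply {n : ℕ} (y : Fin n → ℝ) (v : ℂ × ℂ × ℂ) : Lv y v = Lam (base n v) y := by
  rw [Lam_base]; simp [Lv]; ring

lemma Lv_norm {n : ℕ} {y : Fin n → ℝ} (hy : y ∈ orderedSimplex n) :
    ‖Lv y‖ ≤ -(lam (mA n) y + lam (mB n) y + lam (mC n) y) := by
  have hA := lamA_nonpos hy
  have hB := lamB_nonpos hy
  have hC := lamC_nonpos hy
  refine ContinuousLinearMap.opNorm_le_bound _ (by linarith) fun v => ?_
  rw [Lv_apply, Lam_base]
  have h1 : ‖v.1‖ ≤ ‖v‖ := norm_fst_le v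
  have h2 : ‖v.2.1‖ ≤ ‖v‖ := (norm_fst_le v.2).trans (norm_snd_le v)
  have h3 : ‖v.2.2‖ ≤ ‖v‖ := (norm_snd_le v.2).trans (norm_snd_le v)
  refine (norm_add₃_le).trans ?_
  simp only [norm_mul, Complex.norm_real, Real.norm_eq_abs, abs_of_nonpos hA, abs_of_nonpos hB,
    abs_of_nonpos hC]
  nlinarith [mul_le_mul_of_nonneg_right h1 (neg_nonneg.2 hA),
    mul_le_mul_of_nonneg_right h2 (neg_nonneg.2 hB), mul_le_mul_of_nonneg_right h3 (neg_nonneg.2 hC)]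

lemma EE_analytic {n : ℕ} (m : ℕ → ℕ → ℤ) (p : ℂ × ℂ × ℂ) {r : ℝ} (hr : 0 < r)
    (h : Int n m (p - ((r : ℂ), (r : ℂ), (r : ℂ)))) : AnalyticAt ℂ (EE n m) p := by
  have hms := (isOpen_simplex n).measurableSet
  have hLc : ContinuousOn (fun y : Fin n → ℝ => Lv y) (orderedSimplex n) := by
    unfold Lv
    have h1 := fun m => Complex.continuous_ofReal.comp_continuousOn (continuousOn_lam (n := n) m)
    exact (((h1 _).smul continuousOn_const).add ((h1 _).smul continuousOn_const)).add
      ((h1 _).smul continuousOn_const)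
  have key := analyticAt_param (μ := volume.restrict (orderedSimplex n)) (fun y => Lv y)
    (hLc.aestronglyMeasurable hms) (fun y => KK m p y) ((KK_cont m p).aestronglyMeasurable hms)
    (r := ⟨r, hr.le⟩) hr ?_
  · have e : EE n m = (fun v => ∫ y in orderedSimplex n, KK m p y * cexp (Lv y v)) ∘
        (fun q => q - p) := by
      ext q
      simp only [Function.comp, EE]
      congr 1
      ext y
      unfold KK
      rw [← Complex.exp_add, Lv_apply, Lam_add, Lam_add, Lam_base, Lam_base, Lam_base]
      congr 1
      simp
      ring
    rw [e]
    refine AnalyticAt.comp (g := fun v => ∫ y in orderedSimplex n, KK m p y * cexp (Lv y v)) ?_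
      (analyticAt_id.sub analyticAt_const)
    simpa using key
  · refine Integrable.mono h ?_ ?_
    · refine ContinuousOn.aestronglyMeasurable ?_ hms
      exact (KK_cont m p).norm.mul (Real.continuous_exp.comp_continuousOn
        (continuousOn_const.mul hLc.norm))
    · refine (ae_restrict_iff' hms).2 (ae_of_all _ fun y hy => ?_)
      rw [norm_mul, norm_norm, KK_norm, KK_norm, Real.norm_eq_abs, Real.abs_exp, ← Real.exp_add]
      refine Real.exp_le_exp.2 ?_
      have := mul_le_mul_of_nonneg_left (Lv_norm hy) hr.le
      rw [Lam_base, Lam_base]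
      simp
      change _ + r * ‖Lv y‖ ≤ _
      linarith

end Selb

namespace Selb

open Finset

lemma isClosed_setA (n : ℕ) : IsClosed (setA n) := by
  have h : setA n =
      (⋃ j : Fin (n + 1), {p : ℂ × ℂ × ℂ | 1 ≤ (j : ℕ) ∧
        ((((j : ℕ) : ℂ) * (p.1 + (((j : ℕ) : ℂ) - 1) * p.2.2)) ∈ Set.range ((↑) : ℤ → ℂ) ∨
        (((j : ℕ) : ℂ) * (p.2.1 + (((j : ℕ) : ℂ) - 1) * p.2.2)) ∈ Set.range ((↑) : ℤ → ℂ))}) ∪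
      (⋃ j : Fin (n - 1 + 1), {p : ℂ × ℂ × ℂ | 1 ≤ (j : ℕ) ∧
        (((j : ℕ) : ℂ) * (((j : ℕ) : ℂ) + 1) * p.2.2) ∈ Set.range ((↑) : ℤ → ℂ)}) := by
    ext p
    simp only [setA, Set.mem_ofPred_eq, Set.mem_union, Set.mem_iUnion, Set.mem_range]
    constructor
    · rintro (⟨j, h1, h2, ⟨m, hm⟩ | ⟨m, hm⟩⟩ | ⟨j, h1, h2, m, hm⟩)
      · exact Or.inl ⟨⟨j, by omega⟩, h1, Or.inl ⟨m, hm.symm⟩⟩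
      · exact Or.inl ⟨⟨j, by omega⟩, h1, Or.inr ⟨m, hm.symm⟩⟩
      · exact Or.inr ⟨⟨j, by omega⟩, h1, m, hm.symm⟩
    · rintro (⟨j, h1, ⟨m, hm⟩ | ⟨m, hm⟩⟩ | ⟨j, h1, m, hm⟩)
      · exact Or.inl ⟨j, h1, by omega, Or.inl ⟨m, hm.symm⟩⟩
      · exact Or.inl ⟨j, h1, by omega, Or.inr ⟨m, hm.symm⟩⟩
      · exact Or.inr ⟨j, h1, by omega, m, hm.symm⟩
  rw [h]
  refine IsClosed.union (isClosed_iUnion_of_finite fun j => ?_)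
    (isClosed_iUnion_of_finite fun j => ?_)
  · by_cases hj : 1 ≤ (j : ℕ)
    · simp only [hj, true_and]
      exact IsClosed.union (Complex.isClosed_range_intCast.preimage (by fun_prop))
        (Complex.isClosed_range_intCast.preimage (by fun_prop))
    · simp [hj]
  · by_cases hj : 1 ≤ (j : ℕ)
    · simp only [hj, true_and]
      exact Complex.isClosed_range_intCast.preimage (by fun_prop)
    · simp [hj]

def Hint (n k : ℕ) (m : ℕ → ℕ → ℤ) (p : ℂ × ℂ × ℂ) : Prop := Int n (m + k • 1) p

def NN (n : ℕ) (m : ℕ → ℕ → ℤ) (p : ℂ × ℂ × ℂ) : ℝ :=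
  ∑ i ∈ range (n + 2), ∑ j ∈ range (n + 2), ‖(base n p + toC m) i j‖

lemma NN_cont (n : ℕ) (m : ℕ → ℕ → ℤ) : Continuous (NN n m) := by
  unfold NN
  refine continuous_finsetSum _ fun i _ => continuous_finsetSum _ fun j _ => ?_
  exact (continuous_iff_continuousAt.2 fun p => (base_analytic n m i j p).continuousAt).norm

lemma Hint_of_NN {n k : ℕ} {m : ℕ → ℕ → ℤ} {p : ℂ × ℂ × ℂ} (h : NN n m p ≤ k) : Hint n k m p := by
  refine integrableOn_of_bound (KK_cont _ p) (K := 1) fun y hy => ?_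
  rw [KK_norm, lam_add, lam_nsmul]
  have h1 := Lam_re_le hy (base n p + toC m)
  rw [Lam_add, Lam_toC] at h1
  simp only [add_re, ofReal_re] at h1
  have h2 := PP_nonneg hy
  have h3 : lam 1 y = - PP y := by simp [PP]
  rw [h3]
  refine Real.exp_le_one_iff.2 ?_
  have h4 := mul_le_mul_of_nonneg_right h h2
  unfold NN at h4
  simp only [Pi.add_apply] at h1 h4
  linarith

lemma main_cont (n : ℕ) (m : ℕ → ℕ → ℤ) : ∃ F : ℂ × ℂ × ℂ → ℂ, AnalyticOnNhd ℂ F (setA n)ᶜ ∧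
    ∀ p, p ∉ setA n → Int n m p → F p = EE n m p := by
  choose ι fι c m' h1 h2 h3 using Rep_one n
  let G : ℕ → (ℕ → ℕ → ℤ) → ℂ × ℂ × ℂ → ℂ := fun k => Nat.rec (fun m => EE n m)
    (fun _ g m p => ∑ i, c m i p * g (m' m i) p) k
  have G0 : ∀ m p, G 0 m p = EE n m p := fun _ _ => rfl
  have GS : ∀ k m p, G (k + 1) m p = ∑ i, c m i p * G k (m' m i) p := fun _ _ _ => rfl
  have hsucc : ∀ k m p, Hint n k m p → Hint n (k + 1) m p := by
    intro k m p h
    refine Int_mono' h fun y hy => ?_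
    rw [lam_add, lam_add, lam_nsmul, lam_nsmul]
    have h2 := PP_nonneg hy
    have h3 : lam 1 y = - PP y := by simp [PP]
    rw [h3]; push_cast; linarith
  have hch : ∀ k m p i, Hint n (k + 1) m p → Hint n k (m' m i) p := by
    intro k m p i h
    refine Int_mono' h fun y hy => ?_
    rw [lam_add, lam_add, lam_nsmul, lam_nsmul]
    have := h2 m i y hy
    push_cast; linarith
  have hG : ∀ k m p, p ∉ setA n → Hint n k m p → G k m p = G (k + 1) m p := by
    intro k
    induction k with
    | zero =>
      intro m p hp h
      rw [G0, GS]
      simp only [G0]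
      refine h3 m p hp ?_
      simpa [Hint] using h
    | succ k ih =>
      intro m p hp h
      rw [GS, GS (k + 1)]
      exact sum_congr rfl fun i _ => by rw [ih (m' m i) p hp (hch _ _ _ _ h)]
  have hG' : ∀ k l m p, k ≤ l → p ∉ setA n → Hint n k m p → G k m p = G l m p := by
    intro k l m p hkl hp h
    have : Hint n l m p ∧ G k m p = G l m p := by
      induction l, hkl using Nat.le_induction with
      | base => exact ⟨h, rfl⟩
      | succ l _ ih => exact ⟨hsucc _ _ _ ih.1, ih.2.trans (hG l m p hp ih.1)⟩
    exact this.2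
  have hGa : ∀ k m p (r : ℝ), p ∉ setA n → 0 < r →
      Hint n k m (p - ((r : ℂ), (r : ℂ), (r : ℂ))) → AnalyticAt ℂ (G k m) p := by
    intro k
    induction k with
    | zero =>
      intro m p r hp hr h
      refine EE_analytic m p hr ?_
      simpa [Hint] using h
    | succ k ih =>
      intro m p r hp hr h
      have : G (k + 1) m = fun p => ∑ i, c m i p * G k (m' m i) p := rfl
      rw [this]
      exact Finset.analyticAt_fun_sum _ fun i _ =>
        (h1 m i p hp).mul (ih (m' m i) p r hp hr (hch _ _ _ _ h))
  refine ⟨fun p => G ⌈NN n m p⌉₊ m p, fun p hp => ?_, fun p hp hi => ?_⟩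
  · set k := ⌈NN n m p⌉₊ + 1 with hk
    have hlt : NN n m p < k := by
      rw [hk]; push_cast; linarith [Nat.le_ceil (NN n m p)]
    have hcont := (NN_cont n m)
    have hev : ∀ᶠ q in nhds p, NN n m q < k := hcont.continuousAt.eventually_lt
      continuousAt_const hlt
    have hev2 : ∀ᶠ q in nhds p, q ∈ (setA n)ᶜ := (isClosed_setA n).isOpen_compl.mem_nhds hp
    obtain ⟨r, hr, hrl⟩ : ∃ r : ℝ, 0 < r ∧ NN n m (p - ((r : ℂ), (r : ℂ), (r : ℂ))) < k := by
      have hc : Continuous (fun r : ℝ => NN n m (p - ((r : ℂ), (r : ℂ), (r : ℂ)))) := by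
        refine hcont.comp ?_
        fun_prop
      have : ∀ᶠ r : ℝ in nhds 0, NN n m (p - ((r : ℂ), (r : ℂ), (r : ℂ))) < k :=
        hc.continuousAt.eventually_lt continuousAt_const (by
          have : (((0:ℝ) : ℂ), ((0:ℝ) : ℂ), ((0:ℝ) : ℂ)) = (0 : ℂ × ℂ × ℂ) := by simp
          rw [this, sub_zero]; exact hlt)
      obtain ⟨ε, hε, hb⟩ := Metric.eventually_nhds_iff.1 this
      exact ⟨ε / 2, by positivity, hb (by simp [abs_of_pos hε, hε])⟩
    refine (hGa k m p r hp hr (Hint_of_NN hrl.le)).congr ?_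
    filter_upwards [hev, hev2] with q hq hq2
    refine (hG' _ k m q ?_ hq2 (Hint_of_NN (Nat.le_ceil _))).symm
    exact Nat.ceil_le.2 hq.le
  · have := hG' 0 ⌈NN n m p⌉₊ m p (Nat.zero_le _) hp (by simpa [Hint] using hi)
    exact this.symm

lemma sum_split {M : Type*} [AddCommMonoid M] (n : ℕ) (f : ℕ → M) :
    ∑ i ∈ range (n + 2), f i = f 0 + ∑ i : Fin n, f (i + 1) + f (n + 1) := by
  rw [sum_range_succ, sum_range_succ', ← Fin.sum_univ_eq_sum_range (fun i => f (i + 1)), add_comm (f 0)]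

def mk (n : ℕ) (k : Fin n → ℤ) : ℕ → ℕ → ℤ := fun i j =>
  if j = n + 1 then (if h : 1 ≤ i ∧ i ≤ n then k ⟨i - 1, by omega⟩ else 0) else 0

lemma mk_lam {n : ℕ} (k : Fin n → ℤ) (y : Fin n → ℝ) :
    lam (mk n k) y = ∑ i, (k i : ℝ) * Real.log (y i) := by
  unfold lam
  simp only [sum_split]
  have e : ∀ x : Fin n, (x : ℕ) ≠ n := fun x => by omega
  simp [mk, xn_last, xn_succ, e, show ∀ x : Fin n, (x : ℕ) + 1 ≤ n from fun x => by omega]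

lemma Lam_base_eq {n : ℕ} (p : ℂ × ℂ × ℂ) (y : Fin n → ℝ) :
    Lam (base n p) y = ∑ i, (p.1 * Real.log (y i) + p.2.1 * Real.log (1 - y i)) +
      ∑ i : Fin n, ∑ j : Fin n, if i < j then 2 * p.2.2 * Real.log (y i - y j) else 0 := by
  unfold Lam
  simp only [sum_split]
  have e : ∀ x : Fin n, (x : ℕ) ≠ n := fun x => by omega
  have e2 : ∀ x : Fin n, ¬ (n < (x : ℕ)) := fun x => by omega
  simp [base, xn_last, xn_succ, xn_zero, e, e2, ite_mul, sum_add_distrib]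
  ring

lemma KK_eq {n : ℕ} (k : Fin n → ℤ) (p : ℂ × ℂ × ℂ) {y : Fin n → ℝ} (hy : y ∈ orderedSimplex n) :
    KK (mk n k) p y = (∏ i, ((y i : ℂ) ^ p.1 * (((1 - y i : ℝ)) : ℂ) ^ p.2.1)) *
    (∏ i : Fin n, ∏ j : Fin n,
      if i < j then (((y i - y j : ℝ)) : ℂ) ^ (2 * p.2.2) else 1) * ∏ i, ((y i : ℂ)) ^ (k i) := by
  have hpow : ∀ (t : ℝ) (s : ℂ), 0 < t → (t : ℂ) ^ s = cexp (s * (Real.log t : ℝ)) := by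
    intro t s ht
    rw [Complex.cpow_def_of_ne_zero (by exact_mod_cast ht.ne'), Complex.ofReal_log ht.le, mul_comm]
  unfold KK
  rw [Lam_add, Lam_toC, mk_lam, Lam_base_eq, Complex.exp_add, Complex.exp_add, Complex.exp_sum]
  congr 1
  · congr 1
    · refine prod_congr rfl fun i _ => ?_
      rw [Complex.exp_add, hpow _ _ (hy.1 i).1, hpow _ _ (by linarith [(hy.1 i).2])]
    · rw [Complex.exp_sum]
      refine prod_congr rfl fun i _ => ?_
      rw [Complex.exp_sum]
      refine prod_congr rfl fun j _ => ?_
      split_ifs with h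
      · rw [hpow _ _ (by linarith [hy.2 i j h])]
      · simp
  · push_cast
    rw [Complex.exp_sum]
    refine prod_congr rfl fun i _ => ?_
    rw [← Complex.cpow_intCast, hpow _ _ (hy.1 i).1, Complex.ofReal_log (hy.1 i).1.le]

lemma Int_region {n d : ℕ} {k : Fin n → ℤ} (hk : ∀ i, -(d : ℤ) ≤ k i) {p : ℂ × ℂ × ℂ}
    (h1 : (d : ℝ) - 1 < p.1.re) (h2 : -1 < p.2.1.re) (h3 : 0 < p.2.2.re) : Int n (mk n k) p := by
  have hms := (isOpen_simplex n).measurableSet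
  let g : ℝ → ℂ := (Set.Ioc 0 1).indicator
    (fun x : ℝ => (x : ℂ) ^ ((p.1 - d + 1) - 1) * (1 - (x : ℂ)) ^ ((p.2.1 + 1) - 1))
  have hg : Integrable g := by
    have := Complex.betaIntegral_convergent (u := p.1 - d + 1) (v := p.2.1 + 1)
      (by simp; linarith) (by simp; linarith)
    rw [intervalIntegrable_iff_integrableOn_Ioc_of_le zero_le_one] at this
    exact this.integrable_indicator measurableSet_Ioc
  have hprod : Integrable (fun y : Fin n → ℝ => ∏ i, g (y i)) := by
    exact Integrable.fintype_prod (f := fun _ => g) (fun _ => hg)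
  refine Integrable.mono hprod.integrableOn ((KK_cont _ p).aestronglyMeasurable hms) ?_
  refine (ae_restrict_iff' hms).2 (ae_of_all _ fun y hy => ?_)
  rw [KK_eq k p hy, norm_mul, norm_mul, norm_prod, norm_prod, norm_prod, norm_prod]
  have hb : ∏ i : Fin n, ‖∏ j : Fin n,
      if i < j then (((y i - y j : ℝ)) : ℂ) ^ (2 * p.2.2) else 1‖ ≤ 1 := by
    refine prod_le_one (fun i _ => norm_nonneg _) fun i _ => ?_
    rw [norm_prod]
    refine prod_le_one (fun i _ => norm_nonneg _) fun j _ => ?_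
    split_ifs with h
    · have := hy.2 i j h
      rw [Complex.norm_cpow_eq_rpow_re_of_pos (by linarith)]
      refine Real.rpow_le_one (by linarith) (by linarith [(hy.1 i).2, (hy.1 j).1]) ?_
      simp; linarith
    · simp
  calc _ ≤ (∏ i, ‖(y i : ℂ) ^ p.1 * (((1 - y i : ℝ)) : ℂ) ^ p.2.1‖) * 1 *
        ∏ i, ‖((y i : ℂ)) ^ (k i)‖ := by
        refine mul_le_mul_of_nonneg_right (mul_le_mul_of_nonneg_left hb ?_) ?_
        · exact prod_nonneg fun i _ => norm_nonneg _
        · exact prod_nonneg fun i _ => norm_nonneg _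
    _ = ∏ i, (‖(y i : ℂ) ^ p.1 * (((1 - y i : ℝ)) : ℂ) ^ p.2.1‖ * ‖((y i : ℂ)) ^ (k i)‖) := by
        rw [mul_one, prod_mul_distrib]
    _ ≤ _ := by
        refine prod_le_prod (fun i _ => by positivity) fun i _ => ?_
        have hi := hy.1 i
        have hi' : 0 < 1 - y i := by linarith
        have e : (1 : ℂ) - (y i : ℂ) = ((1 - y i : ℝ) : ℂ) := by push_cast; rfl
        simp only [g]
        rw [Set.indicator_of_mem (show y i ∈ Set.Ioc (0 : ℝ) 1 from ⟨hi.1, hi.2.le⟩), e,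
          norm_mul, norm_mul, Complex.norm_cpow_eq_rpow_re_of_pos hi.1,
          Complex.norm_cpow_eq_rpow_re_of_pos hi', Complex.norm_cpow_eq_rpow_re_of_pos hi.1,
          Complex.norm_cpow_eq_rpow_re_of_pos hi', ← Complex.cpow_intCast,
          Complex.norm_cpow_eq_rpow_re_of_pos hi.1]
        have e3 : (p.2.1 + 1 - 1).re = p.2.1.re := by simp
        rw [e3, mul_right_comm, ← Real.rpow_add hi.1]
        refine mul_le_mul_of_nonneg_right ?_ (by positivity)
        refine Real.rpow_le_rpow_of_exponent_ge hi.1 hi.2.le ?_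
        have : (-(d : ℝ)) ≤ k i := by exact_mod_cast hk i
        simp
        linarith

end Selb
/-- `S_n[f]` admits an analytic continuation to `ℂ³ ∖ 𝒜_n`: there is an analytic function
on the complement of `𝒜_n` agreeing with the convergent Selberg integral on the common
domain of convergence. -/
theorem selberg_analytic_continuation_A (n d : ℕ) (hn : 1 ≤ n)
    (c : (Fin n → ℤ) →₀ ℂ) (hd : ∀ k ∈ c.support, ∀ i, -(d : ℤ) ≤ k i) :
    ∃ F : ℂ × ℂ × ℂ → ℂ, AnalyticOnNhd ℂ F (setA n)ᶜ ∧
      ∀ p : ℂ × ℂ × ℂ, p ∉ setA n →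
        (d : ℝ) - 1 < p.1.re → -1 < p.2.1.re → 0 < p.2.2.re →
        F p = selbergS n (laurentEval c) p.1 p.2.1 p.2.2 := by
  classical
  choose F h1 h2 using fun k : Fin n → ℤ => Selb.main_cont n (Selb.mk n k)
  refine ⟨fun p => ∑ k ∈ c.support, c k * F k p, fun p hp => ?_, fun p hp ha hb hg => ?_⟩
  · exact Finset.analyticAt_fun_sum _ fun k _ => analyticAt_const.mul (h1 k p hp)
  · have hi : ∀ k ∈ c.support, Selb.Int n (Selb.mk n k) p :=
      fun k hk => Selb.Int_region (hd k hk) ha hb hg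
    have e : selbergS n (laurentEval c) p.1 p.2.1 p.2.2 =
        ∫ y in orderedSimplex n, ∑ k ∈ c.support, c k * Selb.KK (Selb.mk n k) p y := by
      unfold selbergS
      refine setIntegral_congr_fun (Selb.isOpen_simplex n).measurableSet fun y hy => ?_
      simp only [selbergIntegrand, laurentEval, Finsupp.sum, Finset.mul_sum]
      refine Finset.sum_congr rfl fun k _ => ?_
      rw [Selb.KK_eq k p hy]
      ring
    rw [e, integral_finsetSum _ fun k hk => Integrable.const_mul (hi k hk) _]
    refine Finset.sum_congr rfl fun k hk => ?_
    rw [integral_const_mul, h2 k p hp (hi k hk)]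
    rfl

end
end
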